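/- arXiv:1111.3890 — 4 statements merged into one kernel-verified Lean document; each statement's English description precedes it below -/
import Mathlib

section
/- Let (R,S,P,Q,φ,ψ) be a Morita context over k and let M be an (R,R)-bimodule with symmetric k-action. Then the chain maps θ_• : C_•(R,M) → C_•(S,M̃) and γ_• : C_•(S,M̃) → C_•(R,M) are mutually inverse up to chain homotopy; in particular, for every n ≥ 0 the map induced by θ on homology is a k-module isomorphism H_n(R,M) ≅ H_n(S, P ⊗_R M ⊗_R Q) (Morita invariance of Hochschild homology). -/
open scoped TensorProduct
open MulOpposite

universe u

/-- The `k`-submodule of balancing relations `(m·a) ⊗ n − m ⊗ (a·n)` inside `M ⊗[k] N`,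
for a `k`-algebra `A`, a right `A`-module `M` and a left `A`-module `N`.  The balanced
tensor product `M ⊗_A N` is the quotient of `M ⊗[k] N` by this submodule. -/
def midRel (k A M N : Type u) [CommRing k] [Ring A] [Algebra k A]
    [AddCommGroup M] [Module k M] [Module Aᵐᵒᵖ M]
    [AddCommGroup N] [Module k N] [Module A N] :
    Submodule k (TensorProduct k M N) :=
  Submodule.span k {x | ∃ (m : M) (a : A) (n : N),
    x = (op a • m) ⊗ₜ[k] n - m ⊗ₜ[k] (a • n)}

/-- A Morita context `(R, S, P, Q, φ, ψ)` over the commutative ground ring `k`: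
`P` is an `(S,R)`-bimodule and `Q` an `(R,S)`-bimodule (both with symmetric `k`-action,
right actions being encoded as left actions of the opposite algebras), and `φ` and `ψ` are
`k`-bilinear pairings `P × Q → S` and `Q × P → R` which descend to bimodule isomorphisms
`φ : P ⊗_R Q ≅ S` and `ψ : Q ⊗_S P ≅ R` on the balanced tensor products:  the lifted maps on
`P ⊗[k] Q` resp. `Q ⊗[k] P` are surjective and their kernels are exactly the corresponding
submodules of balancing relations (so that the induced maps on the quotients realizing
`P ⊗_R Q` and `Q ⊗_S P` are well defined bijections); moreover the compatibilities
`φ(p ⊗ q)·p' = p·ψ(q ⊗ p')` and `ψ(q ⊗ p)·q' = q·φ(p ⊗ q')` hold. -/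
structure MoritaContext (k R S P Q : Type u) [CommRing k] [Ring R] [Ring S]
    [Algebra k R] [Algebra k S]
    [AddCommGroup P] [Module k P] [Module S P] [Module Rᵐᵒᵖ P]
    [SMulCommClass S Rᵐᵒᵖ P] [IsScalarTower k S P] [IsScalarTower k Rᵐᵒᵖ P]
    [AddCommGroup Q] [Module k Q] [Module R Q] [Module Sᵐᵒᵖ Q]
    [SMulCommClass R Sᵐᵒᵖ Q] [IsScalarTower k R Q] [IsScalarTower k Sᵐᵒᵖ Q] : Type u where
  φ : P →ₗ[k] Q →ₗ[k] S
  ψ : Q →ₗ[k] P →ₗ[k] R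
  φ_ker : LinearMap.ker (TensorProduct.lift φ) = midRel k R P Q
  φ_surj : Function.Surjective (TensorProduct.lift φ)
  ψ_ker : LinearMap.ker (TensorProduct.lift ψ) = midRel k S Q P
  ψ_surj : Function.Surjective (TensorProduct.lift ψ)
  φ_left : ∀ (s : S) (p : P) (q : Q), φ (s • p) q = s * φ p q
  φ_right : ∀ (s : S) (p : P) (q : Q), φ p (op s • q) = φ p q * s
  ψ_left : ∀ (r : R) (q : Q) (p : P), ψ (r • q) p = r * ψ q p
  ψ_right : ∀ (r : R) (q : Q) (p : P), ψ q (op r • p) = ψ q p * r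
  assoc_φψ : ∀ (p : P) (q : Q) (p' : P), φ p q • p' = op (ψ q p') • p
  assoc_ψφ : ∀ (q : Q) (p : P) (q' : Q), ψ q p • q' = op (φ p q') • q

section Hochschild

variable (k : Type u) [CommRing k]

/-- The `n`-th Hochschild chain module `C_n(A, N) = N ⊗_k A^{⊗_k n}`. -/
abbrev HChain (A N : Type u) [Ring A] [Algebra k A] [AddCommGroup N] [Module k N]
    (n : ℕ) :=
  N ⊗[k] (PiTensorProduct k (fun _ : Fin n => A))

/-- The generator `m ⊗ r₁ ⊗ ⋯ ⊗ rₙ` of `C_n(A, N)`. -/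
noncomputable def hgen {A N : Type u} [Ring A] [Algebra k A] [AddCommGroup N] [Module k N]
    {n : ℕ} (m : N) (r : Fin n → A) : HChain k A N n :=
  m ⊗ₜ[k] PiTensorProduct.tprod k r

/-- The tuple obtained from the tuple `r` of length `n + 1` by multiplying the entries at
the (0-based) positions `j` and `j + 1` (all other entries are kept, in their order). -/
def mergeAt {A : Type u} [Mul A] {n : ℕ} (r : Fin (n + 1) → A) (j : Fin n) : Fin n → A :=
  fun l =>
    if l.val < j.val then r l.castSucc
    else if l.val = j.val then r l.castSucc * r l.succ
    else r l.succ

end Hochschild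

section Homology

variable {k : Type u} [CommRing k]

/-- The homology in degree `n` of a chain complex of `k`-modules concentrated in
non-negative degrees, presented by its differentials `D n : T (n+1) →ₗ T n` with
`D ∘ D = 0` (in degree `0` this is the cokernel of `D 0`). -/
noncomputable def homologyAt {T : ℕ → Type u} [∀ n, AddCommGroup (T n)]
    [∀ n, Module k (T n)] (D : ∀ n, T (n + 1) →ₗ[k] T n)
    (hsq : ∀ n, (D n).comp (D (n + 1)) = 0) : ℕ → Type u
  | 0 => T 0 ⧸ LinearMap.range (D 0)
  | (n + 1) =>
      LinearMap.ker (D n) ⧸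
        LinearMap.range ((D (n + 1)).codRestrict (LinearMap.ker (D n)) fun x => by
          have h := LinearMap.congr_fun (hsq n) x
          simpa [LinearMap.mem_ker] using h)

noncomputable instance homologyAt.addCommGroup {T : ℕ → Type u} [∀ n, AddCommGroup (T n)]
    [∀ n, Module k (T n)] (D : ∀ n, T (n + 1) →ₗ[k] T n)
    (hsq : ∀ n, (D n).comp (D (n + 1)) = 0) (n : ℕ) :
    AddCommGroup (homologyAt D hsq n) := by
  cases n <;> (unfold homologyAt; infer_instance)

noncomputable instance homologyAt.module {T : ℕ → Type u} [∀ n, AddCommGroup (T n)]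
    [∀ n, Module k (T n)] (D : ∀ n, T (n + 1) →ₗ[k] T n)
    (hsq : ∀ n, (D n).comp (D (n + 1)) = 0) (n : ℕ) :
    Module k (homologyAt D hsq n) := by
  cases n <;> (unfold homologyAt; infer_instance)

/-- The map induced on homology by a chain map `f`. -/
noncomputable def inducedMap {T T' : ℕ → Type u} [∀ n, AddCommGroup (T n)]
    [∀ n, Module k (T n)] [∀ n, AddCommGroup (T' n)] [∀ n, Module k (T' n)]
    (D : ∀ n, T (n + 1) →ₗ[k] T n) (hsq : ∀ n, (D n).comp (D (n + 1)) = 0)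
    (D' : ∀ n, T' (n + 1) →ₗ[k] T' n) (hsq' : ∀ n, (D' n).comp (D' (n + 1)) = 0)
    (f : ∀ n, T n →ₗ[k] T' n)
    (hf : ∀ n, (D' n).comp (f (n + 1)) = (f n).comp (D n)) :
    ∀ n, homologyAt D hsq n →ₗ[k] homologyAt D' hsq' n
  | 0 => Submodule.mapQ _ _ (f 0) (by
      rintro x ⟨y, rfl⟩
      refine ⟨f 1 y, ?_⟩
      have := LinearMap.congr_fun (hf 0) y
      simpa using this)
  | (n + 1) => Submodule.mapQ _ _
      ((f (n + 1)).restrict (p := LinearMap.ker (D n)) (q := LinearMap.ker (D' n))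
        (fun x hx => by
          have h1 := LinearMap.congr_fun (hf n) x
          simp only [LinearMap.comp_apply] at h1
          simp only [LinearMap.mem_ker] at hx ⊢
          rw [h1, hx, map_zero]))
      (by
        rintro x ⟨y, rfl⟩
        refine ⟨f (n + 2) y, ?_⟩
        apply Subtype.ext
        have := LinearMap.congr_fun (hf (n + 1)) y
        simpa [LinearMap.restrict_apply] using this)

end Homology

/-!
Let `a`, `b` be finite families in an algebra `A` with `∑ δ, a δ * b δ = 1`. Inserting this
partition of unity between consecutive tensor factors gives the endomorphism
`m ⊗ r₁ ⊗ ⋯ ⊗ rₙ ↦ ∑ b_{f₀} m a_{f₁} ⊗ b_{f₁} r₁ a_{f₂} ⊗ ⋯ ⊗ b_{fₙ} rₙ a_{f₀}` of `C_•(A, N)`,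
and this twist is homotopic to the identity. Indeed, write the boundary as `d₀ + b'`, with `d₀`
the cyclic face and `b'` the differential of the bar resolution: there is a homotopy `h` with
`d₀ h + h d₀ = twist` and `b' h + h b' = -1`. By the compatibility of `φ` and `ψ`, the
composites `γ θ` and `θ γ` are the twists by `ψ(qᵢ ⊗ p'ⱼ)`, `ψ(q'ⱼ ⊗ pᵢ)` and by
`φ(p'ⱼ ⊗ qᵢ)`, `φ(pᵢ ⊗ q'ⱼ)`, respectively.
-/

section ChainHomotopy

variable {k : Type u} [CommRing k]
  {T T' T'' : ℕ → Type u} [∀ n, AddCommGroup (T n)] [∀ n, Module k (T n)]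
  [∀ n, AddCommGroup (T' n)] [∀ n, Module k (T' n)]
  [∀ n, AddCommGroup (T'' n)] [∀ n, Module k (T'' n)]

/-- `f` is chain homotopic to the identity of the non-negatively graded complex with
differentials `D`; in degree `0` the condition involves only one composite. -/
def HomotopicToId (D : ∀ n, T (n + 1) →ₗ[k] T n) (f : ∀ n, T n →ₗ[k] T n) : Prop :=
  ∃ h : ∀ n, T n →ₗ[k] T (n + 1),
    (D 0).comp (h 0) = f 0 - LinearMap.id ∧
    ∀ n : ℕ, (D (n + 1)).comp (h (n + 1)) + (h n).comp (D n) = f (n + 1) - LinearMap.id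

variable {D : ∀ n, T (n + 1) →ₗ[k] T n} {hD : ∀ n, (D n).comp (D (n + 1)) = 0}
  {D' : ∀ n, T' (n + 1) →ₗ[k] T' n} {hD' : ∀ n, (D' n).comp (D' (n + 1)) = 0}
  {D'' : ∀ n, T'' (n + 1) →ₗ[k] T'' n} {hD'' : ∀ n, (D'' n).comp (D'' (n + 1)) = 0}

theorem comp_chainMap {f : ∀ n, T n →ₗ[k] T' n} {g : ∀ n, T' n →ₗ[k] T'' n}
    (hf : ∀ n, (D' n).comp (f (n + 1)) = (f n).comp (D n))
    (hg : ∀ n, (D'' n).comp (g (n + 1)) = (g n).comp (D' n)) (n : ℕ) :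
    (D'' n).comp ((g (n + 1)).comp (f (n + 1))) = ((g n).comp (f n)).comp (D n) := by
  rw [← LinearMap.comp_assoc, hg, LinearMap.comp_assoc, hf, LinearMap.comp_assoc]

theorem inducedMap_inducedMap {f : ∀ n, T n →ₗ[k] T' n} {g : ∀ n, T' n →ₗ[k] T'' n}
    (hf : ∀ n, (D' n).comp (f (n + 1)) = (f n).comp (D n))
    (hg : ∀ n, (D'' n).comp (g (n + 1)) = (g n).comp (D' n))
    (n : ℕ) (x : homologyAt D hD n) :
    inducedMap D' hD' D'' hD'' g hg n (inducedMap D hD D' hD' f hf n x) =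
      inducedMap D hD D'' hD'' (fun n => (g n).comp (f n)) (comp_chainMap hf hg) n x := by
  cases n <;> · obtain ⟨x, rfl⟩ := Submodule.Quotient.mk_surjective _ x; rfl

theorem HomotopicToId.inducedMap_apply {f : ∀ n, T n →ₗ[k] T n} (h : HomotopicToId D f)
    (hf : ∀ n, (D n).comp (f (n + 1)) = (f n).comp (D n)) (n : ℕ) (x : homologyAt D hD n) :
    inducedMap D hD D hD f hf n x = x := by
  obtain ⟨h, h_zero, h_succ⟩ := h
  cases n with
  | zero =>
    obtain ⟨x, rfl⟩ := Submodule.Quotient.mk_surjective _ x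
    exact (Submodule.Quotient.eq _).2 ⟨h 0 x, LinearMap.congr_fun h_zero x⟩
  | succ n =>
    obtain ⟨⟨x, hx⟩, rfl⟩ := Submodule.Quotient.mk_surjective _ x
    refine (Submodule.Quotient.eq _).2 ⟨h (n + 1) x, Subtype.ext ?_⟩
    have hx_succ := LinearMap.congr_fun (h_succ n) x
    rwa [LinearMap.add_apply, LinearMap.comp_apply, LinearMap.comp_apply, LinearMap.mem_ker.1 hx,
      map_zero, add_zero] at hx_succ

theorem inducedMap_bijective {f : ∀ n, T n →ₗ[k] T' n} {g : ∀ n, T' n →ₗ[k] T n}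
    (hf : ∀ n, (D' n).comp (f (n + 1)) = (f n).comp (D n))
    (hg : ∀ n, (D n).comp (g (n + 1)) = (g n).comp (D' n))
    (hgf : HomotopicToId D fun n => (g n).comp (f n))
    (hfg : HomotopicToId D' fun n => (f n).comp (g n)) (n : ℕ) :
    Function.Bijective (inducedMap D hD D' hD' f hf n) := by
  refine Function.bijective_iff_has_inverse.2
    ⟨inducedMap D' hD' D hD g hg n, fun x => ?_, fun y => ?_⟩
  · rw [inducedMap_inducedMap, hgf.inducedMap_apply]
  · rw [inducedMap_inducedMap, hfg.inducedMap_apply]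

end ChainHomotopy

section Tuples

variable {n : ℕ}

theorem fin_tail_snoc {α : Type*} (r : Fin (n + 1) → α) (a : α) :
    Fin.tail (Fin.snoc r a : Fin (n + 2) → α) = (Fin.snoc (Fin.tail r) a : Fin (n + 1) → α) := by
  induction r using Fin.consCases with
  | cons t r => rw [← Fin.cons_snoc_eq_snoc_cons, Fin.tail_cons, Fin.tail_cons]

theorem mergeAt_snoc_castSucc {B : Type*} [Mul B] (r : Fin (n + 1) → B) (a : B) (j : Fin n) :
    mergeAt (Fin.snoc r a : Fin (n + 2) → B) j.castSucc =
      (Fin.snoc (mergeAt r j) a : Fin (n + 1) → B) := by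
  funext l
  induction l using Fin.lastCases with
  | last => simp [mergeAt, j.isLt.not_gt, j.isLt.ne']
  | cast i => simp [mergeAt, ← Fin.castSucc_succ]

theorem mergeAt_snoc_snoc_last {B : Type*} [Mul B] (r : Fin n → B) (t a : B) :
    mergeAt (Fin.snoc (Fin.snoc r t : Fin (n + 1) → B) a : Fin (n + 2) → B) (Fin.last n) =
      (Fin.snoc r (t * a) : Fin (n + 1) → B) := by
  funext l
  induction l using Fin.lastCases with
  | last => simp [mergeAt]
  | cast i => simp [mergeAt]

theorem fin_cons_add_one {α : Type*} (g : Fin n → α) (c : α) (i : Fin (n + 1)) :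
    (Fin.cons c g : Fin (n + 1) → α) (i + 1) = (Fin.snoc g c : Fin (n + 1) → α) i := by
  simp only [Fin.snoc_eq_cons_rotate, finRotate_apply]

theorem sum_arrow_prod {ι κ X : Type*} [Fintype ι] [Fintype κ] [AddCommMonoid X]
    (F : (Fin n → ι × κ) → X) :
    ∑ f, F f = ∑ f : Fin n → ι, ∑ g : Fin n → κ, F fun l => (f l, g l) := by
  rw [← (Equiv.arrowProdEquivProdArrow (Fin n) (fun _ => ι) fun _ => κ).symm.sum_comp,
    Fintype.sum_prod_type]
  rfl

end Tuples

namespace HChain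

variable {k : Type u} [CommRing k] {A N : Type u} [Ring A] [Algebra k A]
  [AddCommGroup N] [Module k N] {n : ℕ}

section Snoc

@[elab_as_elim]
theorem induction_hgen {p : HChain k A N n → Prop} (x : HChain k A N n)
    (hgen : ∀ (m : N) (r : Fin n → A), p (hgen k m r))
    (add : ∀ x y, p x → p y → p (x + y)) : p x := by
  induction x using TensorProduct.induction_on with
  | zero => simpa only [_root_.hgen, TensorProduct.zero_tmul] using hgen 0 0
  | add x y hx hy => exact add x y hx hy
  | tmul m t =>
    induction t using PiTensorProduct.induction_on with
    | smul_tprod c r => simpa only [_root_.hgen, TensorProduct.smul_tmul] using hgen (c • m) r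
    | add t t' ht ht' => simpa only [TensorProduct.tmul_add] using add _ _ ht ht'

theorem hom_ext_of_span {X : Type*} [AddCommGroup X] [Module k X]
    {f g : HChain k A N n →ₗ[k] X} {G : Set N} (hG : Submodule.span k G = ⊤)
    (h : ∀ m ∈ G, ∀ r : Fin n → A, f (hgen k m r) = g (hgen k m r)) : f = g := by
  refine TensorProduct.ext (LinearMap.ext_on hG fun m hm => PiTensorProduct.ext ?_)
  ext r
  exact h m hm r

theorem hom_ext {X : Type*} [AddCommGroup X] [Module k X] {f g : HChain k A N n →ₗ[k] X}
    (h : ∀ (m : N) (r : Fin n → A), f (hgen k m r) = g (hgen k m r)) : f = g :=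
  hom_ext_of_span Submodule.span_univ fun m _ => h m

/-- The isomorphism `C_n(A, N) ⊗ A ≃ C_{n+1}(A, N)` that makes the last tensor factor explicit;
constructions on Hochschild chains are carried out by recursion along it. -/
noncomputable def snocEquiv : HChain k A N n ⊗[k] A ≃ₗ[k] HChain k A N (n + 1) :=
  (TensorProduct.assoc k N _ A).trans <|
    TensorProduct.congr (LinearEquiv.refl k N) <|
      (TensorProduct.congr (LinearEquiv.refl k _)
        (PiTensorProduct.subsingletonEquiv (s := fun _ : Fin 1 => A) 0).symm).trans
        TensorPower.mulEquiv

/-- Appending a tensor factor: `(m ⊗ r₁ ⊗ ⋯ ⊗ rₙ, a) ↦ m ⊗ r₁ ⊗ ⋯ ⊗ rₙ ⊗ a`. -/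
noncomputable def snoc : HChain k A N n →ₗ[k] A →ₗ[k] HChain k A N (n + 1) :=
  (TensorProduct.mk k _ _).compr₂ snocEquiv.toLinearMap

theorem snoc_hgen (m : N) (r : Fin n → A) (a : A) :
    snoc (hgen k m r) a = hgen k m (Fin.snoc r a : Fin (n + 1) → A) := by
  have h := TensorPower.tprod_mul_tprod k r (fun _ : Fin 1 => a)
  rw [TensorPower.gMul_def, Fin.append_right_eq_snoc] at h
  simp only [snoc, snocEquiv, hgen, LinearMap.compr₂_apply, TensorProduct.mk_apply,
    LinearEquiv.coe_coe, LinearEquiv.trans_apply, TensorProduct.assoc_tmul,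
    TensorProduct.congr_tmul, LinearEquiv.refl_apply,
    PiTensorProduct.subsingletonEquiv_symm_apply', h]

@[elab_as_elim]
theorem induction_snoc {p : HChain k A N (n + 1) → Prop} (x : HChain k A N (n + 1))
    (snoc : ∀ (x : HChain k A N n) (a : A), p (snoc x a))
    (add : ∀ x y, p x → p y → p (x + y)) : p x := by
  obtain ⟨y, rfl⟩ := snocEquiv.surjective x
  induction y using TensorProduct.induction_on with
  | zero => simpa only [map_zero] using snoc 0 0
  | tmul x a => exact snoc x a
  | add y z hy hz => simpa only [map_add] using add _ _ hy hz

/-- The linear map on `C_{n+1}(A, N)` determined by its values `f x a` on the chains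
`snoc x a`. -/
noncomputable def lift {X : Type*} [AddCommGroup X] [Module k X]
    (f : HChain k A N n →ₗ[k] A →ₗ[k] X) : HChain k A N (n + 1) →ₗ[k] X :=
  (TensorProduct.lift f).comp snocEquiv.symm.toLinearMap

theorem lift_snoc {X : Type*} [AddCommGroup X] [Module k X]
    (f : HChain k A N n →ₗ[k] A →ₗ[k] X) (x : HChain k A N n) (a : A) :
    lift f (snoc x a) = f x a := by
  simp [lift, snoc]

theorem smul_hgen {B : Type*} [Ring B] [Algebra k B] [Module B N] [IsScalarTower k B N]
    (s : B) (m : N) (r : Fin n → A) : s • hgen k m r = hgen k (s • m) r :=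
  TensorProduct.smul_tmul' s m _

theorem smul_snoc {B : Type*} [Ring B] [Algebra k B] [Module B N] [IsScalarTower k B N]
    (s : B) (x : HChain k A N n) (a : A) : s • snoc x a = snoc (s • x) a := by
  induction x using induction_hgen with
  | hgen m r => simp only [snoc_hgen, smul_hgen]
  | add x y hx hy => simp only [map_add, LinearMap.add_apply, smul_add, hx, hy]

end Snoc

section PartialBoundary

variable [Module Aᵐᵒᵖ N] [IsScalarTower k Aᵐᵒᵖ N]

/-- Right multiplication on the last tensor factor, which for `n = 0` is the bimodule `N`. -/
noncomputable def mulLast : ∀ n, HChain k A N n →ₗ[k] A →ₗ[k] HChain k A N n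
  | 0 => ((Algebra.lsmul k k _).toLinearMap.comp (opLinearEquiv k).toLinearMap).flip
  | _ + 1 => lift (((LinearMap.llcomp k A A _).comp snoc).compl₂ (LinearMap.mul k A))

theorem mulLast_zero (x : HChain k A N 0) (a : A) : mulLast 0 x a = op a • x := rfl

theorem mulLast_snoc (x : HChain k A N n) (t a : A) :
    mulLast (n + 1) (snoc x t) a = snoc x (t * a) := by
  rw [mulLast, lift_snoc]; rfl

/-- The alternating sum of all faces of the Hochschild boundary except the cyclic face `d₀`.
It is the differential of the bar resolution of `N`. -/
noncomputable def partialBoundary : ∀ n, HChain k A N (n + 1) →ₗ[k] HChain k A N n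
  | 0 => lift (-mulLast 0)
  | n + 1 => lift (-mulLast (n + 1) - snoc.comp (partialBoundary n))

theorem partialBoundary_zero_snoc (x : HChain k A N 0) (a : A) :
    partialBoundary 0 (snoc x a) = -(op a • x) := by
  rw [partialBoundary, lift_snoc]; rfl

theorem partialBoundary_succ_snoc (x : HChain k A N (n + 1)) (a : A) :
    partialBoundary (n + 1) (snoc x a) =
      -mulLast (n + 1) x a - snoc (partialBoundary n x) a := by
  rw [partialBoundary, lift_snoc]; rfl

theorem partialBoundary_hgen (n : ℕ) (m : N) (r : Fin (n + 1) → A) :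
    partialBoundary n (hgen k m r) =
      ∑ j : Fin n, ((-1 : ℤ) ^ (n - j.val)) • hgen k m (mergeAt r j)
        + ((-1 : ℤ) ^ (n + 1)) • hgen k (op (r 0) • m) (Fin.tail r) := by
  induction n with
  | zero =>
    induction r using Fin.snocCases with
    | snoc r a =>
      have tail_eq : Fin.tail (Fin.snoc r a : Fin 1 → A) = r := Subsingleton.elim _ _
      rw [← snoc_hgen, partialBoundary_zero_snoc, smul_hgen, tail_eq]
      simp [show (Fin.snoc r a : Fin 1 → A) 0 = a from Fin.snoc_last (α := fun _ => A) a r]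
  | succ n ih =>
    induction r using Fin.snocCases with
    | snoc r a =>
    induction r using Fin.snocCases with
    | snoc r t =>
      have sign (j : Fin n) :
          (-1 : ℤ) ^ (n + 1 - j.castSucc.val) = -(-1 : ℤ) ^ (n - j.val) := by
        rw [Fin.val_castSucc, Nat.sub_add_comm j.isLt.le, pow_succ, mul_neg_one]
      have last_face : mulLast (n + 1) (hgen k m (Fin.snoc r t : Fin (n + 1) → A)) a =
          hgen k m (Fin.snoc r (t * a) : Fin (n + 1) → A) := by
        rw [← snoc_hgen, mulLast_snoc, snoc_hgen]
      rw [← snoc_hgen, partialBoundary_succ_snoc, ih, last_face, Fin.sum_univ_castSucc]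
      simp only [mergeAt_snoc_snoc_last, mergeAt_snoc_castSucc, fin_tail_snoc,
        Fin.snoc_apply_zero, sign, map_add, map_sum, map_zsmul, LinearMap.add_apply,
        LinearMap.sum_apply, LinearMap.smul_apply, snoc_hgen, neg_smul,
        Finset.sum_neg_distrib, pow_succ _ (n + 1), mul_neg_one, Fin.val_last,
        Nat.add_sub_cancel_left, pow_one, one_smul]
      abel

end PartialBoundary

section Boundary

variable [Module A N] [IsScalarTower k A N]

/-- The cyclic face `d₀ (m ⊗ r₁ ⊗ ⋯ ⊗ rₙ₊₁) = rₙ₊₁ m ⊗ r₁ ⊗ ⋯ ⊗ rₙ`. -/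
noncomputable def cyclicFace (n : ℕ) : HChain k A N (n + 1) →ₗ[k] HChain k A N n :=
  lift (Algebra.lsmul k k _).toLinearMap.flip

theorem cyclicFace_snoc (x : HChain k A N n) (a : A) : cyclicFace n (snoc x a) = a • x := by
  rw [cyclicFace, lift_snoc]; rfl

variable [Module Aᵐᵒᵖ N] [IsScalarTower k Aᵐᵒᵖ N]

/-- The Hochschild boundary `C_{n+1}(A, N) → C_n(A, N)`. -/
noncomputable def boundary (n : ℕ) : HChain k A N (n + 1) →ₗ[k] HChain k A N n :=
  cyclicFace n + partialBoundary n

theorem eq_boundary {b : HChain k A N (n + 1) →ₗ[k] HChain k A N n}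
    (hb : ∀ (m : N) (r : Fin (n + 1) → A),
      b (hgen k m r) =
        hgen k (r (Fin.last n) • m) (Fin.init r)
          + ∑ j : Fin n, ((-1 : ℤ) ^ (n - j.val)) • hgen k m (mergeAt r j)
          + ((-1 : ℤ) ^ (n + 1)) • hgen k (op (r 0) • m) (Fin.tail r)) :
    b = boundary n := by
  refine hom_ext fun m r => ?_
  have cyclic : cyclicFace n (hgen k m r) = hgen k (r (Fin.last n) • m) (Fin.init r) := by
    rw [← smul_hgen, ← cyclicFace_snoc, snoc_hgen, Fin.snoc_init_self]
  rw [hb, boundary, LinearMap.add_apply, cyclic, partialBoundary_hgen, add_assoc]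

end Boundary

section Twist

variable [Module Aᵐᵒᵖ N] [IsScalarTower k Aᵐᵒᵖ N] {α : Type*} [Fintype α] (a b : α → A)

/-- The twist of a chain by the families `a`, `b`, left open at its end:
`openTwist a b n β (m ⊗ r₁ ⊗ ⋯ ⊗ rₙ)` is the sum over `g₁, …, gₙ` of
`m a_{g₁} ⊗ b_{g₁} r₁ a_{g₂} ⊗ ⋯ ⊗ b_{gₙ} rₙ a_β`. -/
noncomputable def openTwist : ∀ n, α → HChain k A N n →ₗ[k] HChain k A N n
  | 0, β => Algebra.lsmul k k _ (op (a β))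
  | n + 1, β => lift (∑ δ, snoc.compl₁₂ (openTwist n δ)
      ((LinearMap.mulLeft k (b δ)).comp (LinearMap.mulRight k (a β))))

theorem openTwist_zero (β : α) (x : HChain k A N 0) : openTwist a b 0 β x = op (a β) • x := rfl

theorem openTwist_snoc (β : α) (x : HChain k A N n) (r : A) :
    openTwist a b (n + 1) β (snoc x r) = ∑ δ, snoc (openTwist a b n δ x) (b δ * (r * a β)) := by
  simp [openTwist, lift_snoc, LinearMap.sum_apply]

theorem openTwist_hgen (n : ℕ) (β : α) (m : N) (r : Fin n → A) :
    openTwist a b n β (hgen k m r) = ∑ g : Fin n → α,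
      hgen k (op (a ((Fin.snoc g β : Fin (n + 1) → α) 0)) • m)
        (fun l => b (g l) * (r l * a ((Fin.snoc g β : Fin (n + 1) → α) l.succ))) := by
  induction n generalizing β with
  | zero =>
    rw [openTwist_zero, smul_hgen, Fintype.sum_unique]
    exact congrArg _ (Subsingleton.elim _ _)
  | succ n ih =>
    induction r using Fin.snocCases with
    | snoc r t =>
      rw [← snoc_hgen, openTwist_snoc, ← (Fin.snocEquiv fun _ => α).sum_comp,
        Fintype.sum_prod_type]
      refine Finset.sum_congr rfl fun δ _ => ?_
      rw [ih, map_sum, LinearMap.sum_apply]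
      refine Finset.sum_congr rfl fun g _ => ?_
      change _ = hgen k (op (a ((Fin.snoc (Fin.snoc g δ : Fin (n + 1) → α) β : Fin (n + 2) → α)
        0)) • m) _
      rw [snoc_hgen, Fin.snoc_apply_zero (n := n + 1)]
      congr 1
      funext l
      induction l using Fin.lastCases with
      | last => simp [Fin.snocEquiv]
      | cast i => simp [Fin.snocEquiv, ← Fin.castSucc_succ]

variable [Module A N] [IsScalarTower k A N]

/-- The endomorphism of the Hochschild complex sending `m ⊗ r₁ ⊗ ⋯ ⊗ rₙ` to the sum over
`f₀, …, fₙ` of `b_{f₀} m a_{f₁} ⊗ b_{f₁} r₁ a_{f₂} ⊗ ⋯ ⊗ b_{fₙ} rₙ a_{f₀}`. -/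
noncomputable def twist (n : ℕ) : HChain k A N n →ₗ[k] HChain k A N n :=
  ∑ β, (Algebra.lsmul k k _ (b β)).comp (openTwist a b n β)

theorem twist_apply (x : HChain k A N n) : twist a b n x = ∑ β, b β • openTwist a b n β x := by
  simp [twist, LinearMap.sum_apply]

theorem twist_hgen (m : N) (r : Fin n → A) :
    twist a b n (hgen k m r) = ∑ f : Fin (n + 1) → α,
      hgen k (b (f 0) • op (a (f 1)) • m)
        (fun l => b (f l.succ) * (r l * a (f (l.succ + 1)))) := by
  rw [← (Fin.consEquiv fun _ => α).sum_comp, Fintype.sum_prod_type]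
  simp only [twist_apply, openTwist_hgen, Finset.smul_sum, smul_hgen]
  refine Finset.sum_congr rfl fun β _ => Finset.sum_congr rfl fun g _ => ?_
  have wrap : (Fin.cons β g : Fin (n + 1) → α) 1 = (Fin.snoc g β : Fin (n + 1) → α) 0 := by
    rw [← fin_cons_add_one, zero_add]
  simp only [Fin.consEquiv_apply, fin_cons_add_one, wrap, Fin.cons_zero, Fin.cons_succ]

end Twist

section Homotopy

variable [Module Aᵐᵒᵖ N] [IsScalarTower k Aᵐᵒᵖ N] {α : Type*} [Fintype α] (a b : α → A)

/-- The open twist closed off by an additional tensor factor: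
`m ⊗ r₁ ⊗ ⋯ ⊗ rₙ` goes to the sum of `m a_{g₁} ⊗ b_{g₁} r₁ a_{g₂} ⊗ ⋯ ⊗ b_{gₙ} rₙ a_β ⊗ b_β`. -/
noncomputable def twistSnoc (n : ℕ) : HChain k A N n →ₗ[k] HChain k A N (n + 1) :=
  ∑ β, (snoc.flip (b β)).comp (openTwist a b n β)

theorem twistSnoc_apply (x : HChain k A N n) :
    twistSnoc a b n x = ∑ β, snoc (openTwist a b n β x) (b β) := by
  simp [twistSnoc, LinearMap.sum_apply]

/-- The homotopy from `twist` to the identity,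
`m ⊗ r₁ ⊗ ⋯ ⊗ rₙ ↦ ∑ⱼ (-1)^(n-j) twistSnoc (m ⊗ r₁ ⊗ ⋯ ⊗ rⱼ) ⊗ rⱼ₊₁ ⊗ ⋯ ⊗ rₙ`. -/
noncomputable def twistHomotopy : ∀ n, HChain k A N n →ₗ[k] HChain k A N (n + 1)
  | 0 => twistSnoc a b 0
  | n + 1 => twistSnoc a b (n + 1) - lift (snoc.comp (twistHomotopy n))

theorem twistHomotopy_zero (x : HChain k A N 0) : twistHomotopy a b 0 x = twistSnoc a b 0 x := rfl

theorem twistHomotopy_snoc (x : HChain k A N n) (r : A) :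
    twistHomotopy a b (n + 1) (snoc x r) =
      twistSnoc a b (n + 1) (snoc x r) - snoc (twistHomotopy a b n x) r := by
  rw [twistHomotopy, LinearMap.sub_apply, lift_snoc]; rfl

theorem mulLast_twistHomotopy_sub (x : HChain k A N n) (r : A) :
    mulLast (n + 1) (twistHomotopy a b n x) r - mulLast (n + 1) (twistSnoc a b n x) r =
      twistHomotopy a b n (mulLast n x r) - twistSnoc a b n (mulLast n x r) := by
  cases n with
  | zero => simp only [twistHomotopy_zero, sub_self]
  | succ n =>
    induction x using induction_snoc with
    | snoc x t =>
      simp only [twistHomotopy_snoc, mulLast_snoc, map_sub, LinearMap.sub_apply,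
        sub_sub_cancel_left]
    | add x y hx hy =>
      simp only [map_add, LinearMap.add_apply, add_sub_add_comm, hx, hy]

section LeftLinear

variable [Module A N] [IsScalarTower k A N]

theorem cyclicFace_twistSnoc (x : HChain k A N n) :
    cyclicFace n (twistSnoc a b n x) = twist a b n x := by
  simp only [twistSnoc_apply, map_sum, cyclicFace_snoc, twist_apply]

variable [SMulCommClass A Aᵐᵒᵖ N]

theorem openTwist_smul (s : A) (β : α) (x : HChain k A N n) :
    openTwist a b n β (s • x) = s • openTwist a b n β x := by
  induction n generalizing β with
  | zero =>
    induction x using induction_hgen with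
    | hgen m r => simp only [openTwist_zero, smul_hgen, smul_comm s]
    | add x y hx hy => simp only [smul_add, map_add, hx, hy]
  | succ n ih =>
    induction x using induction_snoc with
    | snoc x t => simp only [smul_snoc, openTwist_snoc, ih, Finset.smul_sum]
    | add x y hx hy => simp only [smul_add, map_add, hx, hy]

theorem twistSnoc_smul (s : A) (x : HChain k A N n) :
    twistSnoc a b n (s • x) = s • twistSnoc a b n x := by
  simp only [twistSnoc_apply, openTwist_smul, Finset.smul_sum, smul_snoc]

theorem twistHomotopy_smul (s : A) (x : HChain k A N n) :
    twistHomotopy a b n (s • x) = s • twistHomotopy a b n x := by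
  induction n with
  | zero => exact twistSnoc_smul a b s x
  | succ n ih =>
    induction x using induction_snoc with
    | snoc x t =>
      simp only [smul_snoc, twistHomotopy_snoc, ih, smul_sub, ← twistSnoc_smul]
    | add x y hx hy => simp only [smul_add, map_add, hx, hy]

theorem cyclicFace_twistHomotopy (x : HChain k A N (n + 1)) :
    cyclicFace (n + 1) (twistHomotopy a b (n + 1) x) + twistHomotopy a b n (cyclicFace n x) =
      twist a b (n + 1) x := by
  induction x using induction_snoc with
  | snoc x t =>
    rw [twistHomotopy_snoc, map_sub, cyclicFace_twistSnoc, cyclicFace_snoc, cyclicFace_snoc,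
      twistHomotopy_smul, sub_add_cancel]
  | add x y hx hy => rw [map_add, map_add, map_add, map_add, map_add, add_add_add_comm, hx, hy]

end LeftLinear

variable {a b}

theorem sum_mul_mul_of_sum_mul_eq_one (hab : ∑ δ, a δ * b δ = 1) (r : A) :
    ∑ δ, a δ * (b δ * r) = r := by
  simp only [← mul_assoc, ← Finset.sum_mul, hab, one_mul]

theorem openTwist_mulLast (hab : ∑ δ, a δ * b δ = 1) (β : α) (x : HChain k A N n) (r : A) :
    openTwist a b n β (mulLast n x r) =
      ∑ δ, mulLast n (openTwist a b n δ x) (b δ * (r * a β)) := by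
  cases n with
  | zero =>
    simp only [openTwist_zero, mulLast_zero, smul_smul, ← op_mul, ← Finset.sum_smul,
      ← Finset.op_sum, sum_mul_mul_of_sum_mul_eq_one hab]
  | succ n =>
    induction x using induction_snoc with
    | snoc x t =>
      simp only [openTwist_snoc, mulLast_snoc, map_sum, LinearMap.sum_apply]
      rw [Finset.sum_comm]
      simp only [← map_sum, mul_assoc, ← Finset.mul_sum, sum_mul_mul_of_sum_mul_eq_one hab]
    | add x y hx hy => simp only [map_add, LinearMap.add_apply, Finset.sum_add_distrib, hx, hy]

theorem partialBoundary_openTwist (hab : ∑ δ, a δ * b δ = 1) (β : α)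
    (x : HChain k A N (n + 1)) :
    partialBoundary n (openTwist a b (n + 1) β x) = openTwist a b n β (partialBoundary n x) := by
  induction n generalizing β with
  | zero =>
    induction x using induction_snoc with
    | snoc x t =>
      simp only [openTwist_snoc, map_sum, partialBoundary_zero_snoc, ← mulLast_zero, map_neg,
        openTwist_mulLast hab, Finset.sum_neg_distrib]
    | add x y hx hy => simp only [map_add, hx, hy]
  | succ n ih =>
    induction x using induction_snoc with
    | snoc x t =>
      simp only [openTwist_snoc, map_sum, partialBoundary_succ_snoc, ih, map_sub, map_neg,
        openTwist_mulLast hab, Finset.sum_neg_distrib, Finset.sum_sub_distrib]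
    | add x y hx hy => simp only [map_add, hx, hy]

theorem partialBoundary_twistSnoc_zero (hab : ∑ δ, a δ * b δ = 1) (x : HChain k A N 0) :
    partialBoundary 0 (twistSnoc a b 0 x) = -x := by
  simp only [twistSnoc_apply, map_sum, partialBoundary_zero_snoc, openTwist_zero, smul_smul,
    ← op_mul, Finset.sum_neg_distrib, ← Finset.sum_smul, ← Finset.op_sum, hab, op_one, one_smul]

theorem partialBoundary_twistSnoc_snoc (hab : ∑ δ, a δ * b δ = 1) (x : HChain k A N n) (r : A) :
    partialBoundary (n + 1) (twistSnoc a b (n + 1) (snoc x r)) =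
      -mulLast (n + 1) (twistSnoc a b n x) r
        - twistSnoc a b n (partialBoundary n (snoc x r)) := by
  have merge : ∑ β, mulLast (n + 1) (openTwist a b (n + 1) β (snoc x r)) (b β) =
      mulLast (n + 1) (twistSnoc a b n x) r := by
    simp only [openTwist_snoc, twistSnoc_apply, map_sum, LinearMap.sum_apply, mulLast_snoc]
    rw [Finset.sum_comm]
    simp only [← map_sum, mul_assoc, ← Finset.mul_sum, hab, mul_one]
  rw [← merge]
  simp only [twistSnoc_apply, ← partialBoundary_openTwist hab, map_sum, partialBoundary_succ_snoc,
    Finset.sum_sub_distrib, Finset.sum_neg_distrib]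

theorem partialBoundary_twistHomotopy (hab : ∑ δ, a δ * b δ = 1) (x : HChain k A N (n + 1)) :
    partialBoundary (n + 1) (twistHomotopy a b (n + 1) x)
      + twistHomotopy a b n (partialBoundary n x) = -x := by
  induction n with
  | zero =>
    induction x using induction_snoc with
    | snoc x t =>
      simp only [twistHomotopy_snoc, twistHomotopy_zero, map_sub,
        partialBoundary_twistSnoc_snoc hab, partialBoundary_succ_snoc,
        partialBoundary_twistSnoc_zero hab, map_neg, LinearMap.neg_apply]
      abel
    | add x y hx hy => simp only [map_add, neg_add, ← hx, ← hy]; abel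
  | succ n ih =>
    induction x using induction_snoc with
    | snoc x t =>
      have commute := mulLast_twistHomotopy_sub a b x t
      rw [sub_eq_iff_eq_add] at commute
      simp only [twistHomotopy_snoc, map_sub, map_neg, partialBoundary_twistSnoc_snoc hab,
        partialBoundary_succ_snoc, eq_sub_of_add_eq (ih x), commute, LinearMap.sub_apply,
        LinearMap.neg_apply]
      abel
    | add x y hx hy => simp only [map_add, neg_add, ← hx, ← hy]; abel

theorem twist_homotopicToId [Module A N] [IsScalarTower k A N] [SMulCommClass A Aᵐᵒᵖ N]
    (hab : ∑ δ, a δ * b δ = 1) :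
    HomotopicToId (boundary (k := k) (A := A) (N := N)) (twist a b) := by
  refine ⟨twistHomotopy a b, LinearMap.ext fun x => ?_, fun n => LinearMap.ext fun x => ?_⟩
  · simp only [boundary, LinearMap.comp_apply, LinearMap.add_apply, LinearMap.sub_apply,
      LinearMap.id_apply, twistHomotopy_zero, cyclicFace_twistSnoc,
      partialBoundary_twistSnoc_zero hab]
    exact (sub_eq_add_neg _ _).symm
  · simp only [boundary, LinearMap.comp_apply, LinearMap.add_apply, LinearMap.sub_apply,
      LinearMap.id_apply, map_add, ← cyclicFace_twistHomotopy]
    rw [sub_eq_add_neg, ← partialBoundary_twistHomotopy hab]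
    abel

end Homotopy

end HChain

namespace MoritaContext

variable {k R S P Q M Mt : Type u} [CommRing k] [Ring R] [Ring S] [Algebra k R] [Algebra k S]
  [AddCommGroup P] [Module k P] [Module S P] [Module Rᵐᵒᵖ P]
  [SMulCommClass S Rᵐᵒᵖ P] [IsScalarTower k S P] [IsScalarTower k Rᵐᵒᵖ P]
  [AddCommGroup Q] [Module k Q] [Module R Q] [Module Sᵐᵒᵖ Q]
  [SMulCommClass R Sᵐᵒᵖ Q] [IsScalarTower k R Q] [IsScalarTower k Sᵐᵒᵖ Q]
  (ctx : MoritaContext k R S P Q)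

/-- The Morita context with the roles of `R`, `P`, `φ` and `S`, `Q`, `ψ` exchanged. -/
def symm : MoritaContext k S R Q P where
  φ := ctx.ψ
  ψ := ctx.φ
  φ_ker := ctx.ψ_ker
  φ_surj := ctx.ψ_surj
  ψ_ker := ctx.φ_ker
  ψ_surj := ctx.φ_surj
  φ_left := ctx.ψ_left
  φ_right := ctx.ψ_right
  ψ_left := ctx.φ_left
  ψ_right := ctx.φ_right
  assoc_φψ := ctx.assoc_ψφ
  assoc_ψφ := ctx.assoc_φψ

variable {ι κ : Type*} [Fintype ι] [Fintype κ] {pI : ι → P} {qI : ι → Q} {pJ : κ → P} {qJ : κ → Q}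

theorem sum_ψ_mul_ψ (hI : ∑ i, ctx.ψ (qI i) (pI i) = 1) (hJ : ∑ j, ctx.φ (pJ j) (qJ j) = 1) :
    ∑ x : ι × κ, ctx.ψ (qI x.1) (pJ x.2) * ctx.ψ (qJ x.2) (pI x.1) = 1 :=
  calc
    _ = ∑ i, ∑ j, ctx.ψ (qI i) (ctx.φ (pJ j) (qJ j) • pI i) := by
      simp only [Fintype.sum_prod_type, ctx.assoc_φψ, ctx.ψ_right]
    _ = ∑ i, ctx.ψ (qI i) (pI i) := by
      simp only [← map_sum, ← Finset.sum_smul, hJ, one_smul]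
    _ = 1 := hI

theorem sum_φ_mul_φ (hI : ∑ i, ctx.ψ (qI i) (pI i) = 1) (hJ : ∑ j, ctx.φ (pJ j) (qJ j) = 1) :
    ∑ x : κ × ι, ctx.φ (pJ x.1) (qI x.2) * ctx.φ (pI x.2) (qJ x.1) = 1 :=
  ctx.symm.sum_ψ_mul_ψ hJ hI

variable [AddCommGroup M] [Module k M] [Module R M] [Module Rᵐᵒᵖ M]
  [AddCommGroup Mt] [Module k Mt]
  {emb : P →ₗ[k] M →ₗ[k] Q →ₗ[k] Mt} {n : ℕ}
  {θ : HChain k R M n →ₗ[k] HChain k S Mt n} {γ : HChain k S Mt n →ₗ[k] HChain k R M n}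

theorem γ_comp_θ_eq_twist [IsScalarTower k R M] [IsScalarTower k Rᵐᵒᵖ M]
    (hθ : ∀ (m : M) (r : Fin n → R),
      θ (hgen k m r) =
        ∑ f : Fin (n + 1) → ι,
          hgen k (emb (pI (f 0)) m (qI (f 1)))
            (fun l : Fin n => ctx.φ (pI (f l.succ)) (r l • qI (f (l.succ + 1)))))
    (hγ : ∀ (p : P) (m : M) (q : Q) (s : Fin n → S),
      γ (hgen k (emb p m q) s) =
        ∑ g : Fin (n + 1) → κ,
          hgen k (ctx.ψ (qJ (g 0)) p • (op (ctx.ψ q (pJ (g 1))) • m))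
            (fun l : Fin n => ctx.ψ (qJ (g l.succ)) (s l • pJ (g (l.succ + 1))))) :
    γ.comp θ = HChain.twist (fun x : ι × κ => ctx.ψ (qI x.1) (pJ x.2))
      (fun x : ι × κ => ctx.ψ (qJ x.2) (pI x.1)) n := by
  refine HChain.hom_ext fun m r => ?_
  simp only [LinearMap.comp_apply, hθ, map_sum, hγ, HChain.twist_hgen, sum_arrow_prod,
    ctx.assoc_φψ, ctx.ψ_right, ctx.ψ_left]

theorem θ_comp_γ_eq_twist [Module S Mt] [Module Sᵐᵒᵖ Mt] [IsScalarTower k S Mt]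
    [IsScalarTower k Sᵐᵒᵖ Mt]
    (hemb_bal₁ : ∀ (r : R) (p : P) (m : M) (q : Q), emb (op r • p) m q = emb p (r • m) q)
    (hemb_bal₂ : ∀ (r : R) (p : P) (m : M) (q : Q), emb p (op r • m) q = emb p m (r • q))
    (hemb_left : ∀ (s : S) (p : P) (m : M) (q : Q), emb (s • p) m q = s • emb p m q)
    (hemb_right : ∀ (s : S) (p : P) (m : M) (q : Q), emb p m (op s • q) = op s • emb p m q)
    (hemb_span : Submodule.span k {x : Mt | ∃ (p : P) (m : M) (q : Q), emb p m q = x} = ⊤)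
    (hθ : ∀ (m : M) (r : Fin n → R),
      θ (hgen k m r) =
        ∑ f : Fin (n + 1) → ι,
          hgen k (emb (pI (f 0)) m (qI (f 1)))
            (fun l : Fin n => ctx.φ (pI (f l.succ)) (r l • qI (f (l.succ + 1)))))
    (hγ : ∀ (p : P) (m : M) (q : Q) (s : Fin n → S),
      γ (hgen k (emb p m q) s) =
        ∑ g : Fin (n + 1) → κ,
          hgen k (ctx.ψ (qJ (g 0)) p • (op (ctx.ψ q (pJ (g 1))) • m))
            (fun l : Fin n => ctx.ψ (qJ (g l.succ)) (s l • pJ (g (l.succ + 1))))) :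
    θ.comp γ = HChain.twist (fun x : κ × ι => ctx.φ (pJ x.1) (qI x.2))
      (fun x : κ × ι => ctx.φ (pI x.2) (qJ x.1)) n := by
  refine HChain.hom_ext_of_span hemb_span ?_
  rintro _ ⟨p, m, q, rfl⟩ s
  simp only [LinearMap.comp_apply, hγ, map_sum, hθ, HChain.twist_hgen, sum_arrow_prod,
    ← hemb_bal₁, hemb_bal₂, ← ctx.assoc_φψ, ctx.assoc_ψφ, ctx.φ_right, ctx.φ_left, hemb_left,
    hemb_right]

end MoritaContext

/-- Let `(R, S, P, Q, φ, ψ)` be a Morita context over `k` and let `M` be an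
`(R,R)`-bimodule with symmetric `k`-action.  Then the chain maps
`θ_• : C_•(R, M) → C_•(S, M̃)` and `γ_• : C_•(S, M̃) → C_•(R, M)` are mutually inverse up to
chain homotopy; in particular, for every `n ≥ 0` the map induced by `θ` on homology is a
`k`-module isomorphism `H_n(R, M) ≅ H_n(S, P ⊗_R M ⊗_R Q)` (Morita invariance of Hochschild
homology). -/
theorem morita_invariance_hochschild_homology
    (k R S P Q M Mt : Type u) [CommRing k] [Ring R] [Ring S] [Algebra k R] [Algebra k S]
    [AddCommGroup P] [Module k P] [Module S P] [Module Rᵐᵒᵖ P]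
    [SMulCommClass S Rᵐᵒᵖ P] [IsScalarTower k S P] [IsScalarTower k Rᵐᵒᵖ P]
    [AddCommGroup Q] [Module k Q] [Module R Q] [Module Sᵐᵒᵖ Q]
    [SMulCommClass R Sᵐᵒᵖ Q] [IsScalarTower k R Q] [IsScalarTower k Sᵐᵒᵖ Q]
    [AddCommGroup M] [Module k M] [Module R M] [Module Rᵐᵒᵖ M]
    [SMulCommClass R Rᵐᵒᵖ M] [IsScalarTower k R M] [IsScalarTower k Rᵐᵒᵖ M]
    [AddCommGroup Mt] [Module k Mt] [Module S Mt] [Module Sᵐᵒᵖ Mt]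
    [SMulCommClass S Sᵐᵒᵖ Mt] [IsScalarTower k S Mt] [IsScalarTower k Sᵐᵒᵖ Mt]
    -- the Morita context and the fixed finite families with `Σⱼ φ(p'ⱼ ⊗ q'ⱼ) = 1_S`
    -- and `Σᵢ ψ(qᵢ ⊗ pᵢ) = 1_R`
    (ctx : MoritaContext k R S P Q)
    (ι κ : Type u) [Fintype ι] [Fintype κ]
    (pI : ι → P) (qI : ι → Q) (pJ : κ → P) (qJ : κ → Q)
    (hI : ∑ i : ι, ctx.ψ (qI i) (pI i) = 1)
    (hJ : ∑ j : κ, ctx.φ (pJ j) (qJ j) = 1)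
    -- `Mt` plays the role of `M̃ = P ⊗_R M ⊗_R Q`, with `emb p m q` the class of
    -- `p ⊗ m ⊗ q`; it is an `(S,S)`-bimodule spanned by these classes, the `S`-actions
    -- being `s·(p ⊗ m ⊗ q)·s' = (s·p) ⊗ m ⊗ (q·s')`, and the tensor products are
    -- balanced over `R`
    (emb : P →ₗ[k] M →ₗ[k] Q →ₗ[k] Mt)
    (hemb_bal₁ : ∀ (r : R) (p : P) (m : M) (q : Q), emb (op r • p) m q = emb p (r • m) q)
    (hemb_bal₂ : ∀ (r : R) (p : P) (m : M) (q : Q), emb p (op r • m) q = emb p m (r • q))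
    (hemb_left : ∀ (s : S) (p : P) (m : M) (q : Q), emb (s • p) m q = s • emb p m q)
    (hemb_right : ∀ (s : S) (p : P) (m : M) (q : Q), emb p m (op s • q) = op s • emb p m q)
    (hemb_span : Submodule.span k {x : Mt | ∃ (p : P) (m : M) (q : Q), emb p m q = x} = ⊤)
    -- the Hochschild boundaries of `C_•(R, M)` and `C_•(S, M̃)`
    (bR : ∀ n, HChain k R M (n + 1) →ₗ[k] HChain k R M n)
    (hbR : ∀ (n : ℕ) (m : M) (r : Fin (n + 1) → R),
      bR n (hgen k m r) =
        hgen k (r (Fin.last n) • m) (Fin.init r)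
          + ∑ j : Fin n, ((-1 : ℤ) ^ (n - j.val)) • hgen k m (mergeAt r j)
          + ((-1 : ℤ) ^ (n + 1)) • hgen k (op (r 0) • m) (Fin.tail r))
    (bS : ∀ n, HChain k S Mt (n + 1) →ₗ[k] HChain k S Mt n)
    (hbS : ∀ (n : ℕ) (m : Mt) (s : Fin (n + 1) → S),
      bS n (hgen k m s) =
        hgen k (s (Fin.last n) • m) (Fin.init s)
          + ∑ j : Fin n, ((-1 : ℤ) ^ (n - j.val)) • hgen k m (mergeAt s j)
          + ((-1 : ℤ) ^ (n + 1)) • hgen k (op (s 0) • m) (Fin.tail s))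
    -- the chain map `θ_•`
    (θ : ∀ n, HChain k R M n →ₗ[k] HChain k S Mt n)
    (hθ : ∀ (n : ℕ) (m : M) (r : Fin n → R),
      θ n (hgen k m r) =
        ∑ f : Fin (n + 1) → ι,
          hgen k (emb (pI (f 0)) m (qI (f 1)))
            (fun l : Fin n => ctx.φ (pI (f l.succ)) (r l • qI (f (l.succ + 1)))))
    -- the chain map `γ_•`
    (γ : ∀ n, HChain k S Mt n →ₗ[k] HChain k R M n)
    (hγ : ∀ (n : ℕ) (p : P) (m : M) (q : Q) (s : Fin n → S),
      γ n (hgen k (emb p m q) s) =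
        ∑ g : Fin (n + 1) → κ,
          hgen k (ctx.ψ (qJ (g 0)) p • (op (ctx.ψ q (pJ (g 1))) • m))
            (fun l : Fin n => ctx.ψ (qJ (g l.succ)) (s l • pJ (g (l.succ + 1)))))
    -- squares of the boundaries vanish, and `θ_•`, `γ_•` are chain maps
    (hbR_sq : ∀ n, (bR n).comp (bR (n + 1)) = 0)
    (hbS_sq : ∀ n, (bS n).comp (bS (n + 1)) = 0)
    (hθ_chain : ∀ n, (bS n).comp (θ (n + 1)) = (θ n).comp (bR n))
    (hγ_chain : ∀ n, (bR n).comp (γ (n + 1)) = (γ n).comp (bS n))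
 :
    (∃ h : ∀ n, HChain k R M n →ₗ[k] HChain k R M (n + 1),
        (bR 0).comp (h 0) = (γ 0).comp (θ 0) - LinearMap.id ∧
        ∀ n : ℕ, (bR (n + 1)).comp (h (n + 1)) + (h n).comp (bR n)
          = (γ (n + 1)).comp (θ (n + 1)) - LinearMap.id) ∧
    (∃ ht : ∀ n, HChain k S Mt n →ₗ[k] HChain k S Mt (n + 1),
        (bS 0).comp (ht 0) = (θ 0).comp (γ 0) - LinearMap.id ∧
        ∀ n : ℕ, (bS (n + 1)).comp (ht (n + 1)) + (ht n).comp (bS n)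
          = (θ (n + 1)).comp (γ (n + 1)) - LinearMap.id) ∧
    (∀ n : ℕ, Function.Bijective (inducedMap bR hbR_sq bS hbS_sq θ hθ_chain n)) := by
  obtain rfl : bR = HChain.boundary := funext fun n => HChain.eq_boundary (hbR n)
  obtain rfl : bS = HChain.boundary := funext fun n => HChain.eq_boundary (hbS n)
  have hγθ : HomotopicToId HChain.boundary fun n => (γ n).comp (θ n) := by
    simp only [ctx.γ_comp_θ_eq_twist (hθ _) (hγ _)]
    exact HChain.twist_homotopicToId (ctx.sum_ψ_mul_ψ hI hJ)
  have hθγ : HomotopicToId HChain.boundary fun n => (θ n).comp (γ n) := by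
    simp only [ctx.θ_comp_γ_eq_twist hemb_bal₁ hemb_bal₂ hemb_left hemb_right hemb_span
      (hθ _) (hγ _)]
    exact HChain.twist_homotopicToId (ctx.sum_φ_mul_φ hI hJ)
  exact ⟨hγθ, hθγ, inducedMap_bijective hθ_chain hγ_chain hγθ hθγ⟩
end

section
/- Let (R,S,P,Q,φ,ψ) be a Morita context over k. Then for every n ≥ 0 there is a k-module isomorphism HC_n(R) ≅ HC_n(S) between the cyclic homologies of R and S (Morita invariance of cyclic homology of associative algebras). -/
open scoped TensorProduct
open MulOpposite

universe u

section Cyclic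

variable (k : Type u) [CommRing k]

/-- The `k`-module `A^{⊗_k (n+1)}` underlying the cyclic module of a `k`-algebra `A`;
it is the module `CC_{p,n}` in any column of Tsygan's cyclic bicomplex. -/
abbrev CycChain (A : Type u) [Ring A] [Algebra k A] (n : ℕ) :=
  PiTensorProduct k (fun _ : Fin (n + 1) => A)

/-- The generator `r₀ ⊗ r₁ ⊗ ⋯ ⊗ rₙ` of `A^{⊗_k (n+1)}`. -/
noncomputable def cgen {A : Type u} [Ring A] [Algebra k A] {n : ℕ}
    (r : Fin (n + 1) → A) : CycChain k A n :=
  PiTensorProduct.tprod k r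

/-- The `i`-th face of the tuple `r = (r₀, …, r_{m+1})`:
`d_0 r = (r_{m+1}·r₀, r₁, …, r_m)`, for `1 ≤ i ≤ m` the face `d_i` multiplies the entries
at the (0-based) positions `m + 1 - i` and `m + 2 - i`, and
`d_{m+1} r = (r₀·r₁, r₂, …, r_{m+1})`. -/
def faceTuple {A : Type u} [Mul A] {m : ℕ} (r : Fin (m + 2) → A) (i : Fin (m + 2)) :
    Fin (m + 1) → A :=
  fun l =>
    if i.val = 0 then (if l.val = 0 then r (Fin.last (m + 1)) * r 0 else r l.castSucc)
    else if l.val < (m + 1) - i.val then r l.castSucc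
    else if l.val = (m + 1) - i.val then r l.castSucc * r l.succ
    else r l.succ

/-- The degree-`n` part `⊕_{p+q=n} CC_{p,q} = ⊕_{p=0}^{n} A^{⊗(n-p+1)}` of the total complex
of Tsygan's cyclic bicomplex of the `k`-algebra `A`. -/
abbrev TotC (A : Type u) [Ring A] [Algebra k A] (n : ℕ) :=
  DirectSum (Fin (n + 1)) (fun p => CycChain k A (n - p.val))

end Cyclic

/-!
If `∑ ψ(qᵢ ⊗ pᵢ) = 1`, then `r ↦ (φ(pᵢ · r ⊗ qⱼ))ᵢⱼ` is a multiplicative, generally non-unital, map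
from `R` to matrices over `S`. Composing it with the trace of matrices commutes with every face and
with the cyclic operator, hence gives a chain map of Tsygan's total complexes; exchanging `R` and
`S` gives a chain map back. The composite endomorphism for `R` is the trace of the entries
`a ↦ v x * a * u y` with `∑ u x * v x = 1`. Adding one index at which `u` and `v` are `1` exhibits
it and the identity as the traces of one matrix over two sets `T` and `F` of indices, and inserting
a `1` in a tensor while passing from indices in `T` to indices in `F` gives a homotopy between them
in each column; the odd columns have an even simpler one, being contractible.

These homotopies ignore the horizontal differentials. The resulting error lowers the column, so it
is nilpotent in each total degree, and the composite is unipotent on homology.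
-/

namespace CyclicHomology

section ChainHomotopy

variable {k : Type u} [CommRing k] {T T' T'' : ℕ → Type u}
  [∀ n, AddCommGroup (T n)] [∀ n, Module k (T n)] [∀ n, AddCommGroup (T' n)]
  [∀ n, Module k (T' n)] [∀ n, AddCommGroup (T'' n)] [∀ n, Module k (T'' n)]

/-- The cycles of the complex with differentials `D`; every chain of degree `0` is a cycle. -/
def cycles (D : ∀ n, T (n + 1) →ₗ[k] T n) : ∀ n, Submodule k (T n)
  | 0 => ⊤
  | n + 1 => LinearMap.ker (D n)

/-- `D' H + H D`, the boundary of a family of maps `H` of degree one; in degree `0` it is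
`D' H`, as there is no differential out of degree `0`. -/
def homotopyBoundary (D : ∀ n, T (n + 1) →ₗ[k] T n) (D' : ∀ n, T' (n + 1) →ₗ[k] T' n)
    (H : ∀ n, T n →ₗ[k] T' (n + 1)) : ∀ n, T n →ₗ[k] T' n
  | 0 => D' 0 ∘ₗ H 0
  | n + 1 => D' (n + 1) ∘ₗ H (n + 1) + H n ∘ₗ D n

section

variable {D : ∀ n, T (n + 1) →ₗ[k] T n} {D' : ∀ n, T' (n + 1) →ₗ[k] T' n}
  {D'' : ∀ n, T'' (n + 1) →ₗ[k] T'' n}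

lemma homotopyBoundary_add (D₁ D₂ : ∀ n, T (n + 1) →ₗ[k] T n)
    (D₁' D₂' : ∀ n, T' (n + 1) →ₗ[k] T' n) (H : ∀ n, T n →ₗ[k] T' (n + 1)) (n : ℕ) :
    homotopyBoundary (fun n => D₁ n + D₂ n) (fun n => D₁' n + D₂' n) H n =
      homotopyBoundary D₁ D₁' H n + homotopyBoundary D₂ D₂' H n := by
  cases n with
  | zero => exact LinearMap.add_comp _ _ _
  | succ n =>
    simp only [homotopyBoundary, LinearMap.add_comp, LinearMap.comp_add]
    abel

lemma homotopyBoundary_comp {f : ∀ n, T n →ₗ[k] T' n}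
    (hf : ∀ n, D' n ∘ₗ f (n + 1) = f n ∘ₗ D n) (H : ∀ n, T' n →ₗ[k] T'' (n + 1)) (n : ℕ) :
    homotopyBoundary D D'' (fun n => H n ∘ₗ f n) n = homotopyBoundary D' D'' H n ∘ₗ f n := by
  cases n with
  | zero => rfl
  | succ n => simp only [homotopyBoundary, LinearMap.add_comp, LinearMap.comp_assoc, hf]

lemma homotopyBoundary_mem_range (H : ∀ n, T n →ₗ[k] T' (n + 1)) {n : ℕ} {z : T n}
    (hz : z ∈ cycles D n) : homotopyBoundary D D' H n z ∈ LinearMap.range (D' n) := by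
  cases n with
  | zero => exact ⟨H 0 z, rfl⟩
  | succ n =>
    have hDz : D n z = 0 := hz
    exact ⟨H (n + 1) z, by simp [homotopyBoundary, hDz]⟩

lemma map_mem_cycles {f : ∀ n, T n →ₗ[k] T' n} (hf : ∀ n, D' n ∘ₗ f (n + 1) = f n ∘ₗ D n)
    {n : ℕ} {z : T n} (hz : z ∈ cycles D n) : f n z ∈ cycles D' n := by
  cases n with
  | zero => trivial
  | succ n =>
    have hDz : D n z = 0 := hz
    exact (LinearMap.congr_fun (hf n) z).trans (by simp [hDz])

lemma range_le_cycles (hsq : ∀ n, D n ∘ₗ D (n + 1) = 0) (n : ℕ) :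
    LinearMap.range (D n) ≤ cycles D n := by
  cases n with
  | zero => exact le_top
  | succ n => exact LinearMap.range_le_ker_iff.mpr (hsq n)

end

variable (D : ∀ n, T (n + 1) →ₗ[k] T n) (hsq : ∀ n, D n ∘ₗ D (n + 1) = 0)
  (D' : ∀ n, T' (n + 1) →ₗ[k] T' n) (hsq' : ∀ n, D' n ∘ₗ D' (n + 1) = 0)
  (D'' : ∀ n, T'' (n + 1) →ₗ[k] T'' n) (hsq'' : ∀ n, D'' n ∘ₗ D'' (n + 1) = 0)

/-- The homology class of a cycle. -/
noncomputable def toHomology : ∀ n, cycles D n →ₗ[k] homologyAt D hsq n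
  | 0 => (LinearMap.range (D 0)).mkQ ∘ₗ (cycles D 0).subtype
  | n + 1 => (LinearMap.range ((D (n + 1)).codRestrict (LinearMap.ker (D n))
      fun x => LinearMap.congr_fun (hsq n) x)).mkQ

lemma toHomology_surjective (n : ℕ) : Function.Surjective (toHomology D hsq n) := by
  cases n with
  | zero =>
    intro x
    obtain ⟨y, rfl⟩ := Submodule.mkQ_surjective (LinearMap.range (D 0)) x
    exact ⟨⟨y, trivial⟩, rfl⟩
  | succ n => exact Submodule.mkQ_surjective _

lemma toHomology_eq_zero {n : ℕ} {z : cycles D n} (hz : z.1 ∈ LinearMap.range (D n)) :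
    toHomology D hsq n z = 0 := by
  cases n with
  | zero => exact (Submodule.Quotient.mk_eq_zero _).mpr hz
  | succ n =>
    obtain ⟨y, hy⟩ := hz
    exact (Submodule.Quotient.mk_eq_zero _).mpr ⟨y, Subtype.ext hy⟩

variable {D' D''}

lemma inducedMap_toHomology {f : ∀ n, T n →ₗ[k] T' n}
    (hf : ∀ n, D' n ∘ₗ f (n + 1) = f n ∘ₗ D n) {n : ℕ} (z : cycles D n) :
    inducedMap D hsq D' hsq' f hf n (toHomology D hsq n z) =
      toHomology D' hsq' n ⟨f n z.1, map_mem_cycles hf z.2⟩ := by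
  cases n <;> rfl

lemma inducedMap_comp {f : ∀ n, T n →ₗ[k] T' n} (hf : ∀ n, D' n ∘ₗ f (n + 1) = f n ∘ₗ D n)
    {g : ∀ n, T' n →ₗ[k] T'' n} (hg : ∀ n, D'' n ∘ₗ g (n + 1) = g n ∘ₗ D' n) (n : ℕ) :
    inducedMap D hsq D'' hsq'' (fun n => g n ∘ₗ f n)
        (fun n => by rw [← LinearMap.comp_assoc, hg, LinearMap.comp_assoc, hf,
          LinearMap.comp_assoc]) n =
      inducedMap D' hsq' D'' hsq'' g hg n ∘ₗ inducedMap D hsq D' hsq' f hf n := by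
  ext x
  obtain ⟨z, rfl⟩ := toHomology_surjective D hsq n x
  simp only [LinearMap.comp_apply, inducedMap_toHomology]

lemma one_sub_inducedMap_toHomology {D : ∀ n, T (n + 1) →ₗ[k] T n}
    (hsq : ∀ n, D n ∘ₗ D (n + 1) = 0) {f : ∀ n, T n →ₗ[k] T n}
    (hf : ∀ n, D n ∘ₗ f (n + 1) = f n ∘ₗ D n) (H : ∀ n, T n →ₗ[k] T (n + 1)) {n : ℕ}
    (z : cycles D n) :
    ∃ hz, (1 - inducedMap D hsq D hsq f hf n) (toHomology D hsq n z) =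
      toHomology D hsq n ⟨(1 - f n - homotopyBoundary D D H n) z.1, hz⟩ := by
  have hbd := homotopyBoundary_mem_range (D' := D) H z.2
  refine ⟨sub_mem (sub_mem z.2 (map_mem_cycles hf z.2)) (range_le_cycles hsq n hbd), ?_⟩
  rw [LinearMap.sub_apply, Module.End.one_apply, inducedMap_toHomology, ← map_sub, ← sub_eq_zero,
    ← map_sub]
  exact toHomology_eq_zero D hsq (by simpa using hbd)

theorem inducedMap_bijective_of_isNilpotent {D : ∀ n, T (n + 1) →ₗ[k] T n}
    (hsq : ∀ n, D n ∘ₗ D (n + 1) = 0) {f : ∀ n, T n →ₗ[k] T n}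
    (hf : ∀ n, D n ∘ₗ f (n + 1) = f n ∘ₗ D n) (H : ∀ n, T n →ₗ[k] T (n + 1)) {n : ℕ}
    (hν : IsNilpotent (1 - f n - homotopyBoundary D D H n)) :
    Function.Bijective (inducedMap D hsq D hsq f hf n) := by
  obtain ⟨N, hN⟩ := hν
  set φ := inducedMap D hsq D hsq f hf n
  set ν := 1 - f n - homotopyBoundary D D H n
  have hpow : ∀ (j : ℕ) (z : cycles D n), ∃ hz, ((1 - φ) ^ j) (toHomology D hsq n z) =
      toHomology D hsq n ⟨(ν ^ j) z.1, hz⟩ := fun j z => by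
    induction j with
    | zero => exact ⟨z.2, rfl⟩
    | succ j ih =>
      obtain ⟨hz, hj⟩ := ih
      simp only [pow_succ', Module.End.mul_apply, hj]
      exact one_sub_inducedMap_toHomology hsq hf H ⟨_, hz⟩
  have hnil : IsNilpotent (1 - φ) := by
    refine ⟨N, LinearMap.ext fun x => ?_⟩
    obtain ⟨z, rfl⟩ := toHomology_surjective D hsq n x
    obtain ⟨_, hz⟩ := hpow N z
    exact hz.trans (toHomology_eq_zero D hsq (by simp [hN]))
  rw [← Module.End.isUnit_iff, ← sub_sub_cancel 1 φ]
  exact hnil.isUnit_one_sub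

end ChainHomotopy

section FinArithmetic

variable {n : ℕ}

lemma neg_one_eq_last : (-1 : Fin (n + 1)) = Fin.last n := by
  rw [← Fin.neg_last, neg_neg]

lemma succ_sub_one (l : Fin (n + 1)) : l.succ - 1 = l.castSucc := by
  rw [sub_eq_iff_eq_add, Fin.coeSucc_eq_succ]

lemma zero_succAbove_sub_one (j : Fin (n + 1)) :
    (0 : Fin (n + 2)).succAbove j - 1 = (Fin.last (n + 1)).succAbove j := by
  rw [Fin.succAbove_zero, Fin.succAbove_last, succ_sub_one]

lemma castSucc_sub_one (l : Fin (n + 1)) :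
    l.castSucc - 1 = l.castSucc.succAbove (l - 1) := by
  ext
  simp only [Fin.coe_sub_one, Fin.succAbove, Fin.lt_def, Fin.val_castSucc, Fin.val_succ,
    Fin.ext_iff, Fin.val_zero, apply_ite Fin.val]
  grind

lemma castSucc_succAbove_sub_one {l j : Fin (n + 1)} (hj : j ≠ l) :
    l.castSucc.succAbove j - 1 = l.castSucc.succAbove (j - 1) := by
  have hval : (j : ℕ) ≠ l := Fin.val_ne_of_ne hj
  ext
  simp only [Fin.coe_sub_one, Fin.succAbove, Fin.lt_def, Fin.val_castSucc, Fin.val_succ,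
    Fin.ext_iff, Fin.val_zero, apply_ite Fin.val]
  grind

end FinArithmetic

section SumComp

variable {k ι M N P : Type*} [CommSemiring k] [AddCommMonoid M] [AddCommMonoid N]
  [AddCommMonoid P] [Module k M] [Module k N] [Module k P]

lemma sum_comp (s : Finset ι) (g : ι → N →ₗ[k] P) (f : M →ₗ[k] N) :
    (∑ i ∈ s, g i) ∘ₗ f = ∑ i ∈ s, g i ∘ₗ f :=
  map_sum (LinearMap.lcomp k P f) g s

lemma comp_sum (s : Finset ι) (g : N →ₗ[k] P) (f : ι → M →ₗ[k] N) :
    g ∘ₗ ∑ i ∈ s, f i = ∑ i ∈ s, g ∘ₗ f i :=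
  map_sum (LinearMap.compRight k g) f s

end SumComp

section CyclicModule

open PiTensorProduct (lift reindex)

variable {k : Type u} [CommRing k] {A : Type u} [Ring A] [Algebra k A]

lemma cycChain_hom_ext {M : Type*} [AddCommGroup M] [Module k M] {n : ℕ}
    {f g : CycChain k A n →ₗ[k] M} (h : ∀ r, f (cgen k r) = g (cgen k r)) : f = g :=
  PiTensorProduct.ext (MultilinearMap.ext h)

/-- Multiplication of the entries in positions `l` and `l + 1` of a tensor. -/
noncomputable def contract {n : ℕ} (l : Fin (n + 1)) :
    CycChain k A (n + 1) →ₗ[k] CycChain k A n :=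
  lift <| LinearMap.uncurryMid l.castSucc <|
    ((MultilinearMap.compLinearMapMultilinear (R := k)).toLinearMap
      (fun _ => LinearMap.id) l).flip (PiTensorProduct.tprod k) ∘ₗ LinearMap.mul k A

lemma contract_cgen {n : ℕ} (l : Fin (n + 1)) (r : Fin (n + 2) → A) :
    contract l (cgen k r) = cgen k
      (Function.update (fun x => r (l.castSucc.succAbove x)) l (r l.castSucc * r l.succ)) := by
  rw [contract, cgen, lift.tprod]
  refine congrArg (PiTensorProduct.tprod k) (funext fun x => ?_)
  rcases eq_or_ne x l with rfl | hx
  · simp [Fin.removeNth]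
  · simp [Fin.removeNth, hx]

/-- The action of the cyclic group on tensors; `rotate 1` is the operator `t`. -/
noncomputable def rotate {n : ℕ} (i : Fin (n + 1)) : CycChain k A n →ₗ[k] CycChain k A n :=
  (reindex k (fun _ => A) (Equiv.addRight i).symm).toLinearMap

lemma rotate_cgen {n : ℕ} (i : Fin (n + 1)) (r : Fin (n + 1) → A) :
    rotate i (cgen k r) = cgen k fun l => r (l + i) :=
  PiTensorProduct.reindex_tprod _ _

/-- The face merging the entries in positions `l` and `l + 1`, cyclically: it is `d_{n+1-l}` of
the cyclic module. The face `d_0`, where the last entry wraps around, is `l = n + 1`. -/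
noncomputable def face {n : ℕ} (l : ℕ) : CycChain k A (n + 1) →ₗ[k] CycChain k A n :=
  if h : l < n + 1 then contract ⟨l, h⟩ else contract 0 ∘ₗ rotate (-1)

lemma face_castSucc {n : ℕ} (l : Fin (n + 1)) : face (k := k) (A := A) l.castSucc = contract l :=
  dif_pos l.isLt

lemma face_last {n : ℕ} :
    face (k := k) (A := A) (Fin.last (n + 1)) = contract (0 : Fin (n + 1)) ∘ₗ rotate (-1) :=
  dif_neg (lt_irrefl _)

lemma face_cgen {n : ℕ} (l : Fin (n + 2)) (r : Fin (n + 2) → A) :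
    face l (cgen k r) = cgen k (faceTuple r l.rev) := by
  cases l using Fin.lastCases with
  | last =>
    rw [face_last, LinearMap.comp_apply, rotate_cgen, contract_cgen]
    refine congrArg (cgen k) (funext fun x => ?_)
    cases x using Fin.cases with
    | zero =>
      have hadd : (1 : Fin (n + 2)) + Fin.last (n + 1) = 0 := by
        rw [← neg_one_eq_last, add_neg_cancel]
      simp [faceTuple, neg_one_eq_last, hadd]
    | succ x => simp [faceTuple, ← sub_eq_add_neg, succ_sub_one]
  | cast l =>
    have hrev : (l.castSucc.rev : ℕ) = n + 1 - l := by simp [Fin.val_rev]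
    rw [face_castSucc, contract_cgen]
    refine congrArg (cgen k) (funext fun x => ?_)
    rw [faceTuple, if_neg (by omega)]
    rcases lt_trichotomy x l with hx | rfl | hx
    · rw [if_pos (by omega), Function.update_of_ne hx.ne, Fin.succAbove_castSucc_of_lt _ _ hx]
    · rw [if_neg (by omega), if_pos (by omega), Function.update_self]
    · rw [if_neg (by omega), if_neg (by omega), Function.update_of_ne hx.ne',
        Fin.succAbove_castSucc_of_le _ _ hx.le]

/-- The tensors with a `1` inserted in position `j`, for `j ≤ n + 1`. -/
noncomputable def insertOne {n : ℕ} (j : ℕ) : CycChain k A n →ₗ[k] CycChain k A (n + 1) :=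
  lift ((PiTensorProduct.tprod k).curryMid (M := fun _ => A) (Fin.ofNat (n + 2) j) (1 : A))

lemma insertOne_cgen {n : ℕ} (j : ℕ) (r : Fin (n + 1) → A) :
    insertOne j (cgen k r) =
      cgen k ((Fin.ofNat (n + 2) j).insertNth (α := fun _ => A) 1 r) := by
  rw [insertOne, cgen, lift.tprod]
  rfl

/-- The entries of the `l`-th face of the tuple `(r 0, …, r (n + 1))`. -/
def mergeAt (n l : ℕ) (r : ℕ → A) (x : ℕ) : A :=
  if x = 0 ∧ l = n + 1 then r (n + 1) * r 0
  else if x < l then r x else if x = l then r x * r (x + 1) else r (x + 1)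

/-- The sequence `r` with a `1` inserted in position `j`. -/
def insertOneAt (j : ℕ) (r : ℕ → A) (x : ℕ) : A :=
  if x < j then r x else if x = j then 1 else r (x - 1)

lemma face_cgen_nat {n l : ℕ} (hl : l ≤ n + 1) (r : ℕ → A) :
    face l (cgen k fun x : Fin (n + 2) => r x) =
      cgen k fun x : Fin (n + 1) => mergeAt n l r x := by
  refine (face_cgen ⟨l, by omega⟩ _).trans (congrArg (cgen k) (funext fun x => ?_))
  simp only [faceTuple, mergeAt, Fin.val_rev, Fin.val_castSucc, Fin.val_succ, Fin.val_last,
    Fin.val_zero]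
  grind

lemma insertOne_cgen_nat {n j : ℕ} (hj : j ≤ n + 1) (r : ℕ → A) :
    insertOne j (cgen k fun x : Fin (n + 1) => r x) =
      cgen k fun x : Fin (n + 2) => insertOneAt j r x := by
  have hval : (Fin.ofNat (n + 2) j : ℕ) = j := Nat.mod_eq_of_lt (by omega)
  rw [insertOne_cgen]
  refine congrArg (cgen k) (Fin.insertNth_eq_iff.mpr ⟨?_, funext fun x => ?_⟩)
  · simp only [insertOneAt, hval, lt_irrefl, if_false, if_true]
  · rcases lt_or_ge (x : ℕ) j with hx | hx
    · rw [Fin.removeNth, Fin.succAbove_of_castSucc_lt _ _ (by rw [Fin.lt_def, hval]; exact hx)]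
      simp [insertOneAt, hx]
    · rw [Fin.removeNth, Fin.succAbove_of_le_castSucc _ _ (by rw [Fin.le_def, hval]; exact hx)]
      simp [insertOneAt, show ¬ (x : ℕ) + 1 < j by omega, show (x : ℕ) + 1 ≠ j by omega]

lemma cycChain_hom_ext_nat {M : Type*} [AddCommGroup M] [Module k M] {n : ℕ}
    {f g : CycChain k A n →ₗ[k] M}
    (h : ∀ r : ℕ → A, f (cgen k fun x => r x) = g (cgen k fun x => r x)) : f = g := by
  refine cycChain_hom_ext fun r => ?_
  have hr : r = fun x : Fin (n + 1) => r (Fin.ofNat (n + 1) x) := by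
    funext x
    simp
  rw [hr]
  exact h fun x => r (Fin.ofNat (n + 1) x)

lemma face_comp_insertOne_of_lt {n i j : ℕ} (hij : i < j) (hj : j ≤ n + 1) :
    face i ∘ₗ insertOne (j + 1) = insertOne j ∘ₗ face (k := k) (A := A) (n := n) i := by
  refine cycChain_hom_ext_nat fun r => ?_
  simp only [LinearMap.comp_apply]
  rw [insertOne_cgen_nat (by omega), face_cgen_nat (by omega), face_cgen_nat (by omega),
    insertOne_cgen_nat (by omega)]
  refine congrArg (cgen k) (funext fun x => ?_)
  grind [mergeAt, insertOneAt]

lemma face_comp_insertOne_of_gt {n i j : ℕ} (hij : j < i) (hi : i ≤ n + 1) :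
    face (i + 1) ∘ₗ insertOne (j + 1) =
      insertOne (j + 1) ∘ₗ face (k := k) (A := A) (n := n) i := by
  refine cycChain_hom_ext_nat fun r => ?_
  simp only [LinearMap.comp_apply]
  rw [insertOne_cgen_nat (by omega), face_cgen_nat (by omega), face_cgen_nat (by omega),
    insertOne_cgen_nat (by omega)]
  refine congrArg (cgen k) (funext fun x => ?_)
  grind [mergeAt, insertOneAt]

lemma face_comp_insertOne_self {n j : ℕ} (hj : j ≤ n) :
    face j ∘ₗ insertOne (j + 1) = (LinearMap.id : CycChain k A n →ₗ[k] CycChain k A n) := by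
  refine cycChain_hom_ext_nat fun r => ?_
  simp only [LinearMap.comp_apply]
  rw [insertOne_cgen_nat (by omega), face_cgen_nat (by omega)]
  refine congrArg (cgen k) (funext fun x => ?_)
  grind [mergeAt, insertOneAt]

lemma face_succ_comp_insertOne_self {n j : ℕ} (hj : j ≤ n) :
    face (j + 1) ∘ₗ insertOne (j + 1) =
      (LinearMap.id : CycChain k A n →ₗ[k] CycChain k A n) := by
  refine cycChain_hom_ext_nat fun r => ?_
  simp only [LinearMap.comp_apply]
  rw [insertOne_cgen_nat (by omega), face_cgen_nat (by omega)]
  refine congrArg (cgen k) (funext fun x => ?_)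
  grind [mergeAt, insertOneAt]

end CyclicModule

section PathSum

variable {k : Type u} [CommRing k] {A B : Type u} [Ring A] [Algebra k A] [Ring B] [Algebra k B]
  {Λ : Type*}

/-- The sum over the closed paths `x` through vertices `x l ∈ c l` of the maps
`r₀ ⊗ ⋯ ⊗ rₙ ↦ ⨂ m (x (l - 1)) (x l) (r l)`; when all `c l` are equal, this is the trace of a
product of matrices. -/
noncomputable def pathSum {n : ℕ} (m : Λ → Λ → A →ₗ[k] B) (c : Fin (n + 1) → Finset Λ) :
    CycChain k A n →ₗ[k] CycChain k B n :=
  ∑ x ∈ Fintype.piFinset c, PiTensorProduct.map fun l => m (x (l - 1)) (x l)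

lemma pathSum_cgen {n : ℕ} (m : Λ → Λ → A →ₗ[k] B) (c : Fin (n + 1) → Finset Λ)
    (r : Fin (n + 1) → A) :
    pathSum m c (cgen k r) =
      ∑ x ∈ Fintype.piFinset c, cgen k fun l => m (x (l - 1)) (x l) (r l) := by
  simp only [pathSum, LinearMap.sum_apply, cgen, PiTensorProduct.map_tprod]

/-- The entries `m x y` behave as those of a ring homomorphism into matrices indexed by `T`. -/
def IsMultiplicative (m : Λ → Λ → A →ₗ[k] B) (T : Finset Λ) : Prop :=
  ∀ y z a b, ∑ x ∈ T, m y x a * m x z b = m y z (a * b)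

lemma sum_piFinset_insertNth {M : Type*} [AddCommMonoid M] {n : ℕ} (p : Fin (n + 1))
    (c : Fin (n + 1) → Finset Λ) (f : (Fin (n + 1) → Λ) → M) :
    ∑ x ∈ Fintype.piFinset c, f x =
      ∑ y ∈ Fintype.piFinset fun j => c (p.succAbove j), ∑ z ∈ c p,
        f (p.insertNth (α := fun _ => Λ) z y) := by
  rw [← Finset.sum_product_right' (f := fun z y => f (p.insertNth (α := fun _ => Λ) z y))]
  refine Finset.sum_equiv (Fin.insertNthEquiv (fun _ => Λ) p).symm (fun x => ?_) fun x _ => ?_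
  · rw [Fin.mem_piFinset_iff_pivot_removeNth p, Finset.mem_product]
    rfl
  · exact congrArg f (Fin.insertNth_self_removeNth p x).symm

lemma contract_comp_pathSum {n : ℕ} {m : Λ → Λ → A →ₗ[k] B} (l : Fin (n + 1))
    {c : Fin (n + 2) → Finset Λ} (hm : IsMultiplicative m (c l.castSucc)) :
    contract l ∘ₗ pathSum m c =
      pathSum m (fun j => c (l.castSucc.succAbove j)) ∘ₗ contract l := by
  refine cycChain_hom_ext fun r => ?_
  simp only [LinearMap.comp_apply, pathSum_cgen, contract_cgen, map_sum]
  rw [sum_piFinset_insertNth l.castSucc]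
  refine Finset.sum_congr rfl fun y _ => ?_
  have hentry : ∀ j, m (y (j - 1)) (y j)
      (Function.update (fun x => r (l.castSucc.succAbove x)) l (r l.castSucc * r l.succ) j) =
      Function.update (fun x => m (y (x - 1)) (y x) (r (l.castSucc.succAbove x))) l
        (∑ z ∈ c l.castSucc, m (y (l - 1)) z (r l.castSucc) * m z (y l) (r l.succ)) j := fun j => by
    rw [hm, Function.apply_update fun x => m (y (x - 1)) (y x)]
  simp only [hentry]
  refine Eq.trans ?_ (MultilinearMap.map_update_sum (PiTensorProduct.tprod k) _ l _ _).symm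
  refine Finset.sum_congr rfl fun z _ => congrArg (cgen k) (funext fun j => ?_)
  rcases eq_or_ne j l with rfl | hj
  · have hsucc : j.castSucc.insertNth (α := fun _ => Λ) z y j.succ = y j := by
      simpa using Fin.insertNth_apply_succAbove (α := fun _ => Λ) j.castSucc z y j
    simp [castSucc_sub_one, succ_sub_one, hsucc]
  · simp [castSucc_succAbove_sub_one hj, hj]

lemma rotate_comp_pathSum {n : ℕ} (m : Λ → Λ → A →ₗ[k] B) (c : Fin (n + 1) → Finset Λ)
    (i : Fin (n + 1)) :
    rotate i ∘ₗ pathSum m c = pathSum m (fun l => c (l + i)) ∘ₗ rotate i := by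
  refine cycChain_hom_ext fun r => ?_
  simp only [LinearMap.comp_apply, pathSum_cgen, rotate_cgen, map_sum]
  refine Finset.sum_equiv ((Equiv.addRight i).symm.arrowCongr (Equiv.refl Λ)) (fun x => ?_)
    fun x _ => ?_
  · simp only [Fintype.mem_piFinset]
    exact (Equiv.addRight i).forall_congr_right.symm
  · simp [sub_add_eq_add_sub]

lemma face_comp_pathSum {n : ℕ} {m : Λ → Λ → A →ₗ[k] B} (l : Fin (n + 2))
    {c : Fin (n + 2) → Finset Λ} (hm : IsMultiplicative m (c l)) :
    face l ∘ₗ pathSum m c = pathSum m (fun j => c (l.succAbove j)) ∘ₗ face l := by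
  cases l using Fin.lastCases with
  | cast l =>
    rw [face_castSucc, face_castSucc, contract_comp_pathSum l hm]
  | last =>
    rw [face_last, face_last, LinearMap.comp_assoc, rotate_comp_pathSum, ← LinearMap.comp_assoc,
      contract_comp_pathSum 0 (by simpa [neg_one_eq_last] using hm), LinearMap.comp_assoc]
    congr 2
    funext j
    rw [Fin.castSucc_zero, ← sub_eq_add_neg, zero_succAbove_sub_one]

end PathSum

section Trace

variable {k : Type u} [CommRing k] {A B C : Type u} [Ring A] [Algebra k A] [Ring B] [Algebra k B]
  [Ring C] [Algebra k C] {Λ Λ' : Type*}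

/-- The generalized trace: entry by entry evaluation of `m` as a matrix over `B` with rows and
columns in `T`, followed by the trace of the resulting product of matrices. -/
noncomputable def trace (m : Λ → Λ → A →ₗ[k] B) (T : Finset Λ) (n : ℕ) :
    CycChain k A n →ₗ[k] CycChain k B n :=
  pathSum m fun _ => T

lemma face_comp_trace {m : Λ → Λ → A →ₗ[k] B} {T : Finset Λ} (hm : IsMultiplicative m T) {n : ℕ}
    {l : ℕ} (hl : l ≤ n + 1) : face l ∘ₗ trace m T (n + 1) = trace m T n ∘ₗ face l :=
  face_comp_pathSum ⟨l, by omega⟩ hm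

lemma rotate_comp_trace (m : Λ → Λ → A →ₗ[k] B) (T : Finset Λ) {n : ℕ} (i : Fin (n + 1)) :
    rotate i ∘ₗ trace m T n = trace m T n ∘ₗ rotate i :=
  rotate_comp_pathSum m _ i

lemma trace_map (m : Λ' → Λ' → A →ₗ[k] B) (e : Λ ↪ Λ') (T : Finset Λ) (n : ℕ) :
    trace m (T.map e) n = trace (fun x y => m (e x) (e y)) T n := by
  classical
  have hinj : Function.Injective fun (x : Fin (n + 1) → Λ) l => e (x l) := e.injective.comp_left
  rw [trace, pathSum, Finset.map_eq_image, Fintype.piFinset_image fun _ => e,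
    Finset.sum_image hinj.injOn]
  rfl

lemma trace_singleton {m : Λ → Λ → A →ₗ[k] A} {o : Λ} (ho : m o o = LinearMap.id) (n : ℕ) :
    trace m {o} n = LinearMap.id := by
  simp [trace, pathSum, ho, PiTensorProduct.map_id]

lemma trace_comp_trace (m' : Λ' → Λ' → B →ₗ[k] C) (T' : Finset Λ') (m : Λ → Λ → A →ₗ[k] B)
    (T : Finset Λ) (n : ℕ) :
    trace m' T' n ∘ₗ trace m T n =
      trace (fun x y => m' x.2 y.2 ∘ₗ m x.1 y.1) (T ×ˢ T') n := by
  refine cycChain_hom_ext fun r => ?_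
  simp only [LinearMap.comp_apply, trace, pathSum_cgen, map_sum]
  rw [← Finset.sum_product']
  refine Finset.sum_equiv (Equiv.arrowProdEquivProdArrow _ _ _).symm (fun x => ?_) fun x _ => rfl
  simp [Equiv.arrowProdEquivProdArrow, forall_and]

end Trace

section AlternatingSum

lemma sum_range_eq_add_sum_Ico {M : Type*} [AddCommMonoid M] {n j : ℕ} (hj : j ≤ n)
    (f : ℕ → M) :
    ∑ i ∈ Finset.range (n + 2), f i =
      f j + f (j + 1) +
        (∑ i ∈ Finset.range j, f i + ∑ i ∈ Finset.Ico (j + 1) (n + 1), f (i + 1)) := by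
  rw [← Finset.sum_range_add_sum_Ico _ (show j + 2 ≤ n + 2 by omega), Finset.sum_range_succ,
    Finset.sum_range_succ, Finset.sum_Ico_add' f]
  abel

-- The terms off the two diagonals cancel against the second sum, and the diagonals telescope.
lemma sum_neg_one_pow_smul_telescope (R : Type*) {M : Type*} [Ring R] [AddCommGroup M]
    [Module R M] (n : ℕ) {a e : ℕ → ℕ → M} {g : ℕ → M}
    (hlt : ∀ i j, i ≤ j → j < n → a i (j + 1) = e i j)
    (hgt : ∀ i j, j < i → i ≤ n → a (i + 1) j = e i j)
    (hdiag : ∀ j ≤ n, a j j = g j) (hsub : ∀ j ≤ n, a (j + 1) j = g (j + 1)) :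
    ∑ i ∈ Finset.range (n + 2), ∑ j ∈ Finset.range (n + 1), (-1 : R) ^ (i + j) • a i j +
      ∑ j ∈ Finset.range n, ∑ i ∈ Finset.range (n + 1), (-1 : R) ^ (j + i) • e i j =
      g 0 - g (n + 1) := by
  set lower : ℕ → M := fun j => ∑ i ∈ Finset.range j, (-1 : R) ^ (i + j) • a i j
  set upper : ℕ → M := fun j =>
    ∑ i ∈ Finset.Ico (j + 1) (n + 1), (-1 : R) ^ (i + 1 + j) • a (i + 1) j
  have hcol : ∀ j ∈ Finset.range (n + 1), ∑ i ∈ Finset.range (n + 2), (-1 : R) ^ (i + j) • a i j =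
      (g j - g (j + 1)) + (lower j + upper j) := fun j hj => by
    have hjn : j ≤ n := Nat.lt_succ_iff.mp (Finset.mem_range.mp hj)
    rw [sum_range_eq_add_sum_Ico hjn, hdiag j hjn, hsub j hjn, Even.neg_one_pow ⟨j, rfl⟩,
      Odd.neg_one_pow ⟨j, by ring⟩, one_smul, neg_one_smul, ← sub_eq_add_neg]
  have hcancel : ∀ j ∈ Finset.range n, lower (j + 1) + upper j =
      -∑ i ∈ Finset.range (n + 1), (-1 : R) ^ (j + i) • e i j := fun j hj => by
    have hjn : j < n := Finset.mem_range.mp hj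
    rw [← Finset.sum_range_add_sum_Ico _ (show j + 1 ≤ n + 1 by omega), neg_add,
      ← Finset.sum_neg_distrib, ← Finset.sum_neg_distrib]
    refine congrArg₂ _ (Finset.sum_congr rfl fun i hi => ?_) (Finset.sum_congr rfl fun i hi => ?_)
    · rw [hlt i j (Nat.lt_succ_iff.mp (Finset.mem_range.mp hi)) hjn, ← add_assoc, pow_succ,
        mul_neg_one, neg_smul, add_comm]
    · rw [Finset.mem_Ico] at hi
      rw [hgt i j (by omega) (by omega), add_right_comm, pow_succ, mul_neg_one, neg_smul,
        add_comm i]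
  have hshift : ∑ j ∈ Finset.range (n + 1), (lower j + upper j) =
      ∑ j ∈ Finset.range n, (lower (j + 1) + upper j) := by
    rw [Finset.sum_add_distrib, Finset.sum_range_succ', Finset.sum_range_succ upper,
      Finset.sum_add_distrib]
    simp [lower, upper]
  rw [Finset.sum_comm, Finset.sum_congr rfl hcol, Finset.sum_add_distrib, hshift,
    Finset.sum_congr rfl hcancel, Finset.sum_range_sub', Finset.sum_neg_distrib,
    neg_add_cancel_right]

end AlternatingSum

section TraceHomotopy

variable {k : Type u} [CommRing k] {A B : Type u} [Ring A] [Algebra k A] [Ring B] [Algebra k B]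
  {Λ : Type*}

/-- The vertex sets that are `T` in positions `0, …, j - 1` and `F` from position `j` on. -/
def splitAt {n : ℕ} (T F : Finset Λ) (j : ℕ) (v : Fin (n + 1)) : Finset Λ :=
  if v.val < j then T else F

lemma splitAt_succAbove {n j : ℕ} (T F : Finset Λ) (l : Fin (n + 2)) :
    (fun v => splitAt T F j (l.succAbove v)) =
      splitAt T F (if l.val < j then j - 1 else j) := by
  funext v
  simp only [splitAt, Fin.succAbove, Fin.lt_def, Fin.val_castSucc, apply_ite Fin.val,
    Fin.val_succ]
  grind

lemma splitAt_zero {n : ℕ} (T F : Finset Λ) : splitAt (n := n) T F 0 = fun _ => F :=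
  funext fun _ => if_neg (Nat.not_lt_zero _)

lemma splitAt_succ {n : ℕ} (T F : Finset Λ) : splitAt (n := n) T F (n + 1) = fun _ => T :=
  funext fun v => if_pos v.isLt

/-- Insertion of a `1` in position `j + 1`, followed by the sum over the paths that run in `T`
before the inserted entry and in `F` after it. -/
noncomputable def splitTrace (m : Λ → Λ → A →ₗ[k] B) (T F : Finset Λ) (n j : ℕ) :
    CycChain k A n →ₗ[k] CycChain k B (n + 1) :=
  pathSum m (splitAt T F (j + 1)) ∘ₗ insertOne (j + 1)

variable {m : Λ → Λ → A →ₗ[k] B} {T F : Finset Λ}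

lemma face_comp_pathSum_splitAt (hT : IsMultiplicative m T) (hF : IsMultiplicative m F)
    {n l : ℕ} (hl : l ≤ n + 1) (j : ℕ) :
    face l ∘ₗ pathSum m (splitAt T F j) =
      pathSum m (splitAt T F (if l < j then j - 1 else j)) ∘ₗ face (n := n) l := by
  have hm : IsMultiplicative m (splitAt T F j (⟨l, by omega⟩ : Fin (n + 2))) := by
    rw [splitAt]
    split_ifs <;> assumption
  rw [face_comp_pathSum ⟨l, by omega⟩ hm, splitAt_succAbove]

lemma face_comp_splitTrace_of_le (hT : IsMultiplicative m T) (hF : IsMultiplicative m F)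
    {n i j : ℕ} (hij : i ≤ j) (hj : j ≤ n) :
    face i ∘ₗ splitTrace m T F (n + 1) (j + 1) = splitTrace m T F n j ∘ₗ face i := by
  rw [splitTrace, ← LinearMap.comp_assoc, face_comp_pathSum_splitAt hT hF (by omega),
    if_pos (by omega), LinearMap.comp_assoc, face_comp_insertOne_of_lt (by omega) (by omega)]
  rfl

lemma face_comp_splitTrace_of_lt (hT : IsMultiplicative m T) (hF : IsMultiplicative m F)
    {n i j : ℕ} (hij : j < i) (hi : i ≤ n + 1) :
    face (i + 1) ∘ₗ splitTrace m T F (n + 1) j = splitTrace m T F n j ∘ₗ face i := by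
  rw [splitTrace, ← LinearMap.comp_assoc, face_comp_pathSum_splitAt hT hF (by omega),
    if_neg (by omega), LinearMap.comp_assoc, face_comp_insertOne_of_gt hij hi]
  rfl

lemma face_comp_splitTrace_self (hT : IsMultiplicative m T) (hF : IsMultiplicative m F)
    {n j : ℕ} (hj : j ≤ n) :
    face j ∘ₗ splitTrace m T F n j = pathSum m (splitAt T F j) := by
  rw [splitTrace, ← LinearMap.comp_assoc, face_comp_pathSum_splitAt hT hF (by omega),
    if_pos (by omega), LinearMap.comp_assoc, face_comp_insertOne_self hj]
  rfl

lemma face_succ_comp_splitTrace_self (hT : IsMultiplicative m T) (hF : IsMultiplicative m F)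
    {n j : ℕ} (hj : j ≤ n) :
    face (j + 1) ∘ₗ splitTrace m T F n j = pathSum m (splitAt T F (j + 1)) := by
  rw [splitTrace, ← LinearMap.comp_assoc, face_comp_pathSum_splitAt hT hF (by omega),
    if_neg (by omega), LinearMap.comp_assoc, face_succ_comp_insertOne_self hj]
  rfl

end TraceHomotopy

section Columns

variable {k : Type u} [CommRing k] {A B : Type u} [Ring A] [Algebra k A] [Ring B] [Algebra k B]
  {Λ : Type*}

/-- The Hochschild differential `b`. -/
noncomputable def hochschild (n : ℕ) : CycChain k A (n + 1) →ₗ[k] CycChain k A n :=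
  ∑ l ∈ Finset.range (n + 2), (-1 : k) ^ (n + 1 + l) • face l

/-- The differential `b'` of the bar complex. -/
noncomputable def bar (n : ℕ) : CycChain k A (n + 1) →ₗ[k] CycChain k A n :=
  ∑ l ∈ Finset.range (n + 1), (-1 : k) ^ (n + l) • face (l + 1)

/-- The homotopy between the generalized traces over `F` and over `T`. -/
noncomputable def hochschildHomotopy (m : Λ → Λ → A →ₗ[k] B) (T F : Finset Λ) (n : ℕ) :
    CycChain k A n →ₗ[k] CycChain k B (n + 1) :=
  ∑ j ∈ Finset.range (n + 1), (-1 : k) ^ (n + 1 + j) • splitTrace m T F n j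

/-- The contraction of the bar complex, for the differential `-b'`. -/
noncomputable def barContraction (n : ℕ) : CycChain k A n →ₗ[k] CycChain k A (n + 1) :=
  (-1 : k) ^ (n + 1) • insertOne 1

lemma hochschild_comp_trace {m : Λ → Λ → A →ₗ[k] B} {T : Finset Λ} (hm : IsMultiplicative m T)
    (n : ℕ) : hochschild n ∘ₗ trace m T (n + 1) = trace m T n ∘ₗ hochschild n := by
  simp only [hochschild, sum_comp, comp_sum, LinearMap.smul_comp, LinearMap.comp_smul]
  refine Finset.sum_congr rfl fun l hl => ?_
  rw [face_comp_trace hm (by grind)]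

lemma bar_comp_trace {m : Λ → Λ → A →ₗ[k] B} {T : Finset Λ} (hm : IsMultiplicative m T)
    (n : ℕ) : bar n ∘ₗ trace m T (n + 1) = trace m T n ∘ₗ bar n := by
  simp only [bar, sum_comp, comp_sum, LinearMap.smul_comp, LinearMap.comp_smul]
  refine Finset.sum_congr rfl fun l hl => ?_
  rw [face_comp_trace hm (by grind)]

lemma comp_alternating_sum {M N P : Type*} [AddCommGroup M] [AddCommGroup N] [AddCommGroup P]
    [Module k M] [Module k N] [Module k P] (s t : Finset ℕ) (c : ℕ) (g : ℕ → N →ₗ[k] P)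
    (f : ℕ → M →ₗ[k] N) :
    (∑ i ∈ s, (-1 : k) ^ (c + i) • g i) ∘ₗ (∑ j ∈ t, (-1 : k) ^ (c + j) • f j) =
      ∑ i ∈ s, ∑ j ∈ t, (-1 : k) ^ (i + j) • g i ∘ₗ f j := by
  have hsign (i j : ℕ) : (-1 : k) ^ (c + i) * (-1) ^ (c + j) = (-1) ^ (i + j) := by
    rw [← pow_add, show c + i + (c + j) = 2 * c + (i + j) by ring, pow_add,
      (even_two_mul c).neg_one_pow, one_mul]
  simp only [sum_comp, LinearMap.smul_comp]
  refine Finset.sum_congr rfl fun i _ => ?_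
  rw [comp_sum, Finset.smul_sum]
  exact Finset.sum_congr rfl fun j _ => by rw [LinearMap.comp_smul, smul_smul, hsign]

lemma homotopyBoundary_hochschildHomotopy {m : Λ → Λ → A →ₗ[k] B} {T F : Finset Λ}
    (hT : IsMultiplicative m T) (hF : IsMultiplicative m F) (n : ℕ) :
    homotopyBoundary hochschild hochschild (hochschildHomotopy m T F) n =
      trace m F n - trace m T n := by
  rw [show trace m F n = pathSum m (splitAt T F 0) by rw [splitAt_zero, trace],
    show trace m T n = pathSum m (splitAt T F (n + 1)) by rw [splitAt_succ, trace]]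
  cases n with
  | zero =>
    rw [homotopyBoundary, hochschild, hochschildHomotopy, comp_alternating_sum]
    simpa using sum_neg_one_pow_smul_telescope k 0
      (a := fun i j => face i ∘ₗ splitTrace m T F 0 j) (e := fun _ _ => 0)
      (by grind) (by grind) (fun j hj => face_comp_splitTrace_self hT hF hj)
      fun j hj => face_succ_comp_splitTrace_self hT hF hj
  | succ n =>
    rw [homotopyBoundary, hochschild, hochschildHomotopy, comp_alternating_sum, hochschild,
      hochschildHomotopy, comp_alternating_sum]
    exact sum_neg_one_pow_smul_telescope k (n + 1)
      (a := fun i j => face i ∘ₗ splitTrace m T F (n + 1) j)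
      (e := fun i j => splitTrace m T F n j ∘ₗ face i)
      (g := fun j => pathSum m (splitAt T F j))
      (fun i j hij hj => face_comp_splitTrace_of_le hT hF hij (Nat.lt_succ_iff.mp hj))
      (fun i j hij hi => face_comp_splitTrace_of_lt hT hF hij hi)
      (fun j hj => face_comp_splitTrace_self hT hF hj)
      (fun j hj => face_succ_comp_splitTrace_self hT hF hj)

lemma bar_zero_comp_insertOne :
    bar 0 ∘ₗ insertOne 1 = (LinearMap.id : CycChain k A 0 →ₗ[k] CycChain k A 0) := by
  simp [bar, face_succ_comp_insertOne_self (k := k) (A := A) le_rfl]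

lemma bar_succ_comp_insertOne (n : ℕ) :
    bar (n + 1) ∘ₗ insertOne 1 =
      (-1 : k) ^ (n + 1) • LinearMap.id + insertOne 1 ∘ₗ bar (k := k) (A := A) n := by
  rw [bar, sum_comp, Finset.sum_range_succ', bar, comp_sum,
    add_comm (∑ _ ∈ _, _)]
  refine congrArg₂ _ ?_ (Finset.sum_congr rfl fun l hl => ?_)
  · rw [LinearMap.smul_comp, face_succ_comp_insertOne_self (Nat.zero_le _), add_zero]
  · have hface := face_comp_insertOne_of_gt (k := k) (A := A) (n := n) (Nat.succ_pos l)
      (by grind)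
    rw [LinearMap.smul_comp, LinearMap.comp_smul, hface, zero_add,
      show n + 1 + (l + 1) = n + l + 2 by ring, pow_add, neg_one_sq, mul_one]

lemma homotopyBoundary_barContraction (n : ℕ) :
    homotopyBoundary (fun n => -bar n) (fun n => -bar n) barContraction n =
      (LinearMap.id : CycChain k A n →ₗ[k] CycChain k A n) := by
  cases n with
  | zero =>
    have hzero : barContraction 0 = -insertOne (k := k) (A := A) 1 := by
      rw [barContraction]
      module
    rw [homotopyBoundary, hzero, LinearMap.neg_comp, LinearMap.comp_neg, neg_neg,
      bar_zero_comp_insertOne]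
  | succ n =>
    have hsign : (-1 : k) ^ (n + 2) * (-1) ^ (n + 1) = -1 := by
      rw [← pow_add, Odd.neg_one_pow ⟨n + 1, by ring⟩]
    simp only [homotopyBoundary, barContraction, LinearMap.comp_smul, LinearMap.smul_comp,
      LinearMap.neg_comp, LinearMap.comp_neg, bar_succ_comp_insertOne, smul_add, neg_add, smul_neg,
      smul_smul, hsign]
    rw [pow_succ (-1 : k) (n + 1)]
    module

lemma zsmul_neg_one_pow {n : ℕ} (i : ℕ) (x : CycChain k A n) :
    ((-1 : ℤ) ^ i) • x = (-1 : k) ^ i • x := by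
  rw [← Int.cast_smul_eq_zsmul k, Int.cast_pow, Int.cast_neg, Int.cast_one]

lemma hochschild_cgen {n : ℕ} (r : Fin (n + 2) → A) :
    hochschild n (cgen k r) =
      ∑ i : Fin (n + 2), ((-1 : ℤ) ^ i.val) • cgen k (faceTuple r i) := by
  rw [hochschild, Finset.sum_range, LinearMap.sum_apply]
  refine (Equiv.sum_comp Fin.revPerm _).symm.trans (Finset.sum_congr rfl fun i _ => ?_)
  have hsign : n + 1 + (i.rev : ℕ) = 2 * i.rev + i := by
    rw [Fin.val_rev]
    omega
  rw [LinearMap.smul_apply, Fin.revPerm_apply, face_cgen, Fin.rev_rev, zsmul_neg_one_pow, hsign,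
    pow_add, (even_two_mul _).neg_one_pow, one_mul]

lemma bar_cgen {n : ℕ} (r : Fin (n + 2) → A) :
    bar n (cgen k r) =
      ∑ i : Fin (n + 1), ((-1 : ℤ) ^ i.val) • cgen k (faceTuple r i.castSucc) := by
  rw [bar, Finset.sum_range, LinearMap.sum_apply]
  refine (Equiv.sum_comp Fin.revPerm _).symm.trans (Finset.sum_congr rfl fun i _ => ?_)
  have hsign : n + (i.rev : ℕ) = 2 * i.rev + i := by
    rw [Fin.val_rev]
    omega
  rw [LinearMap.smul_apply, Fin.revPerm_apply, ← Fin.val_succ, ← Fin.rev_castSucc, face_cgen,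
    Fin.rev_rev, zsmul_neg_one_pow, hsign, pow_add, (even_two_mul _).neg_one_pow, one_mul]

/-- The vertical differential of the `p`-th column of Tsygan's bicomplex. -/
noncomputable def vertical (p n : ℕ) : CycChain k A (n + 1) →ₗ[k] CycChain k A n :=
  if Even p then hochschild n else -bar n

/-- The horizontal differential out of the `p`-th column of Tsygan's bicomplex, for `p ≥ 1`. -/
noncomputable def horizontal (p n : ℕ) : CycChain k A n →ₗ[k] CycChain k A n :=
  if Even p then ∑ i : Fin (n + 1), (-1 : k) ^ (n * i) • rotate i
  else LinearMap.id - (-1 : k) ^ n • rotate 1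

lemma vertical_cgen (p : ℕ) {n : ℕ} (r : Fin (n + 2) → A) :
    vertical p n (cgen k r) =
      if Even p then ∑ i : Fin (n + 2), ((-1 : ℤ) ^ i.val) • cgen k (faceTuple r i)
      else -∑ i : Fin (n + 1), ((-1 : ℤ) ^ i.val) • cgen k (faceTuple r i.castSucc) := by
  rw [vertical]
  split_ifs
  · exact hochschild_cgen r
  · rw [LinearMap.neg_apply, bar_cgen]

lemma horizontal_cgen (p : ℕ) {n : ℕ} (r : Fin (n + 1) → A) :
    horizontal p n (cgen k r) =
      if Even p then ∑ i : Fin (n + 1), ((-1 : ℤ) ^ (n * i.val)) • cgen k fun l => r (l + i)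
      else cgen k r - ((-1 : ℤ) ^ n) • cgen k fun l => r (l + 1) := by
  rw [horizontal]
  split_ifs
  · simp only [LinearMap.sum_apply, LinearMap.smul_apply, rotate_cgen, zsmul_neg_one_pow]
  · simp only [LinearMap.sub_apply, LinearMap.id_apply, LinearMap.smul_apply, rotate_cgen,
      zsmul_neg_one_pow]

lemma vertical_comp_trace {m : Λ → Λ → A →ₗ[k] B} {T : Finset Λ} (hm : IsMultiplicative m T)
    (p n : ℕ) : vertical p n ∘ₗ trace m T (n + 1) = trace m T n ∘ₗ vertical p n := by
  simp only [vertical]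
  split_ifs
  · exact hochschild_comp_trace hm n
  · rw [LinearMap.neg_comp, LinearMap.comp_neg, bar_comp_trace hm]

lemma horizontal_comp_trace (m : Λ → Λ → A →ₗ[k] B) (T : Finset Λ) (p n : ℕ) :
    horizontal p n ∘ₗ trace m T n = trace m T n ∘ₗ horizontal p n := by
  simp only [horizontal]
  split_ifs
  · simp only [sum_comp, comp_sum, LinearMap.smul_comp, LinearMap.comp_smul, rotate_comp_trace]
  · rw [LinearMap.sub_comp, LinearMap.comp_sub, LinearMap.smul_comp, LinearMap.comp_smul,
      rotate_comp_trace, LinearMap.id_comp, LinearMap.comp_id]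

/-- The homotopy between the generalized traces over `F` and over `T` on the `p`-th column. -/
noncomputable def columnHomotopy (m : Λ → Λ → A →ₗ[k] B) (T F : Finset Λ) (p n : ℕ) :
    CycChain k A n →ₗ[k] CycChain k B (n + 1) :=
  if Even p then hochschildHomotopy m T F n
  else barContraction n ∘ₗ (trace m F n - trace m T n)

lemma homotopyBoundary_columnHomotopy {m : Λ → Λ → A →ₗ[k] B} {T F : Finset Λ}
    (hT : IsMultiplicative m T) (hF : IsMultiplicative m F) (p n : ℕ) :
    homotopyBoundary (vertical p) (vertical p) (columnHomotopy m T F p) n =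
      trace m F n - trace m T n := by
  by_cases hp : Even p
  · have hvertical (C : Type u) [Ring C] [Algebra k C] :
        vertical (k := k) (A := C) p = hochschild := funext fun n => if_pos hp
    rw [hvertical, hvertical, ← homotopyBoundary_hochschildHomotopy hT hF]
    exact congrArg (homotopyBoundary _ _ · n) (funext fun n => if_pos hp)
  · have hvertical (C : Type u) [Ring C] [Algebra k C] :
        vertical (k := k) (A := C) p = fun n => -bar n := funext fun n => if_neg hp
    have hhomotopy : columnHomotopy m T F p =
        fun n => barContraction n ∘ₗ (trace m F n - trace m T n) := funext fun n => if_neg hp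
    rw [hvertical, hvertical, hhomotopy, homotopyBoundary_comp (D' := fun n => -bar n),
      homotopyBoundary_barContraction, LinearMap.id_comp]
    intro n
    rw [LinearMap.neg_comp, LinearMap.comp_neg, LinearMap.comp_sub, LinearMap.sub_comp,
      bar_comp_trace hT, bar_comp_trace hF]

end Columns

section TotalComplex

variable {k : Type u} [CommRing k] {A B : Type u} [Ring A] [Algebra k A] [Ring B] [Algebra k B]
  {M : Type*} [AddCommGroup M] [Module k M] {Λ : Type*} {n p q : ℕ}

/-- The inclusion of the summand of bidegree `(p, q)` into the total complex. -/
noncomputable def incl (h : p + q = n) : CycChain k A q →ₗ[k] TotC k A n :=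
  DirectSum.lof k (Fin (n + 1)) (fun p => CycChain k A (n - p.val)) ⟨p, by omega⟩ ∘ₗ
    (PiTensorProduct.reindex k (fun _ => A)
      (finCongr (show q + 1 = n - p + 1 by omega))).toLinearMap

/-- The map out of the total complex with the given components. -/
noncomputable def totalDesc (g : ∀ p q, p + q = n → (CycChain k A q →ₗ[k] M)) :
    TotC k A n →ₗ[k] M :=
  DirectSum.toModule k _ M fun p => g p (n - p) (by omega)

lemma incl_cgen (h : p + q = n) (r : Fin (q + 1) → A) :
    incl (k := k) (A := A) h (cgen k r) =
      DirectSum.lof k (Fin (n + 1)) (fun p => CycChain k A (n - p.val)) ⟨p, by omega⟩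
        (cgen k fun t => r (Fin.cast (show n - p + 1 = q + 1 by omega) t)) :=
  congrArg (DirectSum.lof k (Fin (n + 1)) (fun p => CycChain k A (n - p.val)) ⟨p, by omega⟩)
    (PiTensorProduct.reindex_tprod _ r)

lemma incl_eq_lof (h : p + (n - p) = n) :
    incl h =
      DirectSum.lof k (Fin (n + 1)) (fun p => CycChain k A (n - p.val)) ⟨p, by omega⟩ :=
  cycChain_hom_ext fun r => incl_cgen h r

lemma tot_hom_ext {f g : TotC k A n →ₗ[k] M}
    (hfg : ∀ p q (h : p + q = n), f ∘ₗ incl h = g ∘ₗ incl h) : f = g := by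
  refine DirectSum.linearMap_ext k fun p => ?_
  have hp := hfg p (n - p) (by omega)
  rwa [incl_eq_lof] at hp

lemma totalDesc_comp_incl (g : ∀ p q, p + q = n → (CycChain k A q →ₗ[k] M)) (h : p + q = n) :
    totalDesc g ∘ₗ incl h = g p q h := by
  obtain rfl : q = n - p := by omega
  refine LinearMap.ext fun x => ?_
  rw [LinearMap.comp_apply, incl_eq_lof, totalDesc, DirectSum.toModule_lof]

/-- The vertical part of the total differential. -/
noncomputable def verticalTotal (n : ℕ) : TotC k A (n + 1) →ₗ[k] TotC k A n :=
  totalDesc fun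
    | _, 0, _ => 0
    | p, q + 1, h => incl (Nat.succ.inj h) ∘ₗ vertical p q

/-- The horizontal part of the total differential. -/
noncomputable def horizontalTotal (n : ℕ) : TotC k A (n + 1) →ₗ[k] TotC k A n :=
  totalDesc fun
    | 0, _, _ => 0
    | p + 1, q, h => incl (p := p) (by omega) ∘ₗ horizontal (p + 1) q

/-- The generalized trace on the total complexes. -/
noncomputable def totalTrace (m : Λ → Λ → A →ₗ[k] B) (T : Finset Λ) (n : ℕ) :
    TotC k A n →ₗ[k] TotC k B n :=
  totalDesc fun _ q h => incl h ∘ₗ trace m T q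

/-- The column homotopies between generalized traces, taken together; they are homotopies for the
vertical differentials only. -/
noncomputable def totalHomotopy (m : Λ → Λ → A →ₗ[k] B) (T F : Finset Λ) (n : ℕ) :
    TotC k A n →ₗ[k] TotC k B (n + 1) :=
  totalDesc fun p q h => incl (p := p) (by omega) ∘ₗ columnHomotopy m T F p q

lemma verticalTotal_comp_incl_zero (h : n + 1 + 0 = n + 1) :
    verticalTotal n ∘ₗ incl (k := k) (A := A) h = 0 :=
  totalDesc_comp_incl _ h

lemma verticalTotal_comp_incl_succ (h : p + (q + 1) = n + 1) :
    verticalTotal n ∘ₗ incl (k := k) (A := A) h = incl (Nat.succ.inj h) ∘ₗ vertical p q :=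
  totalDesc_comp_incl _ h

lemma horizontalTotal_comp_incl_zero (h : 0 + q = n + 1) :
    horizontalTotal n ∘ₗ incl (k := k) (A := A) h = 0 :=
  totalDesc_comp_incl _ h

lemma horizontalTotal_comp_incl_succ (h : p + 1 + q = n + 1) :
    horizontalTotal n ∘ₗ incl (k := k) (A := A) h =
      incl (p := p) (by omega) ∘ₗ horizontal (p + 1) q :=
  totalDesc_comp_incl _ h

lemma totalTrace_comp_incl (m : Λ → Λ → A →ₗ[k] B) (T : Finset Λ) (h : p + q = n) :
    totalTrace m T n ∘ₗ incl h = incl h ∘ₗ trace m T q :=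
  totalDesc_comp_incl _ h

lemma totalHomotopy_comp_incl (m : Λ → Λ → A →ₗ[k] B) (T F : Finset Λ) (h : p + q = n) :
    totalHomotopy m T F n ∘ₗ incl h =
      incl (p := p) (by omega) ∘ₗ columnHomotopy m T F p q :=
  totalDesc_comp_incl _ h

lemma verticalTotal_comp_totalTrace {m : Λ → Λ → A →ₗ[k] B} {T : Finset Λ}
    (hm : IsMultiplicative m T) (n : ℕ) :
    verticalTotal n ∘ₗ totalTrace m T (n + 1) = totalTrace m T n ∘ₗ verticalTotal n := by
  refine tot_hom_ext fun p q h => ?_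
  rw [LinearMap.comp_assoc, LinearMap.comp_assoc, totalTrace_comp_incl, ← LinearMap.comp_assoc]
  cases q with
  | zero =>
    obtain rfl : p = n + 1 := h
    rw [verticalTotal_comp_incl_zero, verticalTotal_comp_incl_zero, LinearMap.zero_comp,
      LinearMap.comp_zero]
  | succ q =>
    rw [verticalTotal_comp_incl_succ, verticalTotal_comp_incl_succ, LinearMap.comp_assoc,
      vertical_comp_trace hm, ← LinearMap.comp_assoc, ← LinearMap.comp_assoc,
      totalTrace_comp_incl]

lemma horizontalTotal_comp_totalTrace (m : Λ → Λ → A →ₗ[k] B) (T : Finset Λ) (n : ℕ) :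
    horizontalTotal n ∘ₗ totalTrace m T (n + 1) = totalTrace m T n ∘ₗ horizontalTotal n := by
  refine tot_hom_ext fun p q h => ?_
  rw [LinearMap.comp_assoc, LinearMap.comp_assoc, totalTrace_comp_incl, ← LinearMap.comp_assoc]
  cases p with
  | zero =>
    rw [horizontalTotal_comp_incl_zero, horizontalTotal_comp_incl_zero, LinearMap.zero_comp,
      LinearMap.comp_zero]
  | succ p =>
    rw [horizontalTotal_comp_incl_succ, horizontalTotal_comp_incl_succ, LinearMap.comp_assoc,
      horizontal_comp_trace, ← LinearMap.comp_assoc, ← LinearMap.comp_assoc,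
      totalTrace_comp_incl]

lemma homotopyBoundary_verticalTotal_comp_incl (m : Λ → Λ → A →ₗ[k] B) (T F : Finset Λ)
    (h : p + q = n) :
    homotopyBoundary verticalTotal verticalTotal (totalHomotopy m T F) n ∘ₗ incl h =
      incl h ∘ₗ homotopyBoundary (vertical p) (vertical p) (columnHomotopy m T F p) q := by
  have houter : verticalTotal n ∘ₗ totalHomotopy m T F n ∘ₗ incl h =
      incl h ∘ₗ vertical p q ∘ₗ columnHomotopy m T F p q := by
    rw [totalHomotopy_comp_incl, ← LinearMap.comp_assoc, verticalTotal_comp_incl_succ,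
      LinearMap.comp_assoc]
  cases n with
  | zero =>
    obtain rfl : q = 0 := by omega
    exact houter
  | succ n =>
    rw [homotopyBoundary, LinearMap.add_comp, LinearMap.comp_assoc, LinearMap.comp_assoc, houter]
    cases q with
    | zero =>
      obtain rfl : p = n + 1 := h
      rw [verticalTotal_comp_incl_zero, LinearMap.comp_zero, add_zero, homotopyBoundary]
    | succ q =>
      rw [verticalTotal_comp_incl_succ, ← LinearMap.comp_assoc (vertical p q),
        totalHomotopy_comp_incl, homotopyBoundary, LinearMap.comp_add, LinearMap.comp_assoc]

lemma homotopyBoundary_verticalTotal {m : Λ → Λ → A →ₗ[k] B} {T F : Finset Λ}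
    (hT : IsMultiplicative m T) (hF : IsMultiplicative m F) (n : ℕ) :
    homotopyBoundary verticalTotal verticalTotal (totalHomotopy m T F) n =
      totalTrace m F n - totalTrace m T n := by
  refine tot_hom_ext fun p q h => ?_
  rw [homotopyBoundary_verticalTotal_comp_incl, homotopyBoundary_columnHomotopy hT hF,
    LinearMap.comp_sub, LinearMap.sub_comp, totalTrace_comp_incl, totalTrace_comp_incl]

lemma homotopyBoundary_horizontalTotal_comp_incl_zero (m : Λ → Λ → A →ₗ[k] B)
    (T F : Finset Λ) (h : 0 + q = n) :
    homotopyBoundary horizontalTotal horizontalTotal (totalHomotopy m T F) n ∘ₗ incl h = 0 := by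
  have houter : horizontalTotal n ∘ₗ totalHomotopy m T F n ∘ₗ incl h = 0 := by
    rw [totalHomotopy_comp_incl, ← LinearMap.comp_assoc, horizontalTotal_comp_incl_zero,
      LinearMap.zero_comp]
  cases n with
  | zero => exact houter
  | succ n =>
    rw [homotopyBoundary, LinearMap.add_comp, LinearMap.comp_assoc, LinearMap.comp_assoc, houter,
      horizontalTotal_comp_incl_zero, LinearMap.comp_zero, add_zero]

lemma homotopyBoundary_horizontalTotal_comp_incl_succ (m : Λ → Λ → A →ₗ[k] B)
    (T F : Finset Λ) (h : p + 1 + q = n) :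
    homotopyBoundary horizontalTotal horizontalTotal (totalHomotopy m T F) n ∘ₗ incl h =
      incl (p := p) (q := q + 1) (by omega) ∘ₗ
        (horizontal (p + 1) (q + 1) ∘ₗ columnHomotopy m T F (p + 1) q +
          columnHomotopy m T F p q ∘ₗ horizontal (p + 1) q) := by
  obtain ⟨n, rfl⟩ : ∃ n', n = n' + 1 := ⟨p + q, by omega⟩
  rw [homotopyBoundary, LinearMap.add_comp, LinearMap.comp_assoc, LinearMap.comp_assoc,
    totalHomotopy_comp_incl, horizontalTotal_comp_incl_succ, ← LinearMap.comp_assoc,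
    ← LinearMap.comp_assoc, totalHomotopy_comp_incl, horizontalTotal_comp_incl_succ,
    LinearMap.comp_add, LinearMap.comp_assoc, LinearMap.comp_assoc]

end TotalComplex

section TsyganComplex

variable {k : Type u} [CommRing k] {A B : Type u} [Ring A] [Algebra k A] [Ring B] [Algebra k B]
  {Λ : Type*}

/-- `D` is the total differential of Tsygan's bicomplex of `A`: its value on the generators of the
summand in column `p` is the sum of the vertical and the horizontal differential. -/
def IsTsyganDifferential (D : ∀ n, TotC k A (n + 1) →ₗ[k] TotC k A n) : Prop :=
  ∀ (n p : ℕ) (hp : p < n + 2) (r : Fin ((n + 1) - p + 1) → A),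
    D n (DirectSum.lof k (Fin (n + 2)) (fun p' => CycChain k A ((n + 1) - p'.val)) ⟨p, hp⟩
        (cgen k r)) =
      (if h : p ≤ n then
        DirectSum.lof k (Fin (n + 1)) (fun p' => CycChain k A (n - p'.val))
          ⟨p, by omega⟩
          (if Even p then
            ∑ i : Fin ((n - p) + 2), ((-1 : ℤ) ^ i.val) •
              cgen k (faceTuple (fun t => r (Fin.cast (by omega) t)) i)
          else
            -∑ i : Fin ((n - p) + 1), ((-1 : ℤ) ^ i.val) •
              cgen k (faceTuple (fun t => r (Fin.cast (by omega) t)) i.castSucc))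
      else 0)
      +
      (if h2 : 1 ≤ p then
        DirectSum.lof k (Fin (n + 1)) (fun p' => CycChain k A (n - p'.val))
          ⟨p - 1, by omega⟩
          (if Even p then
            ∑ i : Fin ((n - (p - 1)) + 1), ((-1 : ℤ) ^ ((n - (p - 1)) * i.val)) •
              cgen (n := n - (p - 1)) k (fun l => r (Fin.cast (by omega) (l + i)))
          else
            cgen (n := n - (p - 1)) k (fun t => r (Fin.cast (by omega) t))
              - ((-1 : ℤ) ^ (n - (p - 1))) •
                cgen (n := n - (p - 1)) k (fun l => r (Fin.cast (by omega) (l + 1))))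
      else 0)

lemma IsTsyganDifferential.eq_add {D : ∀ n, TotC k A (n + 1) →ₗ[k] TotC k A n}
    (hD : IsTsyganDifferential D) : D = fun n => verticalTotal n + horizontalTotal n := by
  refine funext fun n => tot_hom_ext fun p q h => cycChain_hom_ext fun r => ?_
  rw [LinearMap.comp_apply, incl_cgen, hD, LinearMap.comp_apply, LinearMap.add_apply]
  refine congrArg₂ _ ?_ ?_
  · rcases q with _ | q
    · obtain rfl : p = n + 1 := by omega
      rw [dif_neg (show ¬ n + 1 ≤ n by omega)]
      exact (LinearMap.congr_fun (verticalTotal_comp_incl_zero h) (cgen k r)).symm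
    · rw [dif_pos (show p ≤ n by omega)]
      refine Eq.trans ?_ (LinearMap.congr_fun (verticalTotal_comp_incl_succ h) (cgen k r)).symm
      obtain rfl : q = n - p := by omega
      rw [LinearMap.comp_apply, vertical_cgen, incl_eq_lof]
      rfl
  · rcases p with _ | p
    · rw [dif_neg (show ¬ 1 ≤ 0 by omega)]
      exact (LinearMap.congr_fun (horizontalTotal_comp_incl_zero h) (cgen k r)).symm
    · rw [dif_pos (show 1 ≤ p + 1 by omega)]
      refine Eq.trans ?_ (LinearMap.congr_fun (horizontalTotal_comp_incl_succ h) (cgen k r)).symm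
      obtain rfl : q = n - p := by omega
      rw [LinearMap.comp_apply, horizontal_cgen, incl_eq_lof]
      rfl

lemma totalDifferential_comp_totalTrace {DA : ∀ n, TotC k A (n + 1) →ₗ[k] TotC k A n}
    {DB : ∀ n, TotC k B (n + 1) →ₗ[k] TotC k B n} (hDA : IsTsyganDifferential DA)
    (hDB : IsTsyganDifferential DB) {m : Λ → Λ → A →ₗ[k] B} {T : Finset Λ}
    (hm : IsMultiplicative m T) (n : ℕ) :
    DB n ∘ₗ totalTrace m T (n + 1) = totalTrace m T n ∘ₗ DA n := by
  rw [hDA.eq_add, hDB.eq_add, LinearMap.add_comp,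
    LinearMap.comp_add, verticalTotal_comp_totalTrace hm, horizontalTotal_comp_totalTrace]

lemma isNilpotent_of_lowers_column {n : ℕ} {E : Module.End k (TotC k A n)}
    (hzero : ∀ q (h : 0 + q = n), E ∘ₗ incl h = 0)
    (hsucc : ∀ p q (h : p + 1 + q = n), ∃ f, E ∘ₗ incl h = incl (p := p) (q := q + 1)
      (by omega) ∘ₗ f) : IsNilpotent E := by
  have hpow : ∀ p q (h : p + q = n), (E ^ (p + 1)) ∘ₗ incl h = 0 := fun p => by
    induction p with
    | zero => simpa using hzero
    | succ p ih =>
      intro q h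
      obtain ⟨f, hf⟩ := hsucc p q h
      rw [pow_succ, Module.End.mul_eq_comp, LinearMap.comp_assoc, hf, ← LinearMap.comp_assoc, ih,
        LinearMap.zero_comp]
  refine ⟨n + 1, tot_hom_ext fun p q h => ?_⟩
  have hE : E ^ (n + 1) = E ^ q * E ^ (p + 1) := by
    rw [← pow_add, show q + (p + 1) = n + 1 by omega]
  rw [hE, Module.End.mul_eq_comp, LinearMap.comp_assoc, hpow, LinearMap.comp_zero,
    LinearMap.zero_comp]

theorem inducedMap_totalTrace_bijective {D : ∀ n, TotC k A (n + 1) →ₗ[k] TotC k A n}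
    (hD : IsTsyganDifferential D) (hsq : ∀ n, D n ∘ₗ D (n + 1) = 0) {m : Λ → Λ → A →ₗ[k] A}
    {T F : Finset Λ} (hT : IsMultiplicative m T) (hF : IsMultiplicative m F)
    (hid : ∀ n, trace m F n = LinearMap.id) (n : ℕ) :
    Function.Bijective (inducedMap D hsq D hsq (totalTrace m T)
      (totalDifferential_comp_totalTrace hD hD hT) n) := by
  refine inducedMap_bijective_of_isNilpotent hsq _ (totalHomotopy m T F) ?_
  have htotal : totalTrace m F n = 1 := tot_hom_ext fun p q h => by
    rw [totalTrace_comp_incl, hid]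
    rfl
  have hboundary : 1 - totalTrace m T n - homotopyBoundary D D (totalHomotopy m T F) n =
      -homotopyBoundary horizontalTotal horizontalTotal (totalHomotopy m T F) n := by
    rw [hD.eq_add, homotopyBoundary_add, homotopyBoundary_verticalTotal hT hF, htotal]
    abel
  rw [hboundary]
  exact IsNilpotent.neg (R := Module.End k (TotC k A n)) <| isNilpotent_of_lowers_column
    (fun _ h => homotopyBoundary_horizontalTotal_comp_incl_zero m T F h)
    fun _ _ h => ⟨_, homotopyBoundary_horizontalTotal_comp_incl_succ m T F h⟩

lemma totalTrace_comp_totalTrace {C : Type u} [Ring C] [Algebra k C] {Λ' : Type*}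
    (m' : Λ' → Λ' → B →ₗ[k] C) (T' : Finset Λ') (m : Λ → Λ → A →ₗ[k] B) (T : Finset Λ) (n : ℕ) :
    totalTrace m' T' n ∘ₗ totalTrace m T n =
      totalTrace (fun x y => m' x.2 y.2 ∘ₗ m x.1 y.1) (T ×ˢ T') n := by
  refine tot_hom_ext fun p q h => ?_
  rw [LinearMap.comp_assoc, totalTrace_comp_incl, ← LinearMap.comp_assoc, totalTrace_comp_incl,
    LinearMap.comp_assoc, trace_comp_trace, totalTrace_comp_incl]

end TsyganComplex

section Sandwich

variable {k : Type u} [CommRing k] {A : Type u} [Ring A] [Algebra k A] {Λ : Type*}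

/-- The entries `a ↦ v x * a * u y` of the product of the column `v`, the scalar `a` and the
row `u`. -/
noncomputable def sandwich (v u : Λ → A) (x y : Λ) : A →ₗ[k] A :=
  LinearMap.mulLeft k (v x) ∘ₗ LinearMap.mulRight k (u y)

lemma isMultiplicative_sandwich {v u : Λ → A} {T : Finset Λ} (huv : ∑ x ∈ T, u x * v x = 1) :
    IsMultiplicative (sandwich (k := k) v u) T := fun y z a b => calc
  _ = ∑ x ∈ T, v y * (a * (u x * v x * (b * u z))) :=
    Finset.sum_congr rfl fun x _ => by
      simp only [sandwich, LinearMap.comp_apply, LinearMap.mulLeft_apply,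
        LinearMap.mulRight_apply, mul_assoc]
  _ = v y * (a * ((∑ x ∈ T, u x * v x) * (b * u z))) := by
    simp only [Finset.sum_mul, Finset.mul_sum]
  _ = _ := by
    simp only [huv, one_mul, sandwich, LinearMap.comp_apply, LinearMap.mulLeft_apply,
      LinearMap.mulRight_apply, mul_assoc]

-- Adjoining an index with `v = u = 1` puts the sandwich and the identity into one matrix.
theorem inducedMap_totalTrace_sandwich_bijective {D : ∀ n, TotC k A (n + 1) →ₗ[k] TotC k A n}
    (hD : IsTsyganDifferential D) (hsq : ∀ n, D n ∘ₗ D (n + 1) = 0) {v u : Λ → A} {T : Finset Λ}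
    (huv : ∑ x ∈ T, u x * v x = 1) (n : ℕ) :
    Function.Bijective (inducedMap D hsq D hsq (totalTrace (sandwich v u) T)
      (totalDifferential_comp_totalTrace hD hD (isMultiplicative_sandwich huv)) n) := by
  let v' : Option Λ → A := fun x => x.elim 1 v
  let u' : Option Λ → A := fun x => x.elim 1 u
  have hsome : totalTrace (k := k) (sandwich v' u') (T.map .some) = totalTrace (sandwich v u) T :=
    funext fun n => tot_hom_ext fun p q h => by
      rw [totalTrace_comp_incl, totalTrace_comp_incl, trace_map]
      rfl
  have hnone : sandwich (k := k) v' u' none none = LinearMap.id := LinearMap.ext fun a => by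
    simp [sandwich, v', u']
  simp only [← hsome]
  exact inducedMap_totalTrace_bijective hD hsq
    (isMultiplicative_sandwich (by simpa [v', u'] using huv))
    (isMultiplicative_sandwich (by simp [v', u'])) (trace_singleton hnone) n

end Sandwich

section Morita

variable {k R S P Q : Type u} [CommRing k] [Ring R] [Ring S] [Algebra k R] [Algebra k S]
  [AddCommGroup P] [Module k P] [Module S P] [Module Rᵐᵒᵖ P]
  [SMulCommClass S Rᵐᵒᵖ P] [IsScalarTower k S P] [IsScalarTower k Rᵐᵒᵖ P]
  [AddCommGroup Q] [Module k Q] [Module R Q] [Module Sᵐᵒᵖ Q]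
  [SMulCommClass R Sᵐᵒᵖ Q] [IsScalarTower k R Q] [IsScalarTower k Sᵐᵒᵖ Q]

/-- The Morita context with the roles of `R` and `S` exchanged. -/
def moritaSymm (c : MoritaContext k R S P Q) : MoritaContext k S R Q P where
  φ := c.ψ
  ψ := c.φ
  φ_ker := c.ψ_ker
  φ_surj := c.ψ_surj
  ψ_ker := c.φ_ker
  ψ_surj := c.φ_surj
  φ_left := c.ψ_left
  φ_right := c.ψ_right
  ψ_left := c.φ_left
  ψ_right := c.φ_right
  assoc_φψ := c.assoc_ψφ
  assoc_ψφ := c.assoc_φψ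

/-- The entries `r ↦ φ(p · r ⊗ q')` of the matrix over `S` representing `r ∈ R`, where the rows
and columns are indexed by pairs `x = (q, p)` and `y = (q', p')`. -/
noncomputable def moritaEntry (c : MoritaContext k R S P Q) (x y : Q × P) : R →ₗ[k] S :=
  c.φ.flip y.1 ∘ₗ (LinearMap.toSpanSingleton Rᵐᵒᵖ P x.2).restrictScalars k ∘ₗ
    (opLinearEquiv k).toLinearMap

lemma exists_sum_ψ_eq_one (c : MoritaContext k R S P Q) :
    ∃ T : Finset (Q × P), ∑ x ∈ T, c.ψ x.1 x.2 = 1 := by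
  obtain ⟨t, ht⟩ := c.ψ_surj 1
  obtain ⟨T, rfl⟩ := TensorProduct.exists_finset t
  exact ⟨T, by simpa using ht⟩

lemma moritaEntry_apply (c : MoritaContext k R S P Q) (x y : Q × P) (r : R) :
    moritaEntry c x y r = c.φ (op r • x.2) y.1 :=
  rfl

lemma isMultiplicative_moritaEntry (c : MoritaContext k R S P Q) {T : Finset (Q × P)}
    (hT : ∑ x ∈ T, c.ψ x.1 x.2 = 1) : IsMultiplicative (moritaEntry c) T := fun y z a b => calc
  _ = ∑ x ∈ T, moritaEntry c y z (a * c.ψ x.1 x.2 * b) :=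
    Finset.sum_congr rfl fun x _ => by
      simp only [moritaEntry_apply, ← c.φ_left, c.assoc_φψ, c.ψ_right, op_mul, mul_smul]
  _ = moritaEntry c y z (a * (∑ x ∈ T, c.ψ x.1 x.2) * b) := by
    rw [Finset.mul_sum, Finset.sum_mul, map_sum]
  _ = _ := by rw [hT, mul_one]

lemma moritaEntry_symm_comp_moritaEntry (c : MoritaContext k R S P Q) (x y : (Q × P) × (P × Q)) :
    moritaEntry (moritaSymm c) x.2 y.2 ∘ₗ moritaEntry c x.1 y.1 =
      sandwich (fun x : (Q × P) × (P × Q) => c.ψ x.2.2 x.1.2)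
        (fun x => c.ψ x.1.1 x.2.1) x y := by
  refine LinearMap.ext fun r => ?_
  change c.ψ (op (c.φ (op r • x.1.2) y.1.1) • x.2.2) y.2.1 =
    c.ψ x.2.2 x.1.2 * (r * c.ψ y.1.1 y.2.1)
  rw [← c.assoc_ψφ, c.ψ_left, c.ψ_right, mul_assoc]

lemma sum_ψ_mul_ψ_eq_one (c : MoritaContext k R S P Q) {T : Finset (Q × P)}
    (hT : ∑ x ∈ T, c.ψ x.1 x.2 = 1) {T' : Finset (P × Q)} (hT' : ∑ x ∈ T', c.φ x.1 x.2 = 1) :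
    ∑ x ∈ T ×ˢ T', c.ψ x.1.1 x.2.1 * c.ψ x.2.2 x.1.2 = 1 := by
  rw [Finset.sum_product, ← hT]
  refine Finset.sum_congr rfl fun x _ => ?_
  calc ∑ y ∈ T', c.ψ x.1 y.1 * c.ψ y.2 x.2
      = ∑ y ∈ T', c.ψ x.1 (c.φ y.1 y.2 • x.2) :=
        Finset.sum_congr rfl fun y _ => by rw [c.assoc_φψ, c.ψ_right]
    _ = c.ψ x.1 ((∑ y ∈ T', c.φ y.1 y.2) • x.2) := by rw [Finset.sum_smul, map_sum]
    _ = c.ψ x.1 x.2 := by rw [hT', one_smul]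

theorem inducedMap_moritaEntry_symm_comp_bijective (c : MoritaContext k R S P Q)
    {DR : ∀ n, TotC k R (n + 1) →ₗ[k] TotC k R n} {DS : ∀ n, TotC k S (n + 1) →ₗ[k] TotC k S n}
    (hDR : IsTsyganDifferential DR) (hDS : IsTsyganDifferential DS)
    (hR : ∀ n, DR n ∘ₗ DR (n + 1) = 0) (hS : ∀ n, DS n ∘ₗ DS (n + 1) = 0)
    {T : Finset (Q × P)} (hT : ∑ x ∈ T, c.ψ x.1 x.2 = 1)
    {T' : Finset (P × Q)} (hT' : ∑ x ∈ T', c.φ x.1 x.2 = 1) (n : ℕ) :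
    Function.Bijective
      (inducedMap DS hS DR hR (totalTrace (moritaEntry (moritaSymm c)) T')
          (totalDifferential_comp_totalTrace hDS hDR
            (isMultiplicative_moritaEntry (moritaSymm c) hT')) n ∘
        inducedMap DR hR DS hS (totalTrace (moritaEntry c) T)
          (totalDifferential_comp_totalTrace hDR hDS
            (isMultiplicative_moritaEntry c hT)) n) := by
  rw [← LinearMap.coe_comp, ← inducedMap_comp]
  simp only [totalTrace_comp_totalTrace, moritaEntry_symm_comp_moritaEntry]
  exact inducedMap_totalTrace_sandwich_bijective hDR hR (sum_ψ_mul_ψ_eq_one c hT hT') n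

end Morita

end CyclicHomology

/-- Let `(R, S, P, Q, φ, ψ)` be a Morita context over `k`.  Then for every
`n ≥ 0` there is a `k`-module isomorphism `HC_n(R) ≅ HC_n(S)` between the cyclic homologies
of `R` and `S` (Morita invariance of cyclic homology of associative algebras).  Here `HC_•(A)`
is the homology of the total complex of Tsygan's cyclic bicomplex `CC_{p,q} = A^{⊗(q+1)}`:
the total differential `D` acts on the component `p` (with `p + q = n + 1`) by the vertical
differential (`b = Σ_{i} (−1)^i d_i` on even-indexed columns, `−b' = −Σ_{i≤q} (−1)^i d_i` on
odd-indexed columns) plus the horizontal differential into the component `p − 1`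
(`1 − λ` for `p` odd and `N = Σ_i λ^i` for `p` even, where `λ = (−1)^q t_q` is the signed
cyclic operator). -/
theorem morita_invariance_cyclic_homology
    (k R S P Q : Type u) [CommRing k] [Ring R] [Ring S] [Algebra k R] [Algebra k S]
    [AddCommGroup P] [Module k P] [Module S P] [Module Rᵐᵒᵖ P]
    [SMulCommClass S Rᵐᵒᵖ P] [IsScalarTower k S P] [IsScalarTower k Rᵐᵒᵖ P]
    [AddCommGroup Q] [Module k Q] [Module R Q] [Module Sᵐᵒᵖ Q]
    [SMulCommClass R Sᵐᵒᵖ Q] [IsScalarTower k R Q] [IsScalarTower k Sᵐᵒᵖ Q]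
    (ctx : MoritaContext k R S P Q)
    -- the total differentials of the cyclic bicomplexes of `R` and of `S`
    (DR : ∀ n, TotC k R (n + 1) →ₗ[k] TotC k R n)
    (DS : ∀ n, TotC k S (n + 1) →ₗ[k] TotC k S n)
    (hDR : ∀ (n : ℕ) (p : Fin (n + 2)) (r : Fin ((n + 1) - p.val + 1) → R),
      DR n (DirectSum.lof k (Fin (n + 2)) (fun p' => CycChain k R ((n + 1) - p'.val)) p
          (cgen k r)) =
        (if h : p.val ≤ n then
          DirectSum.lof k (Fin (n + 1)) (fun p' => CycChain k R (n - p'.val))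
            ⟨p.val, by omega⟩
            (if Even p.val then
              ∑ i : Fin ((n - p.val) + 2), ((-1 : ℤ) ^ i.val) •
                cgen k (faceTuple (fun t => r (Fin.cast (by omega) t)) i)
            else
              -∑ i : Fin ((n - p.val) + 1), ((-1 : ℤ) ^ i.val) •
                cgen k (faceTuple (fun t => r (Fin.cast (by omega) t)) i.castSucc))
        else 0)
        +
        (if h2 : 1 ≤ p.val then
          DirectSum.lof k (Fin (n + 1)) (fun p' => CycChain k R (n - p'.val))
            ⟨p.val - 1, by have := p.isLt; omega⟩
            (if Even p.val then
              ∑ i : Fin ((n - (p.val - 1)) + 1), ((-1 : ℤ) ^ ((n - (p.val - 1)) * i.val)) •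
                cgen (n := n - (p.val - 1)) k (fun l =>
                  r (Fin.cast (by have := p.isLt; omega) (l + i)))
            else
              cgen (n := n - (p.val - 1)) k
                  (fun t => r (Fin.cast (by have := p.isLt; omega) t))
                - ((-1 : ℤ) ^ (n - (p.val - 1))) •
                  cgen (n := n - (p.val - 1)) k (fun l =>
                    r (Fin.cast (by have := p.isLt; omega) (l + 1))))
        else 0))
    (hDS : ∀ (n : ℕ) (p : Fin (n + 2)) (s : Fin ((n + 1) - p.val + 1) → S),
      DS n (DirectSum.lof k (Fin (n + 2)) (fun p' => CycChain k S ((n + 1) - p'.val)) p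
          (cgen k s)) =
        (if h : p.val ≤ n then
          DirectSum.lof k (Fin (n + 1)) (fun p' => CycChain k S (n - p'.val))
            ⟨p.val, by omega⟩
            (if Even p.val then
              ∑ i : Fin ((n - p.val) + 2), ((-1 : ℤ) ^ i.val) •
                cgen k (faceTuple (fun t => s (Fin.cast (by omega) t)) i)
            else
              -∑ i : Fin ((n - p.val) + 1), ((-1 : ℤ) ^ i.val) •
                cgen k (faceTuple (fun t => s (Fin.cast (by omega) t)) i.castSucc))
        else 0)
        +
        (if h2 : 1 ≤ p.val then
          DirectSum.lof k (Fin (n + 1)) (fun p' => CycChain k S (n - p'.val))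
            ⟨p.val - 1, by have := p.isLt; omega⟩
            (if Even p.val then
              ∑ i : Fin ((n - (p.val - 1)) + 1), ((-1 : ℤ) ^ ((n - (p.val - 1)) * i.val)) •
                cgen (n := n - (p.val - 1)) k (fun l =>
                  s (Fin.cast (by have := p.isLt; omega) (l + i)))
            else
              cgen (n := n - (p.val - 1)) k
                  (fun t => s (Fin.cast (by have := p.isLt; omega) t))
                - ((-1 : ℤ) ^ (n - (p.val - 1))) •
                  cgen (n := n - (p.val - 1)) k (fun l =>
                    s (Fin.cast (by have := p.isLt; omega) (l + 1))))
        else 0))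
    (hDR_sq : ∀ n, (DR n).comp (DR (n + 1)) = 0)
    (hDS_sq : ∀ n, (DS n).comp (DS (n + 1)) = 0) :
    ∀ n : ℕ, Nonempty (homologyAt DR hDR_sq n ≃ₗ[k] homologyAt DS hDS_sq n) := by
  intro n
  have tsygan_R : CyclicHomology.IsTsyganDifferential DR := fun n p hp => hDR n ⟨p, hp⟩
  have tsygan_S : CyclicHomology.IsTsyganDifferential DS := fun n p hp => hDS n ⟨p, hp⟩
  obtain ⟨T, hT⟩ := CyclicHomology.exists_sum_ψ_eq_one ctx
  obtain ⟨T', hT'⟩ := CyclicHomology.exists_sum_ψ_eq_one (CyclicHomology.moritaSymm ctx)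
  have bijective_on_R := CyclicHomology.inducedMap_moritaEntry_symm_comp_bijective ctx
    tsygan_R tsygan_S hDR_sq hDS_sq hT hT' n
  have bijective_on_S := CyclicHomology.inducedMap_moritaEntry_symm_comp_bijective
    (CyclicHomology.moritaSymm ctx) tsygan_S tsygan_R hDS_sq hDR_sq hT' hT n
  exact ⟨.ofBijective _ ⟨bijective_on_R.injective.of_comp, bijective_on_S.surjective.of_comp⟩⟩
end

section
/- Let (R,S,P,Q,φ,ψ) be a Morita context over k and M an (R,R)-bimodule with symmetric k-action. Then θ_• is a morphism of chain complexes: for every n ≥ 1, b ∘ θ_n = θ_{n−1} ∘ b as maps C_n(R,M) → C_{n−1}(S,M̃). -/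
open scoped TensorProduct
open MulOpposite

universe u

/-!
A summand of `θ_n(m ⊗ r₁ ⊗ ⋯ ⊗ rₙ)` is a cyclic word whose consecutive slots share an index
`f a`, the `q`-factor of one slot being paired with the `p`-factor of the next.  Each face of the
Hochschild boundary multiplies two cyclically adjacent slots; by the dual basis identities
`∑ᵢ φ(p ⊗ qᵢ)·pᵢ = p` and `∑ᵢ qᵢ·φ(pᵢ ⊗ q) = q`, which the compatibilities of a Morita context
deduce from `∑ᵢ ψ(qᵢ ⊗ pᵢ) = 1`, summing over the index they share contracts the two slots into
one, which is the slot of `θ_{n-1}` at the same face of `m ⊗ r₁ ⊗ ⋯ ⊗ rₙ`.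
-/

section CyclicIndices

variable {n : ℕ}

theorem succ_succAbove_self_add_one (a : Fin (n + 1)) :
    a.succ.succAbove (a + 1) = a.succ + 1 := by
  cases a using Fin.lastCases with
  | last => simp
  | cast i => rw [Fin.coeSucc_eq_succ, Fin.succ_succAbove_succ, Fin.succAbove_castSucc_self,
      Fin.succ_castSucc, Fin.coeSucc_eq_succ]

theorem succ_succAbove_add_one_of_ne {a b : Fin (n + 1)} (h : b ≠ a) :
    a.succ.succAbove (b + 1) = a.succ.succAbove b + 1 := by
  cases b using Fin.lastCases with
  | last =>
    rw [Fin.last_add_one, Fin.succAbove_ne_zero_zero a.succ_ne_zero,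
      Fin.succAbove_of_le_castSucc _ _
        (Fin.succ_le_castSucc_iff.2 (lt_of_le_of_ne a.le_last h.symm)),
      Fin.succ_last, Fin.last_add_one]
  | cast i =>
    rw [Fin.coeSucc_eq_succ, Fin.succ_succAbove_succ]
    rcases h.lt_or_gt with hlt | hgt
    · rw [Fin.succAbove_of_castSucc_lt _ _ hlt,
        Fin.succAbove_of_castSucc_lt _ _ (Fin.castSucc_lt_succ_iff.2 hlt.le), Fin.coeSucc_eq_succ]
    · rw [Fin.succAbove_of_le_castSucc _ _ hgt.le,
        Fin.succAbove_of_le_castSucc _ _ (Fin.succ_le_castSucc_iff.2 hgt), Fin.succ_castSucc,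
        Fin.coeSucc_eq_succ]

variable {α : Type*} (x : α) (g : Fin (n + 1) → α)

theorem insertNth_succ_apply_add_one (a : Fin (n + 1)) :
    a.succ.insertNth (α := fun _ ↦ α) x g (a.succ + 1) = g (a + 1) := by
  rw [← succ_succAbove_self_add_one, Fin.insertNth_apply_succAbove]

theorem insertNth_succ_apply_succAbove_add_one {a b : Fin (n + 1)} (h : b ≠ a) :
    a.succ.insertNth (α := fun _ ↦ α) x g (a.succ.succAbove b + 1) = g (b + 1) := by
  rw [← succ_succAbove_add_one_of_ne h, Fin.insertNth_apply_succAbove]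

theorem insertNth_succ_apply_castSucc (a : Fin (n + 1)) :
    a.succ.insertNth (α := fun _ ↦ α) x g a.castSucc = g a := by
  simpa using Fin.insertNth_apply_succAbove (α := fun _ ↦ α) a.succ x g a

theorem cons_rotate_castSucc_succ (l : Fin n) :
    Fin.cons (α := fun _ ↦ α) x (fun a ↦ g (a + 1)) l.castSucc.succ = g l.succ := by
  rw [Fin.cons_succ, Fin.coeSucc_eq_succ]

end CyclicIndices

section Sums

variable {n : ℕ} {ι V : Type*} [Fintype ι] [AddCommMonoid V]

theorem sum_eq_sum_sum_insertNth (c : Fin (n + 1)) (F : (Fin (n + 1) → ι) → V) :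
    ∑ f, F f = ∑ g : Fin n → ι, ∑ x, F (c.insertNth (α := fun _ ↦ ι) x g) := by
  rw [← (Fin.insertNthEquiv (fun _ ↦ ι) c).sum_comp, Fintype.sum_prod_type_right]
  rfl

theorem sum_eq_sum_sum_cons_rotate (F : (Fin (n + 2) → ι) → V) :
    ∑ f, F f = ∑ g : Fin (n + 1) → ι, ∑ x, F (Fin.cons x fun a ↦ g (a + 1)) := by
  rw [sum_eq_sum_sum_insertNth 0,
    ← ((Equiv.addRight (1 : Fin (n + 1))).symm.arrowCongr (Equiv.refl ι)).sum_comp]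
  simp only [Fin.insertNth_zero]
  rfl

end Sums

section MergeAt

variable {A : Type u} [Mul A] {n : ℕ} (r : Fin (n + 1) → A)

theorem mergeAt_self (j : Fin n) : mergeAt r j j = r j.castSucc * r j.succ := by
  simp [mergeAt]

theorem mergeAt_of_ne {j l : Fin n} (h : l ≠ j) : mergeAt r j l = r (j.succ.succAbove l) := by
  rcases h.lt_or_gt with h | h
  · rw [Fin.succAbove_of_castSucc_lt _ _ (Fin.castSucc_lt_succ_iff.2 h.le)]
    exact if_pos h
  · rw [Fin.succAbove_of_le_castSucc _ _ (Fin.succ_le_castSucc_iff.2 h), mergeAt,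
      if_neg (Fin.lt_def.1 h).not_gt, if_neg (Fin.val_ne_of_ne h.ne')]

end MergeAt

section Chains

variable {k A N : Type u} [CommRing k] [Ring A] [Algebra k A] [AddCommGroup N] [Module k N]
  {n : ℕ}

theorem HChain.hom_ext_s2 {V : Type*} [AddCommMonoid V] [Module k V] {f g : HChain k A N n →ₗ[k] V}
    (h : ∀ (m : N) (r : Fin n → A), f (hgen k m r) = g (hgen k m r)) : f = g :=
  TensorProduct.ext <| LinearMap.ext fun m ↦ PiTensorProduct.ext <| MultilinearMap.ext (h m)

theorem sum_hgen {ι : Type*} [Fintype ι] (m : ι → N) (r : Fin n → A) :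
    ∑ x, hgen k (m x) r = hgen k (∑ x, m x) r :=
  (TensorProduct.sum_tmul _ _ _).symm

theorem sum_hgen_update {ι : Type*} [Fintype ι] (m : N) (r : Fin n → A) (j : Fin n) (v : ι → A) :
    ∑ x, hgen k m (Function.update r j (v x)) = hgen k m (Function.update r j (∑ x, v x)) := by
  simp only [hgen, MultilinearMap.map_update_sum, TensorProduct.tmul_sum]

variable (k) in
/-- The value `b(m ⊗ r₁ ⊗ ⋯ ⊗ rₙ₊₁)` of the Hochschild boundary on a generator; the `j`-th term
of the middle sum is the face `d_{n-j}` of the paper. -/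
noncomputable def hochschildBoundary [Module A N] [Module Aᵐᵒᵖ N] (m : N) (r : Fin (n + 1) → A) :
    HChain k A N n :=
  hgen k (r (Fin.last n) • m) (Fin.init r)
    + ∑ j : Fin n, ((-1 : ℤ) ^ (n - j.val)) • hgen k m (mergeAt r j)
    + ((-1 : ℤ) ^ (n + 1)) • hgen k (op (r 0) • m) (Fin.tail r)

end Chains

section DualBasis

variable {k S P Q ι : Type*} [CommRing k] [Ring S] [Algebra k S]
  [AddCommGroup P] [Module k P] [Module S P] [AddCommGroup Q] [Module k Q] [Module Sᵐᵒᵖ Q]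
  [Fintype ι]

/-- Finite families `pI` in the left `S`-module `P` and `qI` in the right `S`-module `Q` which are
dual bases of each other with respect to the pairing `φ : P × Q → S`. -/
structure IsDualBasis (φ : P →ₗ[k] Q →ₗ[k] S) (pI : ι → P) (qI : ι → Q) : Prop where
  sum_smul : ∀ p, ∑ i, φ p (qI i) • pI i = p
  sum_op_smul : ∀ q, ∑ i, op (φ (pI i) q) • qI i = q

variable {R : Type*} [Ring R] [Module Rᵐᵒᵖ P] [Module R Q]
  {φ : P →ₗ[k] Q →ₗ[k] S} {pI : ι → P} {qI : ι → Q}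

theorem IsDualBasis.sum_balanced_smul (h : IsDualBasis φ pI qI)
    (hφ_bal : ∀ (r : R) (p : P) (q : Q), φ (op r • p) q = φ p (r • q)) (r : R) (p : P) :
    ∑ i, φ p (r • qI i) • pI i = op r • p := by
  simp only [← hφ_bal, h.sum_smul]

theorem IsDualBasis.sum_mul (h : IsDualBasis φ pI qI)
    (hφ_bal : ∀ (r : R) (p : P) (q : Q), φ (op r • p) q = φ p (r • q))
    (hφ_left : ∀ (s : S) (p : P) (q : Q), φ (s • p) q = s * φ p q) (r : R) (p : P) (q : Q) :
    ∑ i, φ p (r • qI i) * φ (pI i) q = φ p (r • q) := by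
  simp only [← hφ_left]
  rw [← LinearMap.sum_apply, ← map_sum, h.sum_balanced_smul hφ_bal, hφ_bal]

end DualBasis

section Theta

variable {k R S M Mt : Type u} {P Q ι : Type*} [CommRing k] [Ring R] [Ring S] [Algebra k S]
  [AddCommGroup P] [Module k P] [AddCommGroup Q] [Module k Q] [Module R Q]
  [AddCommGroup M] [Module k M] [AddCommGroup Mt] [Module k Mt] {n : ℕ}

/-- The coefficient `p_{f 0} ⊗ m ⊗ q_{f 1}` of the summand of `θ_n` with indices `f`.  Addition in
`Fin (n + 1)` is cyclic, so `f 1` is `f 0` when `n = 0`. -/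
def thetaCoeff (emb : P →ₗ[k] M →ₗ[k] Q →ₗ[k] Mt) (pI : ι → P) (qI : ι → Q) (m : M)
    (f : Fin (n + 1) → ι) : Mt :=
  emb (pI (f 0)) m (qI (f 1))

/-- The algebra entries `φ(p_{f l} ⊗ r_l·q_{f (l+1)})`, `1 ≤ l ≤ n`, of the summand of `θ_n` with
indices `f`.  Addition in `Fin (n + 1)` is cyclic, so the last entry ends in `q_{f 0}`. -/
def thetaTuple (φ : P →ₗ[k] Q →ₗ[k] S) (pI : ι → P) (qI : ι → Q) (r : Fin n → R)
    (f : Fin (n + 1) → ι) : Fin n → S :=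
  fun l ↦ φ (pI (f l.succ)) (r l • qI (f (l.succ + 1)))

/-- The value `θ_n(m ⊗ r₁ ⊗ ⋯ ⊗ rₙ)` on a generator. -/
noncomputable def thetaGen [Fintype ι] (φ : P →ₗ[k] Q →ₗ[k] S) (emb : P →ₗ[k] M →ₗ[k] Q →ₗ[k] Mt)
    (pI : ι → P) (qI : ι → Q) (m : M) (r : Fin n → R) : HChain k S Mt n :=
  ∑ f : Fin (n + 1) → ι, hgen k (thetaCoeff emb pI qI m f) (thetaTuple φ pI qI r f)

variable (φ : P →ₗ[k] Q →ₗ[k] S) (emb : P →ₗ[k] M →ₗ[k] Q →ₗ[k] Mt) (pI : ι → P) (qI : ι → Q)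
  (m : M) (r : Fin (n + 1) → R) (x : ι) (g : Fin (n + 1) → ι)

theorem thetaCoeff_cons_rotate :
    thetaCoeff emb pI qI m (Fin.cons x fun a ↦ g (a + 1) : Fin (n + 2) → ι)
      = emb (pI x) m (qI (g 1)) := by
  rw [thetaCoeff, Fin.cons_zero, ← Fin.succ_zero_eq_one, Fin.cons_succ, zero_add]

theorem thetaTuple_cons_rotate_last :
    thetaTuple φ pI qI r (Fin.cons x fun a ↦ g (a + 1)) (Fin.last n)
      = φ (pI (g 0)) (r (Fin.last n) • qI x) := by
  rw [thetaTuple, Fin.cons_succ, Fin.last_add_one, Fin.succ_last, Fin.last_add_one, Fin.cons_zero]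

theorem init_thetaTuple_cons_rotate :
    Fin.init (thetaTuple φ pI qI r (Fin.cons x fun a ↦ g (a + 1)))
      = thetaTuple φ pI qI (Fin.init r) g := by
  funext l
  rw [Fin.init, thetaTuple, thetaTuple, Fin.init, cons_rotate_castSucc_succ, Fin.succ_castSucc,
    Fin.coeSucc_eq_succ, Fin.cons_succ]

theorem thetaCoeff_insertNth_succ_zero :
    thetaCoeff emb pI qI m ((Fin.succ 0).insertNth (α := fun _ ↦ ι) x g)
      = emb (pI (g 0)) m (qI x) := by
  have h₀ := insertNth_succ_apply_castSucc x g 0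
  rw [Fin.castSucc_zero] at h₀
  rw [thetaCoeff, h₀, ← Fin.succ_zero_eq_one, Fin.insertNth_apply_same]

theorem thetaTuple_insertNth_succ_zero_zero :
    thetaTuple φ pI qI r ((Fin.succ 0).insertNth (α := fun _ ↦ ι) x g) 0
      = φ (pI x) (r 0 • qI (g 1)) := by
  rw [thetaTuple, Fin.insertNth_apply_same, insertNth_succ_apply_add_one, zero_add]

theorem tail_thetaTuple_insertNth_succ_zero :
    Fin.tail (thetaTuple φ pI qI r ((Fin.succ 0).insertNth (α := fun _ ↦ ι) x g))
      = thetaTuple φ pI qI (Fin.tail r) g := by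
  funext l
  have hl : l.succ.succ = (Fin.succ 0).succAbove l.succ := by simp
  rw [Fin.tail, thetaTuple, thetaTuple, Fin.tail, hl, Fin.insertNth_apply_succAbove,
    insertNth_succ_apply_succAbove_add_one _ _ l.succ_ne_zero]

theorem thetaCoeff_insertNth_succ_succ (j : Fin n) :
    thetaCoeff emb pI qI m (j.succ.succ.insertNth (α := fun _ ↦ ι) x g)
      = thetaCoeff emb pI qI m g := by
  have h := insertNth_succ_apply_succAbove_add_one x g j.succ_ne_zero.symm
  have h₀ := Fin.insertNth_apply_succAbove (α := fun _ ↦ ι) j.succ.succ x g 0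
  rw [Fin.succAbove_ne_zero_zero j.succ.succ_ne_zero] at h h₀
  rw [zero_add, zero_add] at h
  rw [thetaCoeff, h, h₀, thetaCoeff]

theorem mergeAt_thetaTuple_insertNth_succ_succ (j : Fin n) :
    mergeAt (thetaTuple φ pI qI r (j.succ.succ.insertNth (α := fun _ ↦ ι) x g)) j
      = Function.update (thetaTuple φ pI qI (mergeAt r j) g) j
          (φ (pI (g j.succ)) (r j.castSucc • qI x)
            * φ (pI x) (r j.succ • qI (g (j.succ + 1)))) := by
  funext l
  by_cases hl : l = j
  · subst hl
    rw [mergeAt_self, Function.update_self, thetaTuple, thetaTuple, Fin.insertNth_apply_same,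
      insertNth_succ_apply_add_one, Fin.succ_castSucc, insertNth_succ_apply_castSucc,
      Fin.coeSucc_eq_succ, Fin.insertNth_apply_same]
  · rw [mergeAt_of_ne _ hl, Function.update_of_ne hl, thetaTuple, thetaTuple, mergeAt_of_ne _ hl,
      ← Fin.succ_succAbove_succ, Fin.insertNth_apply_succAbove,
      insertNth_succ_apply_succAbove_add_one _ _ (Fin.succ_injective _ |>.ne hl)]

end Theta

section Faces

variable {k R S M Mt : Type u} {P Q ι : Type*} [CommRing k] [Ring R] [Ring S] [Algebra k S]
  [AddCommGroup P] [Module k P] [Module S P]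
  [AddCommGroup Q] [Module k Q] [Module R Q] [Module Sᵐᵒᵖ Q]
  [AddCommGroup M] [Module k M] [AddCommGroup Mt] [Module k Mt] [Fintype ι]
  {φ : P →ₗ[k] Q →ₗ[k] S} {emb : P →ₗ[k] M →ₗ[k] Q →ₗ[k] Mt} {pI : ι → P} {qI : ι → Q} {n : ℕ}

theorem IsDualBasis.sum_hgen_smul_init_thetaTuple [Module Rᵐᵒᵖ P] [Module R M] [Module S Mt]
    (h : IsDualBasis φ pI qI)
    (hφ_bal : ∀ (r : R) (p : P) (q : Q), φ (op r • p) q = φ p (r • q))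
    (hemb_bal₁ : ∀ (r : R) (p : P) (m : M) (q : Q), emb (op r • p) m q = emb p (r • m) q)
    (hemb_left : ∀ (s : S) (p : P) (m : M) (q : Q), emb (s • p) m q = s • emb p m q)
    (m : M) (r : Fin (n + 1) → R) :
    ∑ f : Fin (n + 2) → ι,
        hgen k (thetaTuple φ pI qI r f (Fin.last n) • thetaCoeff emb pI qI m f)
          (Fin.init (thetaTuple φ pI qI r f))
      = thetaGen φ emb pI qI (r (Fin.last n) • m) (Fin.init r) := by
  have contract (p : P) (q : Q) :
      ∑ x, φ p (r (Fin.last n) • qI x) • emb (pI x) m q = emb p (r (Fin.last n) • m) q := by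
    simp only [← hemb_left]
    rw [← hemb_bal₁, ← h.sum_balanced_smul hφ_bal, map_sum, LinearMap.sum_apply,
      LinearMap.sum_apply]
  rw [sum_eq_sum_sum_cons_rotate]
  simp only [thetaCoeff_cons_rotate, thetaTuple_cons_rotate_last, init_thetaTuple_cons_rotate,
    sum_hgen, contract]
  rfl

theorem IsDualBasis.sum_hgen_mergeAt_thetaTuple [Module Rᵐᵒᵖ P] (h : IsDualBasis φ pI qI)
    (hφ_bal : ∀ (r : R) (p : P) (q : Q), φ (op r • p) q = φ p (r • q))
    (hφ_left : ∀ (s : S) (p : P) (q : Q), φ (s • p) q = s * φ p q)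
    (m : M) (r : Fin (n + 1) → R) (j : Fin n) :
    ∑ f : Fin (n + 2) → ι,
        hgen k (thetaCoeff emb pI qI m f) (mergeAt (thetaTuple φ pI qI r f) j)
      = thetaGen φ emb pI qI m (mergeAt r j) := by
  have contract (g : Fin (n + 1) → ι) :
      ∑ x, φ (pI (g j.succ)) (r j.castSucc • qI x) * φ (pI x) (r j.succ • qI (g (j.succ + 1)))
        = thetaTuple φ pI qI (mergeAt r j) g j := by
    rw [h.sum_mul hφ_bal hφ_left, smul_smul, thetaTuple, mergeAt_self]
  rw [sum_eq_sum_sum_insertNth j.succ.succ]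
  simp only [thetaCoeff_insertNth_succ_succ, mergeAt_thetaTuple_insertNth_succ_succ,
    sum_hgen_update, contract, Function.update_eq_self]
  rfl

theorem IsDualBasis.sum_hgen_op_smul_tail_thetaTuple [Module Rᵐᵒᵖ M] [Module Sᵐᵒᵖ Mt]
    (h : IsDualBasis φ pI qI)
    (hemb_bal₂ : ∀ (r : R) (p : P) (m : M) (q : Q), emb p (op r • m) q = emb p m (r • q))
    (hemb_right : ∀ (s : S) (p : P) (m : M) (q : Q), emb p m (op s • q) = op s • emb p m q)
    (m : M) (r : Fin (n + 1) → R) :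
    ∑ f : Fin (n + 2) → ι,
        hgen k (op (thetaTuple φ pI qI r f 0) • thetaCoeff emb pI qI m f)
          (Fin.tail (thetaTuple φ pI qI r f))
      = thetaGen φ emb pI qI (op (r 0) • m) (Fin.tail r) := by
  have contract (p : P) (q : Q) :
      ∑ x, op (φ (pI x) (r 0 • q)) • emb p m (qI x) = emb p (op (r 0) • m) q := by
    simp only [← hemb_right]
    rw [← map_sum, h.sum_op_smul, hemb_bal₂]
  rw [sum_eq_sum_sum_insertNth (Fin.succ 0)]
  simp only [thetaCoeff_insertNth_succ_zero, thetaTuple_insertNth_succ_zero_zero,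
    tail_thetaTuple_insertNth_succ_zero, sum_hgen, contract]
  rfl

/-- Besides Morita contexts, this covers algebra homomorphisms `R → S`, with `P = Q = S` and `φ` the
multiplication. -/
theorem theta_chain_map_general [Algebra k R] [Module Rᵐᵒᵖ P] [Module R M] [Module Rᵐᵒᵖ M]
    [Module S Mt] [Module Sᵐᵒᵖ Mt] (h : IsDualBasis φ pI qI)
    (hφ_bal : ∀ (r : R) (p : P) (q : Q), φ (op r • p) q = φ p (r • q))
    (hφ_left : ∀ (s : S) (p : P) (q : Q), φ (s • p) q = s * φ p q)
    (hemb_bal₁ : ∀ (r : R) (p : P) (m : M) (q : Q), emb (op r • p) m q = emb p (r • m) q)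
    (hemb_bal₂ : ∀ (r : R) (p : P) (m : M) (q : Q), emb p (op r • m) q = emb p m (r • q))
    (hemb_left : ∀ (s : S) (p : P) (m : M) (q : Q), emb (s • p) m q = s • emb p m q)
    (hemb_right : ∀ (s : S) (p : P) (m : M) (q : Q), emb p m (op s • q) = op s • emb p m q)
    (bR : ∀ n, HChain k R M (n + 1) →ₗ[k] HChain k R M n)
    (hbR : ∀ n m (r : Fin (n + 1) → R), bR n (hgen k m r) = hochschildBoundary k m r)
    (bS : ∀ n, HChain k S Mt (n + 1) →ₗ[k] HChain k S Mt n)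
    (hbS : ∀ n m (s : Fin (n + 1) → S), bS n (hgen k m s) = hochschildBoundary k m s)
    (θ : ∀ n, HChain k R M n →ₗ[k] HChain k S Mt n)
    (hθ : ∀ n m (r : Fin n → R), θ n (hgen k m r) = thetaGen φ emb pI qI m r) (n : ℕ) :
    (bS n).comp (θ (n + 1)) = (θ n).comp (bR n) := by
  refine HChain.hom_ext_s2 fun m r ↦ ?_
  rw [LinearMap.comp_apply, LinearMap.comp_apply, hθ, hbR, thetaGen, map_sum]
  simp only [hbS, hochschildBoundary, map_add, map_sum, map_zsmul, hθ, Finset.sum_add_distrib]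
  rw [Finset.sum_comm]
  simp only [← Finset.smul_sum, h.sum_hgen_smul_init_thetaTuple hφ_bal hemb_bal₁ hemb_left,
    h.sum_hgen_mergeAt_thetaTuple hφ_bal hφ_left,
    h.sum_hgen_op_smul_tail_thetaTuple hemb_bal₂ hemb_right]

end Faces

namespace MoritaContext

variable {k R S P Q : Type u} [CommRing k] [Ring R] [Ring S] [Algebra k R] [Algebra k S]
  [AddCommGroup P] [Module k P] [Module S P] [Module Rᵐᵒᵖ P]
  [SMulCommClass S Rᵐᵒᵖ P] [IsScalarTower k S P] [IsScalarTower k Rᵐᵒᵖ P]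
  [AddCommGroup Q] [Module k Q] [Module R Q] [Module Sᵐᵒᵖ Q]
  [SMulCommClass R Sᵐᵒᵖ Q] [IsScalarTower k R Q] [IsScalarTower k Sᵐᵒᵖ Q]
  (ctx : MoritaContext k R S P Q)

theorem φ_balanced (r : R) (p : P) (q : Q) : ctx.φ (op r • p) q = ctx.φ p (r • q) := by
  have hmem : (op r • p) ⊗ₜ[k] q - p ⊗ₜ[k] (r • q) ∈ LinearMap.ker (TensorProduct.lift ctx.φ) :=
    ctx.φ_ker ▸ Submodule.subset_span ⟨p, r, q, rfl⟩
  simpa [sub_eq_zero] using hmem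

theorem isDualBasis {ι : Type*} [Fintype ι] {pI : ι → P} {qI : ι → Q}
    (hI : ∑ i, ctx.ψ (qI i) (pI i) = 1) : IsDualBasis ctx.φ pI qI where
  sum_smul p := by
    simp only [ctx.assoc_φψ]
    rw [← Finset.sum_smul, ← Finset.op_sum, hI, op_one, one_smul]
  sum_op_smul q := by
    simp only [← ctx.assoc_ψφ]
    rw [← Finset.sum_smul, hI, one_smul]

end MoritaContext

/-- Let `(R, S, P, Q, φ, ψ)` be a Morita context over `k` and `M` an
`(R,R)`-bimodule with symmetric `k`-action.  Then `θ_•` is a morphism of chain complexes: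
for every `n ≥ 1`, `b ∘ θ_n = θ_{n−1} ∘ b` as maps `C_n(R, M) → C_{n−1}(S, M̃)`  (below,
degrees are shifted so that the statement for all `n : ℕ` is exactly the statement for all
`n ≥ 1` of the paper). -/
theorem theta_chain_map
    (k R S P Q M Mt : Type u) [CommRing k] [Ring R] [Ring S] [Algebra k R] [Algebra k S]
    [AddCommGroup P] [Module k P] [Module S P] [Module Rᵐᵒᵖ P]
    [SMulCommClass S Rᵐᵒᵖ P] [IsScalarTower k S P] [IsScalarTower k Rᵐᵒᵖ P]
    [AddCommGroup Q] [Module k Q] [Module R Q] [Module Sᵐᵒᵖ Q]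
    [SMulCommClass R Sᵐᵒᵖ Q] [IsScalarTower k R Q] [IsScalarTower k Sᵐᵒᵖ Q]
    [AddCommGroup M] [Module k M] [Module R M] [Module Rᵐᵒᵖ M]
    [SMulCommClass R Rᵐᵒᵖ M] [IsScalarTower k R M] [IsScalarTower k Rᵐᵒᵖ M]
    [AddCommGroup Mt] [Module k Mt] [Module S Mt] [Module Sᵐᵒᵖ Mt]
    [SMulCommClass S Sᵐᵒᵖ Mt] [IsScalarTower k S Mt] [IsScalarTower k Sᵐᵒᵖ Mt]
    -- the Morita context and the fixed finite families with `Σⱼ φ(p'ⱼ ⊗ q'ⱼ) = 1_S`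
    -- and `Σᵢ ψ(qᵢ ⊗ pᵢ) = 1_R`
    (ctx : MoritaContext k R S P Q)
    (ι κ : Type u) [Fintype ι] [Fintype κ]
    (pI : ι → P) (qI : ι → Q) (pJ : κ → P) (qJ : κ → Q)
    (hI : ∑ i : ι, ctx.ψ (qI i) (pI i) = 1)
    (hJ : ∑ j : κ, ctx.φ (pJ j) (qJ j) = 1)
    -- `Mt` plays the role of `M̃ = P ⊗_R M ⊗_R Q`, with `emb p m q` the class of
    -- `p ⊗ m ⊗ q`; it is an `(S,S)`-bimodule spanned by these classes, the `S`-actions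
    -- being `s·(p ⊗ m ⊗ q)·s' = (s·p) ⊗ m ⊗ (q·s')`, and the tensor products are
    -- balanced over `R`
    (emb : P →ₗ[k] M →ₗ[k] Q →ₗ[k] Mt)
    (hemb_bal₁ : ∀ (r : R) (p : P) (m : M) (q : Q), emb (op r • p) m q = emb p (r • m) q)
    (hemb_bal₂ : ∀ (r : R) (p : P) (m : M) (q : Q), emb p (op r • m) q = emb p m (r • q))
    (hemb_left : ∀ (s : S) (p : P) (m : M) (q : Q), emb (s • p) m q = s • emb p m q)
    (hemb_right : ∀ (s : S) (p : P) (m : M) (q : Q), emb p m (op s • q) = op s • emb p m q)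
    (hemb_span : Submodule.span k {x : Mt | ∃ (p : P) (m : M) (q : Q), emb p m q = x} = ⊤)
    -- the Hochschild boundaries of `C_•(R, M)` and `C_•(S, M̃)`
    (bR : ∀ n, HChain k R M (n + 1) →ₗ[k] HChain k R M n)
    (hbR : ∀ (n : ℕ) (m : M) (r : Fin (n + 1) → R),
      bR n (hgen k m r) =
        hgen k (r (Fin.last n) • m) (Fin.init r)
          + ∑ j : Fin n, ((-1 : ℤ) ^ (n - j.val)) • hgen k m (mergeAt r j)
          + ((-1 : ℤ) ^ (n + 1)) • hgen k (op (r 0) • m) (Fin.tail r))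
    (bS : ∀ n, HChain k S Mt (n + 1) →ₗ[k] HChain k S Mt n)
    (hbS : ∀ (n : ℕ) (m : Mt) (s : Fin (n + 1) → S),
      bS n (hgen k m s) =
        hgen k (s (Fin.last n) • m) (Fin.init s)
          + ∑ j : Fin n, ((-1 : ℤ) ^ (n - j.val)) • hgen k m (mergeAt s j)
          + ((-1 : ℤ) ^ (n + 1)) • hgen k (op (s 0) • m) (Fin.tail s))
    -- the chain map `θ_•`
    (θ : ∀ n, HChain k R M n →ₗ[k] HChain k S Mt n)
    (hθ : ∀ (n : ℕ) (m : M) (r : Fin n → R),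
      θ n (hgen k m r) =
        ∑ f : Fin (n + 1) → ι,
          hgen k (emb (pI (f 0)) m (qI (f 1)))
            (fun l : Fin n => ctx.φ (pI (f l.succ)) (r l • qI (f (l.succ + 1)))))
 :
    ∀ n : ℕ, (bS n).comp (θ (n + 1)) = (θ n).comp (bR n) :=
  theta_chain_map_general (ctx.isDualBasis hI) ctx.φ_balanced ctx.φ_left hemb_bal₁ hemb_bal₂
    hemb_left hemb_right bR hbR bS hbS θ hθ
end

section
/- Let (R,S,P,Q,φ,ψ) be a Morita context over k and M an (R,R)-bimodule with symmetric k-action. Then γ_• is a morphism of chain complexes: for every n ≥ 1, b ∘ γ_n = γ_{n−1} ∘ b as maps C_n(S,M̃) → C_{n−1}(R,M). -/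
open scoped TensorProduct
open MulOpposite

universe u

/-! Since `∑ⱼ p'ⱼ · ψ(q'ⱼ ⊗ p) = p`, sending `s` to the matrix with entries `ψ(q'ᵢ ⊗ s·p'ⱼ)` is
multiplicative, and it turns the two actions of `S` on `p ⊗ m ⊗ q` into matrix multiplication on
`ψ(q'ᵢ ⊗ p)·m·ψ(q ⊗ p'ⱼ)`. Thus `γ` is induced by this matrix representation followed by the
generalized trace from matrices over `R` to `R`, which commutes with `b` because summing over one
index of a closed path of matrix entries multiplies the two matrices meeting there. -/

section HochschildChains

variable {k A N : Type u} [CommRing k] [Ring A] [Algebra k A] [AddCommGroup N] [Module k N]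
  {n : ℕ}

theorem hgen_sum {κ : Type*} [Fintype κ] (f : κ → N) (r : Fin n → A) :
    hgen k (∑ x, f x) r = ∑ x, hgen k (f x) r := by
  simp only [hgen, TensorProduct.sum_tmul]

theorem hgen_update_sum {κ : Type*} [Fintype κ] (m : N) (r : Fin n → A) (j : Fin n)
    (f : κ → A) :
    hgen k m (Function.update r j (∑ x, f x)) =
      ∑ x, hgen k m (Function.update r j (f x)) := by
  simp only [hgen, MultilinearMap.map_update_sum, TensorProduct.tmul_sum]

theorem HChain.linearMap_ext_of_span_eq_top {X : Type*} [AddCommGroup X] [Module k X]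
    {f g : HChain k A N n →ₗ[k] X} {T : Set N} (hT : Submodule.span k T = ⊤)
    (h : ∀ m ∈ T, ∀ r : Fin n → A, f (hgen k m r) = g (hgen k m r)) : f = g := by
  refine TensorProduct.ext (LinearMap.ext_on hT fun m hm => ?_)
  refine PiTensorProduct.ext (MultilinearMap.ext fun r => ?_)
  exact h m hm r

/-- The Hochschild boundary in degree `n + 1`, characterized by its values on generators. -/
def IsHochschildBoundary [Module A N] [Module Aᵐᵒᵖ N]
    (b : HChain k A N (n + 1) →ₗ[k] HChain k A N n) : Prop :=
  ∀ (m : N) (r : Fin (n + 1) → A),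
    b (hgen k m r) =
      hgen k (r (Fin.last n) • m) (Fin.init r)
        + ∑ j : Fin n, ((-1 : ℤ) ^ (n - j.val)) • hgen k m (mergeAt r j)
        + ((-1 : ℤ) ^ (n + 1)) • hgen k (op (r 0) • m) (Fin.tail r)

end HochschildChains

theorem map_mergeAt {A B : Type*} [Mul A] [Mul B] {f : A → B}
    (hf : ∀ a a', f (a * a') = f a * f a') {n : ℕ} (r : Fin (n + 1) → A) (j : Fin n) :
    (fun l => f (mergeAt r j l)) = mergeAt (fun l => f (r l)) j := by
  funext l
  simp only [mergeAt, apply_ite f, hf]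

theorem sum_eq_sum_insertNth {κ X : Type*} [Fintype κ] [AddCommMonoid X] {n : ℕ}
    (i : Fin (n + 1)) (F : (Fin (n + 1) → κ) → X) :
    ∑ g, F g = ∑ h : Fin n → κ, ∑ x : κ, F (i.insertNth x h) := by
  rw [← (Fin.insertNthEquiv (fun _ => κ) i).sum_comp F, Fintype.sum_prod_type_right]
  rfl

theorem insertNth_castSucc_castSucc_of_lt {κ : Type*} {n : ℕ} {p i : Fin (n + 1)} (hi : i < p)
    (x : κ) (h : Fin (n + 1) → κ) :
    p.castSucc.insertNth (α := fun _ => κ) x h i.castSucc = h i := by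
  rw [← Fin.succAbove_castSucc_of_lt p i hi, Fin.insertNth_apply_succAbove]

theorem insertNth_castSucc_succ_of_le {κ : Type*} {n : ℕ} {p i : Fin (n + 1)} (hi : p ≤ i)
    (x : κ) (h : Fin (n + 1) → κ) :
    p.castSucc.insertNth (α := fun _ => κ) x h i.succ = h i := by
  rw [← Fin.succAbove_castSucc_of_le p i hi, Fin.insertNth_apply_succAbove]

section GeneralizedTrace

/-- The tuple of matrix entries `(a₁)_{h₀h₁}, …, (aₙ)_{hₙ₋₁hₙ}` along the path of indices `h`;
the summands of the generalized trace are built from these. -/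
def pathEntries {A κ : Type*} {n : ℕ} (a : Fin n → Matrix κ κ A) (h : Fin (n + 1) → κ) :
    Fin n → A :=
  fun l => a l (h l.castSucc) (h l.succ)

theorem init_pathEntries_snoc {A κ : Type*} {n : ℕ} (a : Fin (n + 1) → Matrix κ κ A)
    (h : Fin (n + 1) → κ) (x : κ) :
    Fin.init (pathEntries a (Fin.snoc h x)) = pathEntries (Fin.init a) h := by
  funext l
  simp only [Fin.init, pathEntries, Fin.succ_castSucc, Fin.snoc_castSucc]

theorem tail_pathEntries_cons {A κ : Type*} {n : ℕ} (a : Fin (n + 1) → Matrix κ κ A)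
    (h : Fin (n + 1) → κ) (x : κ) :
    Fin.tail (pathEntries a (Fin.cons x h)) = pathEntries (Fin.tail a) h := by
  funext l
  simp only [Fin.tail, pathEntries, ← Fin.succ_castSucc, Fin.cons_succ]

theorem mergeAt_pathEntries_insertNth {A κ : Type*} [NonUnitalNonAssocSemiring A] [Fintype κ]
    {n : ℕ} (a : Fin (n + 1) → Matrix κ κ A) (h : Fin (n + 1) → κ) (j : Fin n) (x : κ) :
    mergeAt (pathEntries a (j.succ.castSucc.insertNth x h)) j =
      Function.update (pathEntries (mergeAt a j) h) j
        (a j.castSucc (h j.castSucc) x * a j.succ x (h j.succ)) := by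
  set g : Fin (n + 2) → κ := j.succ.castSucc.insertNth x h
  have before {i : Fin (n + 1)} (hi : i < j.succ) : g i.castSucc = h i :=
    insertNth_castSucc_castSucc_of_lt hi x h
  have after {i : Fin (n + 1)} (hi : j.succ ≤ i) : g i.succ = h i :=
    insertNth_castSucc_succ_of_le hi x h
  have inserted : g j.succ.castSucc = x := Fin.insertNth_apply_same ..
  funext l
  rcases lt_trichotomy l j with hlj | rfl | hjl
  · rw [Function.update_of_ne hlj.ne]
    simp only [mergeAt, pathEntries, Fin.val_fin_lt, hlj, if_true, Fin.succ_castSucc]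
    rw [before (Fin.castSucc_lt_succ_iff.2 hlj.le), before (Fin.succ_lt_succ_iff.2 hlj)]
  · rw [Function.update_self]
    simp only [mergeAt, pathEntries, lt_irrefl, if_false, if_true]
    rw [before Fin.castSucc_lt_succ, Fin.succ_castSucc, inserted, after le_rfl]
  · rw [Function.update_of_ne hjl.ne']
    simp only [mergeAt, pathEntries, Fin.val_fin_lt, Fin.val_inj, hjl.not_gt, hjl.ne', if_false,
      ← Fin.succ_castSucc]
    rw [after (Fin.succ_le_castSucc_iff.2 hjl), after (Fin.succ_le_succ_iff.2 hjl.le)]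

theorem sum_hgen_mergeAt_pathEntries {k A N : Type u} {κ : Type*} [CommRing k] [Ring A]
    [Algebra k A] [AddCommGroup N] [Module k N] [Fintype κ] {n : ℕ}
    (m : N) (a : Fin (n + 1) → Matrix κ κ A) (h : Fin (n + 1) → κ) (j : Fin n) :
    ∑ x, hgen k m (mergeAt (pathEntries a (j.succ.castSucc.insertNth x h)) j) =
      hgen k m (pathEntries (mergeAt a j) h) := by
  have entry_j : pathEntries (mergeAt a j) h j =
      ∑ x, a j.castSucc (h j.castSucc) x * a j.succ x (h j.succ) := by
    simp [pathEntries, mergeAt, Matrix.mul_apply]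
  simp only [mergeAt_pathEntries_insertNth]
  rw [← hgen_update_sum, ← entry_j, Function.update_eq_self]

variable (k : Type u) {A N : Type u} {κ : Type*} [CommRing k] [Ring A] [Algebra k A]
  [AddCommGroup N] [Module k N] [Fintype κ] {n : ℕ}

/-- The generalized trace `∑ μ_{hₙh₀} ⊗ (a₁)_{h₀h₁} ⊗ ⋯ ⊗ (aₙ)_{hₙ₋₁hₙ}` of the Hochschild chain
`μ ⊗ a₁ ⊗ ⋯ ⊗ aₙ` of matrices. The path `h` is cut open at the coefficient `μ`, so that its
indices need no cyclic arithmetic. -/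
noncomputable def genTrace (μ : Matrix κ κ N) (a : Fin n → Matrix κ κ A) : HChain k A N n :=
  ∑ h : Fin (n + 1) → κ, hgen k (μ (h (Fin.last n)) (h 0)) (pathEntries a h)

variable {k}

theorem genTrace_eq_sum_cyclic (μ : Matrix κ κ N) (a : Fin n → Matrix κ κ A) :
    genTrace k μ a = ∑ g : Fin (n + 1) → κ,
      hgen k (μ (g 0) (g 1)) fun l => a l (g l.succ) (g (l.succ + 1)) := by
  let rotate : (Fin (n + 1) → κ) ≃ (Fin (n + 1) → κ) :=
    Equiv.arrowCongr (Equiv.addRight (1 : Fin (n + 1))).symm (Equiv.refl κ)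
  have rotate_apply (g : Fin (n + 1) → κ) (i : Fin (n + 1)) : rotate g i = g (i + 1) := rfl
  have pathEntries_rotate (g : Fin (n + 1) → κ) :
      pathEntries a (rotate g) = fun l => a l (g l.succ) (g (l.succ + 1)) := by
    funext l
    simp only [pathEntries, rotate_apply, Fin.coeSucc_eq_succ]
  rw [genTrace, ← rotate.sum_comp]
  simp only [pathEntries_rotate, rotate_apply, Fin.last_add_one, zero_add]

theorem sum_hgen_smul_init [Module A N] (μ : Matrix κ κ N)
    (a : Fin (n + 1) → Matrix κ κ A) :
    ∑ h : Fin (n + 2) → κ, hgen k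
        (pathEntries a h (Fin.last n) • μ (h (Fin.last (n + 1))) (h 0))
        (Fin.init (pathEntries a h)) =
      genTrace k (.of fun i j => ∑ x, a (Fin.last n) i x • μ x j) (Fin.init a) := by
  rw [sum_eq_sum_insertNth (Fin.last (n + 1)), genTrace]
  refine Finset.sum_congr rfl fun h _ => ?_
  rw [Matrix.of_apply, hgen_sum]
  refine Finset.sum_congr rfl fun x _ => ?_
  rw [Fin.insertNth_last', init_pathEntries_snoc]
  simp [pathEntries]

theorem sum_hgen_mergeAt (μ : Matrix κ κ N) (a : Fin (n + 1) → Matrix κ κ A) (j : Fin n) :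
    ∑ h : Fin (n + 2) → κ, hgen k (μ (h (Fin.last (n + 1))) (h 0))
        (mergeAt (pathEntries a h) j) =
      genTrace k μ (mergeAt a j) := by
  rw [sum_eq_sum_insertNth j.succ.castSucc, genTrace]
  refine Finset.sum_congr rfl fun h _ => ?_
  have insert_last (x : κ) :
      j.succ.castSucc.insertNth (α := fun _ => κ) x h (Fin.last (n + 1)) = h (Fin.last n) :=
    insertNth_castSucc_succ_of_le (Fin.le_last _) x h
  have insert_zero (x : κ) : j.succ.castSucc.insertNth (α := fun _ => κ) x h 0 = h 0 :=
    insertNth_castSucc_castSucc_of_lt (Fin.succ_pos j) x h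
  simp only [insert_last, insert_zero, sum_hgen_mergeAt_pathEntries]

theorem sum_hgen_op_smul_tail [Module Aᵐᵒᵖ N] (μ : Matrix κ κ N)
    (a : Fin (n + 1) → Matrix κ κ A) :
    ∑ h : Fin (n + 2) → κ, hgen k
        (op (pathEntries a h 0) • μ (h (Fin.last (n + 1))) (h 0))
        (Fin.tail (pathEntries a h)) =
      genTrace k (.of fun i j => ∑ x, op (a 0 x j) • μ i x) (Fin.tail a) := by
  rw [sum_eq_sum_insertNth 0, genTrace]
  refine Finset.sum_congr rfl fun h _ => ?_
  rw [Matrix.of_apply, hgen_sum]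
  refine Finset.sum_congr rfl fun x _ => ?_
  rw [Fin.insertNth_zero', tail_pathEntries_cons]
  simp [pathEntries, ← Fin.succ_last]

theorem IsHochschildBoundary.apply_genTrace [Module A N] [Module Aᵐᵒᵖ N]
    {b : HChain k A N (n + 1) →ₗ[k] HChain k A N n} (hb : IsHochschildBoundary b)
    (μ : Matrix κ κ N) (a : Fin (n + 1) → Matrix κ κ A) :
    b (genTrace k μ a) =
      genTrace k (.of fun i j => ∑ x, a (Fin.last n) i x • μ x j) (Fin.init a)
        + ∑ j : Fin n, ((-1 : ℤ) ^ (n - j.val)) • genTrace k μ (mergeAt a j)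
        + ((-1 : ℤ) ^ (n + 1)) •
          genTrace k (.of fun i j => ∑ x, op (a 0 x j) • μ i x) (Fin.tail a) := by
  rw [genTrace, map_sum]
  simp only [hb _ _, Finset.sum_add_distrib]
  rw [Finset.sum_comm]
  simp only [← Finset.smul_sum, sum_hgen_smul_init, sum_hgen_mergeAt, sum_hgen_op_smul_tail]

end GeneralizedTrace

section DualBasisPairing

/-- The family `(pJ, qJ)` is a dual basis of the right `R`-module `P`, where `q : Q` acts as the
right `R`-linear functional `ψ q` and the pairing `ψ` is balanced over `S`. With respect to it,
the action of `S` on `P` is recorded by matrices over `R`. -/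
structure IsDualBasisPairing {k R : Type*} (S : Type*) {P Q κ : Type*} [CommRing k] [Ring R]
    [Algebra k R] [Ring S] [AddCommGroup P] [Module k P] [Module S P] [Module Rᵐᵒᵖ P]
    [AddCommGroup Q] [Module k Q] [Module Sᵐᵒᵖ Q] [Fintype κ]
    (ψ : Q →ₗ[k] P →ₗ[k] R) (pJ : κ → P) (qJ : κ → Q) : Prop where
  map_op_smul : ∀ (r : R) (q : Q) (p : P), ψ q (op r • p) = ψ q p * r
  balanced : ∀ (q : Q) (s : S) (p : P), ψ (op s • q) p = ψ q (s • p)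
  sum_op_smul : ∀ p : P, ∑ x, op (ψ (qJ x) p) • pJ x = p

variable {k R S P Q κ : Type*} [CommRing k] [Ring R] [Algebra k R] [Ring S]
  [AddCommGroup P] [Module k P] [Module S P] [Module Rᵐᵒᵖ P]
  [AddCommGroup Q] [Module k Q] [Module Sᵐᵒᵖ Q]

/-- The matrix `(ψ(q'ᵢ ⊗ s·p'ⱼ))ᵢⱼ` of the action of `s` on `P` with respect to the dual basis
`(p', q')`; it carries tensor factors from `S` to matrices over `R`. -/
def actionMatrix (ψ : Q →ₗ[k] P →ₗ[k] R) (pJ : κ → P) (qJ : κ → Q) (s : S) : Matrix κ κ R :=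
  .of fun i j => ψ (qJ i) (s • pJ j)

/-- The matrix `(ψ(q'ᵢ ⊗ p)·m·ψ(q ⊗ p'ⱼ))ᵢⱼ`; it carries the coefficient `p ⊗ m ⊗ q` to
matrices over `M`. -/
def coeffMatrix {M : Type*} [AddCommGroup M] [Module R M] [Module Rᵐᵒᵖ M]
    (ψ : Q →ₗ[k] P →ₗ[k] R) (pJ : κ → P) (qJ : κ → Q) (p : P) (m : M) (q : Q) :
    Matrix κ κ M :=
  .of fun i j => ψ (qJ i) p • op (ψ q (pJ j)) • m

namespace IsDualBasisPairing

variable [Fintype κ] {ψ : Q →ₗ[k] P →ₗ[k] R} {pJ : κ → P} {qJ : κ → Q}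

theorem sum_mul (hψ : IsDualBasisPairing S ψ pJ qJ) (q : Q) (p : P) :
    ∑ x, ψ q (pJ x) * ψ (qJ x) p = ψ q p := by
  simp only [← hψ.map_op_smul]
  rw [← map_sum, hψ.sum_op_smul]

theorem actionMatrix_mul (hψ : IsDualBasisPairing S ψ pJ qJ) (s t : S) :
    actionMatrix ψ pJ qJ (s * t) = actionMatrix ψ pJ qJ s * actionMatrix ψ pJ qJ t := by
  ext i j
  simp only [actionMatrix, Matrix.mul_apply, Matrix.of_apply, mul_smul, ← hψ.balanced _ s]
  exact (hψ.sum_mul _ _).symm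

variable {M : Type*} [AddCommGroup M] [Module R M] [Module Rᵐᵒᵖ M]

theorem actionMatrix_smul_coeffMatrix (hψ : IsDualBasisPairing S ψ pJ qJ)
    (s : S) (p : P) (m : M) (q : Q) :
    (.of fun i j => ∑ x, actionMatrix ψ pJ qJ s i x • coeffMatrix ψ pJ qJ p m q x j) =
      coeffMatrix ψ pJ qJ (s • p) m q := by
  ext i j
  simp only [actionMatrix, coeffMatrix, Matrix.of_apply, smul_smul, ← Finset.sum_smul,
    ← hψ.balanced _ s]
  rw [hψ.sum_mul]

theorem op_actionMatrix_smul_coeffMatrix [SMulCommClass R Rᵐᵒᵖ M]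
    (hψ : IsDualBasisPairing S ψ pJ qJ) (s : S) (p : P) (m : M) (q : Q) :
    (.of fun i j => ∑ x, op (actionMatrix ψ pJ qJ s x j) • coeffMatrix ψ pJ qJ p m q i x) =
      coeffMatrix ψ pJ qJ p m (op s • q) := by
  ext i j
  simp only [actionMatrix, coeffMatrix, Matrix.of_apply]
  rw [hψ.balanced, ← hψ.sum_mul q, Finset.op_sum, Finset.sum_smul, Finset.smul_sum]
  refine Finset.sum_congr rfl fun x _ => ?_
  rw [op_mul, mul_smul, ← smul_comm]

end IsDualBasisPairing

end DualBasisPairing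

theorem gamma_chain_map_general
    {k R S P Q M Mt : Type u} [CommRing k] [Ring R] [Ring S] [Algebra k R] [Algebra k S]
    [AddCommGroup P] [Module k P] [Module S P] [Module Rᵐᵒᵖ P]
    [AddCommGroup Q] [Module k Q] [Module Sᵐᵒᵖ Q]
    [AddCommGroup M] [Module k M] [Module R M] [Module Rᵐᵒᵖ M] [SMulCommClass R Rᵐᵒᵖ M]
    [AddCommGroup Mt] [Module k Mt] [Module S Mt] [Module Sᵐᵒᵖ Mt]
    {κ : Type*} [Fintype κ] {ψ : Q →ₗ[k] P →ₗ[k] R} {pJ : κ → P} {qJ : κ → Q}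
    (hψ : IsDualBasisPairing S ψ pJ qJ)
    {emb : P →ₗ[k] M →ₗ[k] Q →ₗ[k] Mt}
    (hemb_left : ∀ (s : S) (p : P) (m : M) (q : Q), emb (s • p) m q = s • emb p m q)
    (hemb_right : ∀ (s : S) (p : P) (m : M) (q : Q), emb p m (op s • q) = op s • emb p m q)
    (hemb_span : Submodule.span k {x : Mt | ∃ (p : P) (m : M) (q : Q), emb p m q = x} = ⊤)
    {bR : ∀ n, HChain k R M (n + 1) →ₗ[k] HChain k R M n}
    (hbR : ∀ n, IsHochschildBoundary (bR n))
    {bS : ∀ n, HChain k S Mt (n + 1) →ₗ[k] HChain k S Mt n}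
    (hbS : ∀ n, IsHochschildBoundary (bS n))
    {γ : ∀ n, HChain k S Mt n →ₗ[k] HChain k R M n}
    (hγ : ∀ (n : ℕ) (p : P) (m : M) (q : Q) (s : Fin n → S),
      γ n (hgen k (emb p m q) s) =
        ∑ g : Fin (n + 1) → κ,
          hgen k (ψ (qJ (g 0)) p • (op (ψ q (pJ (g 1))) • m))
            (fun l : Fin n => ψ (qJ (g l.succ)) (s l • pJ (g (l.succ + 1)))))
    (n : ℕ) : (bR n).comp (γ (n + 1)) = (γ n).comp (bS n) := by
  have γ_eq_genTrace (n : ℕ) (p : P) (m : M) (q : Q) (s : Fin n → S) :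
      γ n (hgen k (emb p m q) s) =
        genTrace k (coeffMatrix ψ pJ qJ p m q) fun l => actionMatrix ψ pJ qJ (s l) := by
    rw [hγ, genTrace_eq_sum_cyclic]
    rfl
  refine HChain.linearMap_ext_of_span_eq_top hemb_span ?_
  rintro _ ⟨p, m, q, rfl⟩ s
  rw [LinearMap.comp_apply, LinearMap.comp_apply, γ_eq_genTrace, (hbR n).apply_genTrace,
    hψ.actionMatrix_smul_coeffMatrix, hψ.op_actionMatrix_smul_coeffMatrix, hbS n, ← hemb_left,
    ← hemb_right]
  simp only [map_add, map_sum, map_zsmul, γ_eq_genTrace,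
    map_mergeAt hψ.actionMatrix_mul]
  rfl

namespace MoritaContext

variable {k R S P Q : Type u} [CommRing k] [Ring R] [Ring S] [Algebra k R] [Algebra k S]
  [AddCommGroup P] [Module k P] [Module S P] [Module Rᵐᵒᵖ P]
  [SMulCommClass S Rᵐᵒᵖ P] [IsScalarTower k S P] [IsScalarTower k Rᵐᵒᵖ P]
  [AddCommGroup Q] [Module k Q] [Module R Q] [Module Sᵐᵒᵖ Q]
  [SMulCommClass R Sᵐᵒᵖ Q] [IsScalarTower k R Q] [IsScalarTower k Sᵐᵒᵖ Q]
  (ctx : MoritaContext k R S P Q)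

theorem ψ_balanced (q : Q) (s : S) (p : P) : ctx.ψ (op s • q) p = ctx.ψ q (s • p) := by
  have mem_ker :
      (op s • q) ⊗ₜ[k] p - q ⊗ₜ[k] (s • p) ∈ LinearMap.ker (TensorProduct.lift ctx.ψ) :=
    ctx.ψ_ker ▸ Submodule.subset_span ⟨q, s, p, rfl⟩
  simpa only [LinearMap.mem_ker, map_sub, TensorProduct.lift.tmul, sub_eq_zero] using mem_ker

theorem isDualBasisPairing {κ : Type*} [Fintype κ] {pJ : κ → P} {qJ : κ → Q}
    (hJ : ∑ j, ctx.φ (pJ j) (qJ j) = 1) : IsDualBasisPairing S ctx.ψ pJ qJ where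
  map_op_smul := ctx.ψ_right
  balanced := ctx.ψ_balanced
  sum_op_smul p := by simp only [← ctx.assoc_φψ, ← Finset.sum_smul, hJ, one_smul]

end MoritaContext

/-- Let `(R, S, P, Q, φ, ψ)` be a Morita context over `k` and `M` an
`(R,R)`-bimodule with symmetric `k`-action.  Then `γ_•` is a morphism of chain complexes:
for every `n ≥ 1`, `b ∘ γ_n = γ_{n−1} ∘ b` as maps `C_n(S, M̃) → C_{n−1}(R, M)`  (below,
degrees are shifted so that the statement for all `n : ℕ` is exactly the statement for all
`n ≥ 1` of the paper). -/
theorem gamma_chain_map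
    (k R S P Q M Mt : Type u) [CommRing k] [Ring R] [Ring S] [Algebra k R] [Algebra k S]
    [AddCommGroup P] [Module k P] [Module S P] [Module Rᵐᵒᵖ P]
    [SMulCommClass S Rᵐᵒᵖ P] [IsScalarTower k S P] [IsScalarTower k Rᵐᵒᵖ P]
    [AddCommGroup Q] [Module k Q] [Module R Q] [Module Sᵐᵒᵖ Q]
    [SMulCommClass R Sᵐᵒᵖ Q] [IsScalarTower k R Q] [IsScalarTower k Sᵐᵒᵖ Q]
    [AddCommGroup M] [Module k M] [Module R M] [Module Rᵐᵒᵖ M]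
    [SMulCommClass R Rᵐᵒᵖ M] [IsScalarTower k R M] [IsScalarTower k Rᵐᵒᵖ M]
    [AddCommGroup Mt] [Module k Mt] [Module S Mt] [Module Sᵐᵒᵖ Mt]
    [SMulCommClass S Sᵐᵒᵖ Mt] [IsScalarTower k S Mt] [IsScalarTower k Sᵐᵒᵖ Mt]
    -- the Morita context and the fixed finite families with `Σⱼ φ(p'ⱼ ⊗ q'ⱼ) = 1_S`
    -- and `Σᵢ ψ(qᵢ ⊗ pᵢ) = 1_R`
    (ctx : MoritaContext k R S P Q)
    (ι κ : Type u) [Fintype ι] [Fintype κ]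
    (pI : ι → P) (qI : ι → Q) (pJ : κ → P) (qJ : κ → Q)
    (hI : ∑ i : ι, ctx.ψ (qI i) (pI i) = 1)
    (hJ : ∑ j : κ, ctx.φ (pJ j) (qJ j) = 1)
    -- `Mt` plays the role of `M̃ = P ⊗_R M ⊗_R Q`, with `emb p m q` the class of
    -- `p ⊗ m ⊗ q`; it is an `(S,S)`-bimodule spanned by these classes, the `S`-actions
    -- being `s·(p ⊗ m ⊗ q)·s' = (s·p) ⊗ m ⊗ (q·s')`, and the tensor products are
    -- balanced over `R`
    (emb : P →ₗ[k] M →ₗ[k] Q →ₗ[k] Mt)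
    (hemb_bal₁ : ∀ (r : R) (p : P) (m : M) (q : Q), emb (op r • p) m q = emb p (r • m) q)
    (hemb_bal₂ : ∀ (r : R) (p : P) (m : M) (q : Q), emb p (op r • m) q = emb p m (r • q))
    (hemb_left : ∀ (s : S) (p : P) (m : M) (q : Q), emb (s • p) m q = s • emb p m q)
    (hemb_right : ∀ (s : S) (p : P) (m : M) (q : Q), emb p m (op s • q) = op s • emb p m q)
    (hemb_span : Submodule.span k {x : Mt | ∃ (p : P) (m : M) (q : Q), emb p m q = x} = ⊤)
    -- the Hochschild boundaries of `C_•(R, M)` and `C_•(S, M̃)`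
    (bR : ∀ n, HChain k R M (n + 1) →ₗ[k] HChain k R M n)
    (hbR : ∀ (n : ℕ) (m : M) (r : Fin (n + 1) → R),
      bR n (hgen k m r) =
        hgen k (r (Fin.last n) • m) (Fin.init r)
          + ∑ j : Fin n, ((-1 : ℤ) ^ (n - j.val)) • hgen k m (mergeAt r j)
          + ((-1 : ℤ) ^ (n + 1)) • hgen k (op (r 0) • m) (Fin.tail r))
    (bS : ∀ n, HChain k S Mt (n + 1) →ₗ[k] HChain k S Mt n)
    (hbS : ∀ (n : ℕ) (m : Mt) (s : Fin (n + 1) → S),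
      bS n (hgen k m s) =
        hgen k (s (Fin.last n) • m) (Fin.init s)
          + ∑ j : Fin n, ((-1 : ℤ) ^ (n - j.val)) • hgen k m (mergeAt s j)
          + ((-1 : ℤ) ^ (n + 1)) • hgen k (op (s 0) • m) (Fin.tail s))
    -- the chain map `γ_•`
    (γ : ∀ n, HChain k S Mt n →ₗ[k] HChain k R M n)
    (hγ : ∀ (n : ℕ) (p : P) (m : M) (q : Q) (s : Fin n → S),
      γ n (hgen k (emb p m q) s) =
        ∑ g : Fin (n + 1) → κ,
          hgen k (ctx.ψ (qJ (g 0)) p • (op (ctx.ψ q (pJ (g 1))) • m))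
            (fun l : Fin n => ctx.ψ (qJ (g l.succ)) (s l • pJ (g (l.succ + 1)))))
 :
    ∀ n : ℕ, (bR n).comp (γ (n + 1)) = (γ n).comp (bS n) := by
  exact gamma_chain_map_general (ctx.isDualBasisPairing hJ) hemb_left hemb_right hemb_span
    hbR hbS hγ
end
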